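/- arXiv:1408.5764 — 2 statements merged into one kernel-verified Lean document; each statement's English description precedes it below -/
import Mathlib

section
/- (Super Cartier isomorphism, evaluated form.) Let k be a perfect field of characteristic p > 2 and V = V₀ ⊕ V₁ a finite-dimensional superspace with fixed homogeneous bases {v₁,…,v_s} of V₀ and {y₁,…,y_t} of V₁. Then there is a unique map θ: Ω(V) → Ω(V) which is additive, Frobenius-semilinear (θ(λz) = λ^p·θ(z) for λ ∈ k), multiplicative (θ(zw) = θ(z)θ(w) and θ(1) = 1), and satisfies θ(v_i⊗1) = v_i^p⊗1, θ(1⊗v_i) = v_i^{p−1}⊗v_i, θ(y_j⊗1) = y_j⊗γ_{p−1}(y_j), and θ(1⊗γ_{p^e}(y_j)) = 1⊗γ_{p^{e+1}}(y_j) for all i, j and all e ≥ 0. Moreover θ takes values in ker(d), and the induced map Ω(V) → H^•(Ω(V),d) := ker(d)/im(d) is bijective; for every n ≥ 0 it maps Ω_n(V) bijectively onto H^•(Ω_{pn}(V),d), and H^•(Ω_m(V),d) = 0 whenever p does not divide m. -/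
open Finset

set_option synthInstance.maxHeartbeats 1000000
set_option maxHeartbeats 4000000

namespace Stmt8

variable (k : Type) [Field k] (s t : ℕ)

/-- index of a monomial `x^a · u^b ⊗ x^c · γ^e` of `Ω(V) = 𝐒(V) ⊗ 𝐀(V)`, for
`V = V₀ ⊕ V₁` with basis `x₁, …, x_s` of `V₀` and `y₁, …, y_t` of `V₁`: here `a` records the
exponents of the `xᵢ ⊗ 1` (in `S(V₀)`), `b` records which `yⱼ ⊗ 1` occur (in `Λ(V₁)`),
`c` records which `1 ⊗ xᵢ` occur (in `Λ(V₀)`) and `e` records the divided powers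
`1 ⊗ γ_{eⱼ}(yⱼ)` (in `Γ(V₁)`) -/
abbrev Mon : Type := (Fin s → ℕ) × (Fin t → Bool) × (Fin s → Bool) × (Fin t → ℕ)

/-- the superspace `Ω(V) = 𝐒(V) ⊗ 𝐀(V) = (S(V₀) ⊗ Λ(V₁)) ⊗ (Λ(V₀) ⊗ Γ(V₁))`, modelled on
its basis of monomials -/
def Omega : Type := Mon s t →₀ k

noncomputable instance : AddCommGroup (Omega k s t) :=
  inferInstanceAs (AddCommGroup (Mon s t →₀ k))

noncomputable instance : Module k (Omega k s t) :=
  inferInstanceAs (Module k (Mon s t →₀ k))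

/-- the number of `true` values of a Boolean vector -/
def cnt {u : ℕ} (b : Fin u → Bool) : ℕ := (univ.filter fun i => b i = true).card

/-- the cohomological degree of a monomial: the degree of its `𝐀(V)`-part -/
def cdeg (m : Mon s t) : ℕ := cnt m.2.2.1 + ∑ j, m.2.2.2 j

/-- the total degree of a monomial -/
def tdeg (m : Mon s t) : ℕ := ((∑ i, m.1 i) + cnt m.2.1) + cdeg s t m

/-- the parity (number of odd tensor factors) of the `𝐒(V)`-part of a monomial -/
def parS (m : Mon s t) : ℕ := cnt m.2.1

/-- the parity (number of odd tensor factors) of the `𝐀(V)`-part of a monomial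
(`1 ⊗ xᵢ` is even since `xᵢ ∈ V₀`, and `γ_{eⱼ}(yⱼ)` has parity `eⱼ`) -/
def parA (m : Mon s t) : ℕ := ∑ j, m.2.2.2 j

/-- the merge of two monomial indices -/
def merge (m₁ m₂ : Mon s t) : Mon s t :=
  (m₁.1 + m₂.1, fun j => m₁.2.1 j || m₂.2.1 j, fun i => m₁.2.2.1 i || m₂.2.2.1 i,
    m₁.2.2.2 + m₂.2.2.2)

/-- the number of `(i, i')` with `i` occurring in `b`, `i'` occurring in `b'` and `i' < i`:
the Koszul sign for merging two increasing exterior monomials is `(-1)` to this count -/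
def invCount {u : ℕ} (b b' : Fin u → Bool) : ℕ :=
  ((univ ×ˢ univ).filter fun q : Fin u × Fin u =>
    b q.1 = true ∧ b' q.2 = true ∧ q.2 < q.1).card

/-- the structure constant for the product of two monomials of `Ω(V)`: it vanishes if an odd
exterior generator is repeated, and otherwise consists of the Koszul sign
`(-1)^{|𝐀-part of m₁|·|𝐒-part of m₂|}` from the definition of the product of
`Ω(V) = 𝐒(V) ⊗ 𝐀(V)`, exterior reordering signs in `Λ(V₁)` and `Λ(V₀)`, the sign
`(-1)^{deg·deg}` for moving the `Γ(V₁)`-part of `m₁` past the `Λ(V₀)`-part of `m₂` in the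
degree-twisted product of `𝐀(V) = Λ(V₀) ⊗ᵍ Γ(V₁)`, and divided-power binomial
coefficients -/
def mulCoef (m₁ m₂ : Mon s t) : k :=
  if (∃ j, m₁.2.1 j = true ∧ m₂.2.1 j = true) ∨
      (∃ i, m₁.2.2.1 i = true ∧ m₂.2.2.1 i = true) then 0
  else
    (-1 : k) ^ (parA s t m₁ * parS s t m₂ + invCount m₁.2.1 m₂.2.1 +
        invCount m₁.2.2.1 m₂.2.2.1 + parA s t m₁ * cnt m₂.2.2.1) *
      ∏ j, ((m₁.2.2.2 j + m₂.2.2.2 j).choose (m₁.2.2.2 j) : k)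

/-- the multiplication of `Ω(V)` -/
noncomputable def mulOmega (x y : Omega k s t) : Omega k s t :=
  x.sum fun m₁ c₁ => y.sum fun m₂ c₂ =>
    Finsupp.single (merge s t m₁ m₂) (c₁ * c₂ * mulCoef k s t m₁ m₂)

noncomputable instance : Mul (Omega k s t) := ⟨mulOmega k s t⟩

/-- the unit monomial -/
def unitMon : Mon s t := (0, fun _ => false, fun _ => false, 0)

noncomputable instance : One (Omega k s t) := ⟨Finsupp.single (unitMon s t) 1⟩

/-- the bigraded piece `Ω_n^i(V) = 𝐒^{n-i}(V) ⊗ 𝐀^i(V)` (total degree `n`, cohomological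
degree `i`) -/
noncomputable def OmegaNI (n i : ℕ) : Submodule k (Omega k s t) :=
  Finsupp.supported k k {m | tdeg s t m = n ∧ cdeg s t m = i}

/-- the total-degree-`n` piece `Ω_n(V)` -/
noncomputable def OmegaTot (n : ℕ) : Submodule k (Omega k s t) :=
  Finsupp.supported k k {m | tdeg s t m = n}

/-- the cohomological-degree-`i` piece `Ω^i(V)` -/
noncomputable def OmegaCoh (i : ℕ) : Submodule k (Omega k s t) :=
  Finsupp.supported k k {m | cdeg s t m = i}

/-- the subspace `1 ⊗ 𝐀(V)` of `Ω(V)` -/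
noncomputable def Apart : Submodule k (Omega k s t) :=
  Finsupp.supported k k {m | m.1 = 0 ∧ m.2.1 = fun _ => false}

/-- the subspace `𝐒(V) ⊗ 1` of `Ω(V)` -/
noncomputable def Spart : Submodule k (Omega k s t) :=
  Finsupp.supported k k {m | m.2.2.1 = (fun _ => false) ∧ m.2.2.2 = 0}

/-- the monomial `xᵢ ⊗ 1` -/
def XS (i : Fin s) : Mon s t := (Pi.single i 1, fun _ => false, fun _ => false, 0)

/-- the monomial `yⱼ ⊗ 1` -/
def US (j : Fin t) : Mon s t := (0, fun j' => decide (j' = j), fun _ => false, 0)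

/-- the monomial `1 ⊗ xᵢ` -/
def XA (i : Fin s) : Mon s t := (0, fun _ => false, fun i' => decide (i' = i), 0)

/-- the monomial `1 ⊗ γ_e(yⱼ)` -/
def GA (j : Fin t) (e : ℕ) : Mon s t := (0, fun _ => false, fun _ => false, Pi.single j e)

/-- the element `v ⊗ 1` of `Ω(V)`, for `v ∈ V` with even coordinates `v0` and odd
coordinates `v1` -/
noncomputable def vS (v0 : Fin s → k) (v1 : Fin t → k) : Omega k s t :=
  (∑ i, Finsupp.single (XS s t i) (v0 i)) + ∑ j, Finsupp.single (US s t j) (v1 j)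

/-- the element `1 ⊗ v` of `Ω(V)` -/
noncomputable def vA (v0 : Fin s → k) (v1 : Fin t → k) : Omega k s t :=
  (∑ i, Finsupp.single (XA s t i) (v0 i)) + ∑ j, Finsupp.single (GA s t j 1) (v1 j)

/-- the element `1 ⊗ γ_N(y)` of `Ω(V)` for an arbitrary odd vector `y` with coordinates `w`:
`γ_N(∑ wⱼ yⱼ) = ∑_{e, ∑e = N} (∏ wⱼ^{eⱼ}) γ^e(y)` -/
noncomputable def gammaA (w : Fin t → k) (N : ℕ) : Omega k s t :=
  ∑ e ∈ Finset.Nat.antidiagonalTuple t N,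
    Finsupp.single ((0, fun _ => false, fun _ => false, e) : Mon s t) (∏ j, w j ^ e j)

/-- the de Rham differential `d` of `Ω(V)`: the unique `k`-linear map of cohomological
degree `+1` with `d(v ⊗ 1) = 1 ⊗ v`, `d(1 ⊗ a) = 0`, satisfying the Leibniz rule; it
preserves total degree and squares to zero -/
def IsDeRham (dd : Omega k s t →ₗ[k] Omega k s t) : Prop :=
  (∀ n i : ℕ, ∀ x ∈ OmegaNI k s t n i, dd x ∈ OmegaNI k s t n (i + 1)) ∧
  (∀ v0 v1, dd (vS k s t v0 v1) = vA k s t v0 v1) ∧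
  (∀ x ∈ Apart k s t, dd x = 0) ∧
  (∀ (i : ℕ) (z : Omega k s t), z ∈ OmegaCoh k s t i →
    ∀ w, dd (z * w) = dd z * w + ((-1 : k) ^ i) • (z * dd w)) ∧
  (∀ x, dd (dd x) = 0)

/-- the Koszul differential `κ` of `Ω(V)`: the unique `k`-linear map of cohomological
degree `-1` with `κ(s ⊗ 1) = 0`, `κ(1 ⊗ v) = v ⊗ 1` for `v ∈ V₀`,
`κ(1 ⊗ γ_N(y)) = (y ⊗ 1)·(1 ⊗ γ_{N-1}(y))` for `y ∈ V₁`, satisfying the Leibniz rule; it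
preserves total degree and squares to zero -/
def IsKoszul (κ : Omega k s t →ₗ[k] Omega k s t) : Prop :=
  (∀ n i : ℕ, ∀ x ∈ OmegaNI k s t n (i + 1), κ x ∈ OmegaNI k s t n i) ∧
  (∀ n : ℕ, ∀ x ∈ OmegaNI k s t n 0, κ x = 0) ∧
  (∀ x ∈ Spart k s t, κ x = 0) ∧
  (∀ v0 : Fin s → k, κ (vA k s t v0 0) = vS k s t v0 0) ∧
  (∀ (w : Fin t → k) (N : ℕ), 1 ≤ N →
    κ (gammaA k s t w N) = vS k s t 0 w * gammaA k s t w (N - 1)) ∧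
  (∀ (i : ℕ) (z : Omega k s t), z ∈ OmegaCoh k s t i →
    ∀ y, κ (z * y) = κ z * y + ((-1 : k) ^ i) • (z * κ y)) ∧
  (∀ x, κ (κ x) = 0)


variable (p : ℕ)

/-- the defining properties of the map `θ` of the super Cartier isomorphism: it is additive,
Frobenius-semilinear, multiplicative, and takes the prescribed values on the generators
`xᵢ ⊗ 1`, `1 ⊗ xᵢ`, `yⱼ ⊗ 1` and `1 ⊗ γ_{p^e}(yⱼ)` -/
def IsTheta (θ : Omega k s t → Omega k s t) : Prop :=
  (∀ z w, θ (z + w) = θ z + θ w) ∧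
  (∀ (c : k) (z : Omega k s t), θ (c • z) = (c ^ p) • θ z) ∧
  (∀ z w, θ (z * w) = θ z * θ w) ∧
  (θ 1 = 1) ∧
  -- θ(xᵢ ⊗ 1) = xᵢ^p ⊗ 1
  (∀ i : Fin s, θ (Finsupp.single (XS s t i) 1) =
    Finsupp.single ((Pi.single i p, fun _ => false, fun _ => false, 0) : Mon s t) 1) ∧
  -- θ(1 ⊗ xᵢ) = xᵢ^{p-1} ⊗ xᵢ
  (∀ i : Fin s, θ (Finsupp.single (XA s t i) 1) =
    Finsupp.single
      ((Pi.single i (p - 1), fun _ => false, fun i' => decide (i' = i), 0) : Mon s t) 1) ∧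
  -- θ(yⱼ ⊗ 1) = yⱼ ⊗ γ_{p-1}(yⱼ)
  (∀ j : Fin t, θ (Finsupp.single (US s t j) 1) =
    Finsupp.single
      ((0, fun j' => decide (j' = j), fun _ => false, Pi.single j (p - 1)) : Mon s t) 1) ∧
  -- θ(1 ⊗ γ_{p^e}(yⱼ)) = 1 ⊗ γ_{p^{e+1}}(yⱼ)
  (∀ (j : Fin t) (e : ℕ), θ (Finsupp.single (GA s t j (p ^ e)) 1) =
    Finsupp.single (GA s t j (p ^ (e + 1))) 1)

/-! Contracting a single variable `v`, as in the Koszul differential, gives an operator `ι_v` with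
`d ∘ ι_v + ι_v ∘ d` equal to multiplication by the degree in `v`. Hence the part of `Ω(V)` of a
given multidegree is contractible as soon as one entry of the multidegree is nonzero in `k`. The
remaining monomials are those whose multidegree is divisible by `p`; they are killed by `d`, and
they are exactly the images under `θ` of the monomials of `Ω(V)`. That `θ` is multiplicative is
Lucas's theorem for the structure constants of the divided powers, and its uniqueness holds because
`γₙ(y)` is a product of two smaller divided powers, up to a unit, unless `n` is a power of `p`. -/

section Development

variable {k s t p}

/-! ### Monomials as a basis -/

/-- The basis element of `Ω(V)` indexed by `m`. -/
noncomputable def mon (m : Mon s t) : Omega k s t := Finsupp.single m 1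

theorem single_eq_smul_mon (m : Mon s t) (c : k) :
    (Finsupp.single m c : Omega k s t) = c • mon m :=
  (Finsupp.smul_single_one m c).symm

@[elab_as_elim]
theorem omega_induction {P : Omega k s t → Prop} (zero : P 0)
    (add : ∀ z w, P z → P w → P (z + w)) (smul_mon : ∀ (c : k) m, P (c • mon m)) (z) : P z :=
  Finsupp.induction_linear z zero add fun m c ↦ single_eq_smul_mon m c ▸ smul_mon c m

theorem semilinearMap_ext {M : Type*} [AddCommMonoid M] [Module k M] {σ : k →+* k}
    {f g : Omega k s t →ₛₗ[σ] M} (h : ∀ m, f (mon m) = g (mon m)) : f = g := by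
  ext z
  induction z using omega_induction with
  | zero => simp only [map_zero]
  | add z w hz hw => simp only [map_add, hz, hw]
  | smul_mon c m => simp only [map_smulₛₗ, h]

/-- The `σ`-semilinear map out of `Ω(V)` with prescribed values on monomials. -/
noncomputable def monConstr {M : Type*} [AddCommMonoid M] [Module k M] (σ : k →+* k)
    (f : Mon s t → M) : Omega k s t →ₛₗ[σ] M :=
  Finsupp.lsum ℕ fun m ↦ (LinearMap.toSpanSingleton k M (f m)).comp σ.toSemilinearMap

theorem monConstr_apply {M : Type*} [AddCommMonoid M] [Module k M] (σ : k →+* k)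
    (f : Mon s t → M) (z : Omega k s t) :
    monConstr σ f z = ∑ m ∈ Finsupp.support z, σ (Finsupp.toFun z m) • f m := rfl

theorem monConstr_mon {M : Type*} [AddCommMonoid M] [Module k M] (σ : k →+* k)
    (f : Mon s t → M) (m : Mon s t) : monConstr σ f (mon m : Omega k s t) = f m := by
  refine (Finsupp.lsum_single ..).trans ?_
  simp

/-- The subspace of `Ω(V)` spanned by the monomials with index in `S`. -/
noncomputable def monSpan (S : Set (Mon s t)) : Submodule k (Omega k s t) :=
  Finsupp.supported k k S

theorem mon_mem_monSpan {S : Set (Mon s t)} {m : Mon s t} (hm : m ∈ S) :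
    (mon m : Omega k s t) ∈ monSpan S :=
  Finsupp.single_mem_supported k 1 hm

theorem monSpan_eq_span (S : Set (Mon s t)) :
    monSpan S = Submodule.span k ((mon : Mon s t → Omega k s t) '' S) :=
  Finsupp.supported_eq_span_single k S

theorem eqOn_monSpan {S : Set (Mon s t)} {f g : Omega k s t →ₗ[k] Omega k s t}
    (h : ∀ m ∈ S, f (mon m) = g (mon m)) :
    Set.EqOn f g (monSpan S : Submodule k (Omega k s t)) := by
  rw [monSpan_eq_span]
  exact LinearMap.eqOn_span (Set.forall_mem_image.2 h)

theorem map_mem_of_mem_monSpan {σ : k →+* k} {S : Set (Mon s t)}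
    {N : Submodule k (Omega k s t)} (f : Omega k s t →ₛₗ[σ] Omega k s t)
    (hf : ∀ m ∈ S, f (mon m) ∈ N) {z : Omega k s t} (hz : z ∈ monSpan S) : f z ∈ N := by
  have hle : monSpan S ≤ N.comap f := by
    rw [monSpan_eq_span, Submodule.span_le]
    exact Set.image_subset_iff.2 hf
  exact hle hz

/-! ### The multiplication -/

theorem mul_eq_monConstr (z w : Omega k s t) :
    z * w = monConstr (RingHom.id k) (fun m₁ ↦ monConstr (RingHom.id k) fun m₂ ↦
      mulCoef k s t m₁ m₂ • (mon (merge s t m₁ m₂) : Omega k s t)) z w := by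
  rw [monConstr_apply, LinearMap.sum_apply]
  refine Finset.sum_congr rfl fun m₁ _ ↦ ?_
  rw [LinearMap.smul_apply, monConstr_apply, Finset.smul_sum]
  refine Finset.sum_congr rfl fun m₂ _ ↦ ?_
  rw [smul_smul, smul_smul]
  exact single_eq_smul_mon ..

/-- The (a priori not associative) ring structure on `Ω(V)`. -/
noncomputable abbrev omegaRing : NonUnitalNonAssocRing (Omega k s t) where
  left_distrib x y z := by simp only [mul_eq_monConstr, map_add]
  right_distrib x y z := by simp only [mul_eq_monConstr, map_add, LinearMap.add_apply]
  zero_mul x := by simp only [mul_eq_monConstr, map_zero, LinearMap.zero_apply]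
  mul_zero x := by simp only [mul_eq_monConstr, map_zero]

attribute [local instance] omegaRing

instance : IsScalarTower k (Omega k s t) (Omega k s t) where
  smul_assoc c x y := by simp only [smul_eq_mul, mul_eq_monConstr, map_smul, LinearMap.smul_apply]

instance : SMulCommClass k (Omega k s t) (Omega k s t) where
  smul_comm c x y := by simp only [smul_eq_mul, mul_eq_monConstr, map_smul]

theorem mon_mul_mon (m₁ m₂ : Mon s t) : (mon m₁ * mon m₂ : Omega k s t) =
    mulCoef k s t m₁ m₂ • mon (merge s t m₁ m₂) := by
  rw [mul_eq_monConstr, monConstr_mon, monConstr_mon]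

/-! ### Exponents and weights -/

variable (s t) in
/-- The variables of `V`: the even basis vectors `xᵢ` and the odd basis vectors `yⱼ`. -/
abbrev Var : Type := Fin s ⊕ Fin t

/-- The exponents of a monomial in the unbounded generators: of `xᵢ ⊗ 1` at `xᵢ`, and of the
divided power of `yⱼ` at `yⱼ`. -/
def powExp (m : Mon s t) : Var s t → ℕ := Sum.elim m.1 m.2.2.2

/-- The occurrences in a monomial of the exterior generators: of `1 ⊗ xᵢ` at `xᵢ`, and of
`yⱼ ⊗ 1` at `yⱼ`. -/
def extExp (m : Mon s t) : Var s t → Bool := Sum.elim m.2.2.1 m.2.1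

/-- The monomial index with given `powExp` and `extExp`. -/
def ofExp (a : Var s t → ℕ) (b : Var s t → Bool) : Mon s t :=
  (a ∘ Sum.inl, b ∘ Sum.inr, b ∘ Sum.inl, a ∘ Sum.inr)

@[simp] theorem powExp_ofExp (a : Var s t → ℕ) (b : Var s t → Bool) : powExp (ofExp a b) = a :=
  Sum.elim_comp_inl_inr a

@[simp] theorem extExp_ofExp (a : Var s t → ℕ) (b : Var s t → Bool) : extExp (ofExp a b) = b :=
  Sum.elim_comp_inl_inr b

theorem exp_ext {m m' : Mon s t} (hpow : ∀ v, powExp m v = powExp m' v)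
    (hext : ∀ v, extExp m v = extExp m' v) : m = m' :=
  Prod.ext (funext fun i ↦ hpow (.inl i)) <| Prod.ext (funext fun j ↦ hext (.inr j)) <|
    Prod.ext (funext fun i ↦ hext (.inl i)) (funext fun j ↦ hpow (.inr j))

@[simp] theorem powExp_merge (m₁ m₂ : Mon s t) (v : Var s t) :
    powExp (merge s t m₁ m₂) v = powExp m₁ v + powExp m₂ v := by
  cases v <;> rfl

@[simp] theorem extExp_merge (m₁ m₂ : Mon s t) (v : Var s t) :
    extExp (merge s t m₁ m₂) v = (extExp m₁ v || extExp m₂ v) := by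
  cases v <;> rfl

@[simp] theorem powExp_unitMon (v : Var s t) : powExp (unitMon s t) v = 0 := by
  cases v <;> rfl

@[simp] theorem extExp_unitMon (v : Var s t) : extExp (unitMon s t) v = false := by
  cases v <;> rfl

/-- The degree of a monomial in the variable `v`, counting `v ⊗ 1` and `1 ⊗ v` alike. -/
def wt (m : Mon s t) (v : Var s t) : ℕ := powExp m v + (extExp m v).toNat

theorem wt_eq_zero {m : Mon s t} {v : Var s t} :
    wt m v = 0 ↔ powExp m v = 0 ∧ extExp m v = false := by
  simp [wt]

theorem cnt_eq_sum {u : ℕ} (b : Fin u → Bool) : cnt b = ∑ i, (b i).toNat := by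
  simp only [cnt, card_filter, Bool.toNat, Bool.cond_eq_ite]

theorem tdeg_eq_sum_wt (m : Mon s t) : tdeg s t m = ∑ v, wt m v := by
  simp only [tdeg, cdeg, cnt_eq_sum, Fintype.sum_sum_type, wt, powExp, extExp, Sum.elim_inl,
    Sum.elim_inr, sum_add_distrib]
  ring

/-- The monomial of `powExp` equal to `n` and `extExp` equal to `b` at `v`, and to zero at all
other variables. -/
def varMon (v : Var s t) (n : ℕ) (b : Bool) : Mon s t :=
  ofExp (fun w ↦ if w = v then n else 0) fun w ↦ if w = v then b else false

/-- The result of removing the variable `v` from a monomial. -/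
def erase (v : Var s t) (m : Mon s t) : Mon s t :=
  ofExp (fun w ↦ if w = v then 0 else powExp m w) fun w ↦ if w = v then false else extExp m w

@[simp] theorem powExp_varMon (v w : Var s t) (n : ℕ) (b : Bool) :
    powExp (varMon v n b) w = if w = v then n else 0 := by
  rw [varMon, powExp_ofExp]

@[simp] theorem extExp_varMon (v w : Var s t) (n : ℕ) (b : Bool) :
    extExp (varMon v n b) w = if w = v then b else false := by
  rw [varMon, extExp_ofExp]

@[simp] theorem powExp_erase (v w : Var s t) (m : Mon s t) :
    powExp (erase v m) w = if w = v then 0 else powExp m w := by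
  rw [erase, powExp_ofExp]

@[simp] theorem extExp_erase (v w : Var s t) (m : Mon s t) :
    extExp (erase v m) w = if w = v then false else extExp m w := by
  rw [erase, extExp_ofExp]

theorem wt_varMon (v : Var s t) (n : ℕ) (b : Bool) :
    wt (varMon v n b) = Pi.single v (n + b.toNat) := by
  ext w
  by_cases h : w = v <;> simp [wt, h]

theorem wt_erase (v w : Var s t) (m : Mon s t) :
    wt (erase v m) w = if w = v then 0 else wt m w := by
  by_cases h : w = v <;> simp [wt, h]

theorem varMon_zero_false (v : Var s t) : varMon v 0 false = unitMon s t :=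
  exp_ext (by simp) (by simp)

theorem merge_varMon_erase (v : Var s t) (m : Mon s t) :
    merge s t (varMon v (powExp m v) (extExp m v)) (erase v m) = m := by
  refine exp_ext (fun w ↦ ?_) fun w ↦ ?_ <;> by_cases h : w = v <;> simp [h]

theorem erase_merge_varMon {v : Var s t} {m : Mon s t} (hm : wt m v = 0) (n : ℕ) (b : Bool) :
    erase v (merge s t (varMon v n b) m) = m := by
  obtain ⟨hpow, hext⟩ := wt_eq_zero.1 hm
  refine exp_ext (fun w ↦ ?_) fun w ↦ ?_ <;> by_cases h : w = v <;> simp [h, hpow, hext]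

theorem merge_varMon_varMon (v : Var s t) (n n' : ℕ) (b b' : Bool) :
    merge s t (varMon v n b) (varMon v n' b') = varMon v (n + n') (b || b') := by
  refine exp_ext (fun w ↦ ?_) fun w ↦ ?_ <;> by_cases h : w = v <;> simp [h]

@[elab_as_elim]
theorem mon_induction {P : Mon s t → Prop} (unit : P (unitMon s t))
    (varMon_merge : ∀ v n b m, wt m v = 0 → P m → P (merge s t (varMon v n b) m)) (m : Mon s t) :
    P m := by
  induction hN : #{v | wt m v ≠ 0} generalizing m with
  | zero =>
    have hwt : ∀ v, wt m v = 0 := by simpa [filter_eq_empty_iff] using hN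
    convert unit
    exact exp_ext (fun v ↦ by simp [(wt_eq_zero.1 (hwt v)).1])
      fun v ↦ by simp [(wt_eq_zero.1 (hwt v)).2]
  | succ N ih =>
    obtain ⟨v, hv⟩ := card_pos.1 (N.succ_pos.trans_eq hN.symm)
    rw [← merge_varMon_erase v m]
    refine varMon_merge v _ _ _ (by simp [wt_erase]) (ih _ ?_)
    have herase : ({w | wt (erase v m) w ≠ 0} : Finset (Var s t)) =
        ({w | wt m w ≠ 0} : Finset (Var s t)).erase v := by
      ext w
      simp [wt_erase]
    rw [herase, card_erase_of_mem hv, hN, Nat.add_sub_cancel]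

/-! ### Products of monomials -/

theorem mulCoef_eq_zero {m₁ m₂ : Mon s t} {v : Var s t} (h₁ : extExp m₁ v = true)
    (h₂ : extExp m₂ v = true) : mulCoef k s t m₁ m₂ = 0 := by
  rw [mulCoef, if_pos]
  cases v with
  | inl i => exact .inr ⟨i, h₁, h₂⟩
  | inr j => exact .inl ⟨j, h₁, h₂⟩

theorem mulCoef_eq {m₁ m₂ : Mon s t} (h : ∀ v, extExp m₁ v = true → extExp m₂ v = false) :
    mulCoef k s t m₁ m₂ =
      (-1) ^ (parA s t m₁ * parS s t m₂ + invCount m₁.2.1 m₂.2.1 +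
        invCount m₁.2.2.1 m₂.2.2.1 + parA s t m₁ * cnt m₂.2.2.1) *
      ∏ j, ((m₁.2.2.2 j + m₂.2.2.2 j).choose (m₁.2.2.2 j) : k) := by
  rw [mulCoef, if_neg]
  rintro (⟨j, h₁, h₂⟩ | ⟨i, h₁, h₂⟩)
  · exact Bool.false_ne_true ((h (.inr j) h₁).symm.trans h₂)
  · exact Bool.false_ne_true ((h (.inl i) h₁).symm.trans h₂)

theorem mulCoef_varMon_ne_zero {v : Var s t} {m : Mon s t} (hm : wt m v = 0) (n : ℕ) (b : Bool) :
    mulCoef k s t (varMon v n b) m ≠ 0 := by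
  rw [wt_eq_zero] at hm
  rw [mulCoef_eq fun w hw ↦ ?_]
  · refine mul_ne_zero (by simp) (prod_ne_zero_iff.2 fun j _ ↦ ?_)
    change (((powExp (varMon v n b) (.inr j) + powExp m (.inr j)).choose
      (powExp (varMon v n b) (.inr j)) : ℕ) : k) ≠ 0
    by_cases hj : .inr j = v <;> simp [hj, hm.1]
  · obtain rfl : w = v := by by_contra hne; simp [hne] at hw
    exact hm.2

theorem mon_merge_varMon {v : Var s t} {m : Mon s t} (hm : wt m v = 0) (n : ℕ) (b : Bool) :
    (mon (merge s t (varMon v n b) m) : Omega k s t) =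
      (mulCoef k s t (varMon v n b) m)⁻¹ • (mon (varMon v n b) * mon m) := by
  rw [mon_mul_mon, inv_smul_smul₀ (mulCoef_varMon_ne_zero hm n b)]

theorem invCount_eq_zero {u : ℕ} {b b' : Fin u → Bool}
    (h : ∀ i i', b i = true → b' i' = true → i = i') : invCount b b' = 0 := by
  rw [invCount, card_eq_zero, filter_eq_empty_iff]
  rintro ⟨i, i'⟩ - ⟨hi, hi', hlt⟩
  exact hlt.ne' (h i i' hi hi')

theorem mulCoef_varMon_inl (i : Fin s) (n n' : ℕ) {b b' : Bool} (h : (b && b') = false) :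
    mulCoef k s t (varMon (.inl i) n b) (varMon (.inl i) n' b') = 1 := by
  rw [mulCoef_eq fun v ↦ by by_cases hv : v = .inl i <;> simp_all, invCount_eq_zero,
    invCount_eq_zero] <;> simp +contextual [varMon, ofExp, parA]

theorem mulCoef_varMon_inr (j : Fin t) (n n' : ℕ) (b : Bool) :
    mulCoef k s t (varMon (.inr j) n b) (varMon (.inr j) n' false) = (n + n').choose n := by
  rw [mulCoef_eq (by simp), invCount_eq_zero, invCount_eq_zero, Fintype.prod_eq_single j] <;>
    simp +contextual [varMon, ofExp, parS, cnt]

theorem mon_varMon_inl_mul (i : Fin s) (n n' : ℕ) (b b' : Bool) :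
    (mon (varMon (.inl i) n b) * mon (varMon (.inl i) n' b') : Omega k s t) =
      if b && b' then 0 else mon (varMon (.inl i) (n + n') (b || b')) := by
  rw [mon_mul_mon, merge_varMon_varMon]
  split_ifs with h
  · rw [Bool.and_eq_true] at h
    rw [mulCoef_eq_zero (v := .inl i) (by simp [h]) (by simp [h]), zero_smul]
  · rw [mulCoef_varMon_inl i n n' (Bool.eq_false_of_not_eq_true h), one_smul]

theorem mon_varMon_inr_mul (j : Fin t) (n n' : ℕ) (b : Bool) :
    (mon (varMon (.inr j) n b) * mon (varMon (.inr j) n' false) : Omega k s t) =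
      ((n + n').choose n : k) • mon (varMon (.inr j) (n + n') b) := by
  rw [mon_mul_mon, merge_varMon_varMon, mulCoef_varMon_inr, Bool.or_false]

/-! ### Weight spaces -/

/-- The weight space of `Ω(V)` of a given multidegree. -/
noncomputable def weightSpace (w : Var s t → ℕ) : Submodule k (Omega k s t) :=
  monSpan {m | wt m = w}

theorem mon_mem_weightSpace {m : Mon s t} {w : Var s t → ℕ} (h : wt m = w) :
    (mon m : Omega k s t) ∈ weightSpace w :=
  mon_mem_monSpan h

theorem wt_merge {m₁ m₂ : Mon s t} (h : mulCoef k s t m₁ m₂ ≠ 0) :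
    wt (merge s t m₁ m₂) = wt m₁ + wt m₂ := by
  ext v
  have hext : ¬(extExp m₁ v = true ∧ extExp m₂ v = true) := fun h' ↦ h (mulCoef_eq_zero h'.1 h'.2)
  simp only [wt, powExp_merge, extExp_merge, Pi.add_apply]
  cases h₁ : extExp m₁ v <;> cases h₂ : extExp m₂ v <;> simp_all <;> ring

theorem mul_mem_weightSpace {w₁ w₂ : Var s t → ℕ} {x y : Omega k s t} (hx : x ∈ weightSpace w₁)
    (hy : y ∈ weightSpace w₂) : x * y ∈ weightSpace (w₁ + w₂) := by
  refine map_mem_of_mem_monSpan (LinearMap.mul k (Omega k s t) x) (fun m₂ hm₂ ↦ ?_) hy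
  refine map_mem_of_mem_monSpan ((LinearMap.mul k (Omega k s t)).flip (mon m₂))
    (fun m₁ hm₁ ↦ ?_) hx
  rw [LinearMap.flip_apply, LinearMap.mul_apply', mon_mul_mon]
  by_cases h : mulCoef k s t m₁ m₂ = 0
  · rw [h, zero_smul]
    exact zero_mem _
  · exact Submodule.smul_mem _ _ <| mon_mem_monSpan <|
      (wt_merge h).trans <| congrArg₂ (· + ·) hm₁ hm₂

variable (k) in
/-- The subspace of `Ω(V)` spanned by the monomials in which the variable `v` does not occur. -/
noncomputable def awayFrom (v : Var s t) : Submodule k (Omega k s t) :=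
  monSpan {m | wt m v = 0}

theorem weightSpace_le_awayFrom {w : Var s t → ℕ} {v : Var s t} (h : w v = 0) :
    weightSpace w ≤ awayFrom k v :=
  Finsupp.supported_mono fun m (hm : wt m = w) ↦ (congrFun hm v).trans h

/-! ### The de Rham differential -/

theorem varMon_inl (i : Fin s) (n : ℕ) (b : Bool) : varMon (.inl i) n b =
    ((Pi.single i n, fun _ ↦ false, fun i' ↦ decide (i' = i) && b, 0) : Mon s t) := by
  refine exp_ext ?_ ?_ <;> rintro (i' | j) <;> simp [powExp, extExp, varMon, ofExp, Pi.single_apply]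

theorem varMon_inr (j : Fin t) (n : ℕ) (b : Bool) : varMon (.inr j) n b =
    ((0, fun j' ↦ decide (j' = j) && b, fun _ ↦ false, Pi.single j n) : Mon s t) := by
  refine exp_ext ?_ ?_ <;> rintro (i | j') <;> simp [powExp, extExp, varMon, ofExp, Pi.single_apply]

theorem XS_eq_varMon (i : Fin s) : XS s t i = varMon (.inl i) 1 false := by
  simp only [varMon_inl, XS, Bool.and_false]

theorem XA_eq_varMon (i : Fin s) : XA s t i = varMon (.inl i) 0 true := by
  simp only [varMon_inl, XA, Bool.and_true, Pi.single_zero]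

theorem US_eq_varMon (j : Fin t) : US s t j = varMon (.inr j) 0 true := by
  simp only [varMon_inr, US, Bool.and_true, Pi.single_zero]

theorem GA_eq_varMon (j : Fin t) (e : ℕ) : GA s t j e = varMon (.inr j) e false := by
  simp only [varMon_inr, GA, Bool.and_false]

theorem cdeg_varMon_inl (i : Fin s) (n : ℕ) (b : Bool) :
    cdeg s t (varMon (.inl i) n b) = b.toNat := by
  cases b <;> simp [varMon_inl, cdeg, cnt, filter_eq']

theorem cdeg_varMon_inr (j : Fin t) (n : ℕ) (b : Bool) :
    cdeg s t (varMon (.inr j) n b) = n := by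
  simp [varMon_inr, cdeg, cnt]

theorem vS_eq_sum (v0 : Fin s → k) (v1 : Fin t → k) :
    vS k s t v0 v1 = ∑ i, v0 i • mon (XS s t i) + ∑ j, v1 j • mon (US s t j) :=
  congrArg₂ (· + ·) (sum_congr rfl fun _ _ ↦ single_eq_smul_mon _ _)
    (sum_congr rfl fun _ _ ↦ single_eq_smul_mon _ _)

theorem vA_eq_sum (v0 : Fin s → k) (v1 : Fin t → k) :
    vA k s t v0 v1 = ∑ i, v0 i • mon (XA s t i) + ∑ j, v1 j • mon (GA s t j 1) :=
  congrArg₂ (· + ·) (sum_congr rfl fun _ _ ↦ single_eq_smul_mon _ _)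
    (sum_congr rfl fun _ _ ↦ single_eq_smul_mon _ _)

namespace IsDeRham

variable {d : Omega k s t →ₗ[k] Omega k s t} (hd : IsDeRham k s t d)
include hd

theorem map_mon_mul (m : Mon s t) (z : Omega k s t) :
    d (mon m * z) = d (mon m) * z + (-1 : k) ^ cdeg s t m • (mon m * d z) :=
  hd.2.2.2.1 _ _ (mon_mem_monSpan rfl) z

theorem map_gamma (j : Fin t) (n : ℕ) : d (mon (varMon (.inr j) n false)) = 0 :=
  hd.2.2.1 _ <| mon_mem_monSpan <| by simp [varMon_inr]

theorem map_one : d (mon (unitMon s t)) = 0 :=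
  hd.2.2.1 _ <| mon_mem_monSpan ⟨rfl, rfl⟩

theorem map_x (i : Fin s) : d (mon (varMon (.inl i) 1 false)) = mon (varMon (.inl i) 0 true) := by
  have h := hd.2.1 (Pi.single i 1) 0
  simpa [vS_eq_sum, vA_eq_sum, Pi.single_apply, XS_eq_varMon, XA_eq_varMon] using h

theorem map_xi (i : Fin s) : d (mon (varMon (.inl i) 0 true)) = 0 :=
  hd.2.2.1 _ <| mon_mem_monSpan <| by simp [varMon_inl]

theorem map_y (j : Fin t) : d (mon (varMon (.inr j) 0 true)) = mon (varMon (.inr j) 1 false) := by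
  have h := hd.2.1 0 (Pi.single j 1)
  simpa [vS_eq_sum, vA_eq_sum, Pi.single_apply, US_eq_varMon, GA_eq_varMon] using h

theorem map_x_pow (i : Fin s) (n : ℕ) : d (mon (varMon (.inl i) n false)) =
    (n : k) • mon (varMon (.inl i) (n - 1) true) := by
  induction n with
  | zero => rw [varMon_zero_false, hd.map_one, Nat.cast_zero, zero_smul]
  | succ n ih =>
    have hmul : (mon (varMon (.inl i) (n + 1) false) : Omega k s t) =
        mon (varMon (.inl i) n false) * mon (varMon (.inl i) 1 false) := by
      simp [mon_varMon_inl_mul]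
    rw [hmul, hd.map_mon_mul, ih, hd.map_x, smul_mul_assoc, mon_varMon_inl_mul, mon_varMon_inl_mul,
      cdeg_varMon_inl]
    cases n <;> simp [add_smul]

theorem map_x_pow_xi (i : Fin s) (n : ℕ) : d (mon (varMon (.inl i) n true)) = 0 := by
  have hmul : (mon (varMon (.inl i) n true) : Omega k s t) =
      mon (varMon (.inl i) n false) * mon (varMon (.inl i) 0 true) := by
    simp [mon_varMon_inl_mul]
  rw [hmul, hd.map_mon_mul, hd.map_x_pow, hd.map_xi, smul_mul_assoc, mon_varMon_inl_mul]
  simp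

theorem map_y_gamma (j : Fin t) (n : ℕ) : d (mon (varMon (.inr j) n true)) =
    ((n + 1 : ℕ) : k) • mon (varMon (.inr j) (n + 1) false) := by
  have hmul : (mon (varMon (.inr j) n true) : Omega k s t) =
      mon (varMon (.inr j) 0 true) * mon (varMon (.inr j) n false) := by
    simp [mon_varMon_inr_mul]
  rw [hmul, hd.map_mon_mul, hd.map_y, hd.map_gamma, mon_varMon_inr_mul, mul_zero, smul_zero,
    add_zero, Nat.choose_one_right, add_comm 1 n]

theorem map_varMon_mem_weightSpace (v : Var s t) (n : ℕ) (b : Bool) :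
    d (mon (varMon v n b)) ∈ weightSpace (wt (varMon v n b)) := by
  rcases v with i | j <;> cases b
  · rw [hd.map_x_pow]
    cases n
    · rw [Nat.cast_zero, zero_smul]
      exact zero_mem _
    · exact Submodule.smul_mem _ _ (mon_mem_weightSpace (by simp [wt_varMon]))
  · rw [hd.map_x_pow_xi]
    exact zero_mem _
  · rw [hd.map_gamma]
    exact zero_mem _
  · rw [hd.map_y_gamma]
    exact Submodule.smul_mem _ _ (mon_mem_weightSpace (by simp [wt_varMon]))

theorem map_mon_mem_weightSpace (m : Mon s t) : d (mon m) ∈ weightSpace (wt m) := by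
  induction m using mon_induction with
  | unit => rw [hd.map_one]; exact zero_mem _
  | varMon_merge v n b m hm ih =>
    rw [wt_merge (mulCoef_varMon_ne_zero (k := k) hm n b), mon_merge_varMon hm, map_smul,
      hd.map_mon_mul]
    exact Submodule.smul_mem _ _ <| add_mem
      (mul_mem_weightSpace (hd.map_varMon_mem_weightSpace v n b) (mon_mem_weightSpace rfl))
      (Submodule.smul_mem _ _ <| mul_mem_weightSpace (mon_mem_weightSpace rfl) ih)

theorem map_varMon_eq_zero {v : Var s t} {n : ℕ} {b : Bool} (h : ((n + b.toNat : ℕ) : k) = 0) :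
    d (mon (varMon v n b)) = 0 := by
  rcases v with i | j <;> cases b
  · rw [hd.map_x_pow, show (n : k) = 0 from h, zero_smul]
  · exact hd.map_x_pow_xi i n
  · exact hd.map_gamma j n
  · rw [hd.map_y_gamma, show ((n + 1 : ℕ) : k) = 0 from h, zero_smul]

theorem map_mon_eq_zero {m : Mon s t} (h : ∀ v, (wt m v : k) = 0) : d (mon m) = 0 := by
  induction m using mon_induction with
  | unit => exact hd.map_one
  | varMon_merge v n b m hm ih =>
    rw [wt_merge (mulCoef_varMon_ne_zero (k := k) hm n b), wt_varMon] at h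
    have hvar : ((n + b.toNat : ℕ) : k) = 0 := by simpa [hm] using h v
    have hwt : ∀ w, (wt m w : k) = 0 := fun w ↦ by
      by_cases hw : w = v
      · rw [hw, hm, Nat.cast_zero]
      · simpa [hw] using h w
    rw [mon_merge_varMon hm, map_smul, hd.map_mon_mul, hd.map_varMon_eq_zero hvar, ih hwt, zero_mul,
      mul_zero, smul_zero, add_zero, smul_zero]

theorem map_mem_awayFrom {v : Var s t} {z : Omega k s t} (hz : z ∈ awayFrom k v) :
    d z ∈ awayFrom k v :=
  map_mem_of_mem_monSpan d
    (fun m hm ↦ weightSpace_le_awayFrom hm (hd.map_mon_mem_weightSpace m)) hz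

end IsDeRham

/-! ### The Cartan formula -/

/-- The contraction of a monomial in one variable: `xⁿξ ↦ xⁿ⁺¹` for an even variable, where
`ξ = 1 ⊗ x`, and `γₙ₊₁ ↦ y γₙ` for an odd variable; other monomials are sent to zero. -/
noncomputable def varContraction : Var s t → ℕ → Bool → Omega k s t
  | .inl i, n, true => mon (varMon (.inl i) (n + 1) false)
  | .inr j, n + 1, false => mon (varMon (.inr j) n true)
  | _, _, _ => 0

/-- The part of the Koszul differential in which only the variable `v` is contracted, with signs
such that `v` is moved to the front of each monomial first. -/
noncomputable def contraction (v : Var s t) : Omega k s t →ₗ[k] Omega k s t :=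
  monConstr (RingHom.id k) fun m ↦
    (mulCoef k s t (varMon v (powExp m v) (extExp m v)) (erase v m))⁻¹ •
      (varContraction v (powExp m v) (extExp m v) * mon (erase v m))

theorem contraction_varMon_mul {v : Var s t} {z : Omega k s t} (hz : z ∈ awayFrom k v) (n : ℕ)
    (b : Bool) : contraction v (mon (varMon v n b) * z) = varContraction v n b * z := by
  refine eqOn_monSpan (f := contraction v ∘ₗ LinearMap.mulLeft k (mon (varMon v n b)))
    (g := LinearMap.mulLeft k (varContraction v n b)) (fun m hm ↦ ?_) hz
  have hpow : powExp (merge s t (varMon v n b) m) v = n := by simp [(wt_eq_zero.1 hm).1]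
  have hext : extExp (merge s t (varMon v n b) m) v = b := by simp [(wt_eq_zero.1 hm).2]
  rw [LinearMap.comp_apply, LinearMap.mulLeft_apply, LinearMap.mulLeft_apply, mon_mul_mon, map_smul,
    contraction, monConstr_mon, hpow, hext, erase_merge_varMon hm,
    smul_inv_smul₀ (mulCoef_varMon_ne_zero hm n b)]

namespace IsDeRham

variable {d : Omega k s t →ₗ[k] Omega k s t} (hd : IsDeRham k s t d)
include hd

theorem cartan_formula_varMon_mul {v : Var s t} {z : Omega k s t} (hz : z ∈ awayFrom k v) (n : ℕ)
    (b : Bool) :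
    d (contraction v (mon (varMon v n b) * z)) + contraction v (d (mon (varMon v n b) * z)) =
      ((n + b.toNat : ℕ) : k) • (mon (varMon v n b) * z) := by
  have hdz := hd.map_mem_awayFrom hz
  have hleibniz (n : ℕ) (b : Bool) := hd.map_mon_mul (varMon v n b) z
  have hcontr (n : ℕ) (b : Bool) := contraction_varMon_mul hz n b
  have hcontr_d (n : ℕ) (b : Bool) := contraction_varMon_mul hdz n b
  rcases v with i | j <;> cases b
  · cases n <;> simp [hleibniz, hcontr, hcontr_d, varContraction, hd.map_x_pow, cdeg_varMon_inl,
      smul_mul_assoc]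
  · simp [hleibniz, hcontr, hcontr_d, varContraction, hd.map_x_pow, hd.map_x_pow_xi,
      cdeg_varMon_inl, smul_mul_assoc]
  · cases n <;> simp [hleibniz, hcontr, hcontr_d, varContraction, hd.map_gamma, hd.map_y_gamma,
      cdeg_varMon_inr, smul_mul_assoc, pow_succ]
  · simp [hleibniz, hcontr, hcontr_d, varContraction, hd.map_y_gamma, cdeg_varMon_inr,
      smul_mul_assoc]

theorem cartan_formula (v : Var s t) (m : Mon s t) :
    d (contraction v (mon m)) + contraction v (d (mon m)) = (wt m v : k) • mon m := by
  have herase : wt (erase v m) v = 0 := by simp [wt_erase]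
  rw [← merge_varMon_erase v m, mon_merge_varMon herase]
  simp only [map_smul]
  rw [← smul_add, hd.cartan_formula_varMon_mul (mon_mem_monSpan herase), smul_comm,
    merge_varMon_erase, wt]

end IsDeRham

open scoped Classical in
/-- The projection of `Ω(V)` onto the part on which all weights vanish in `k`. -/
noncomputable def zeroWeightProj : Omega k s t →ₗ[k] Omega k s t :=
  monConstr (RingHom.id k) fun m ↦ if ∀ v, (wt m v : k) = 0 then mon m else 0

theorem zeroWeightProj_eq_zero [CharP k p] {M : ℕ} (hM : ¬ p ∣ M) {u : Omega k s t}
    (hu : u ∈ OmegaTot k s t M) : zeroWeightProj u = 0 := by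
  refine eqOn_monSpan (f := zeroWeightProj) (g := 0) (fun m hm ↦ ?_) hu
  rw [zeroWeightProj, monConstr_mon, if_neg, LinearMap.zero_apply]
  intro hwt
  refine hM ?_
  rw [← show tdeg s t m = M from hm, tdeg_eq_sum_wt]
  exact dvd_sum fun v _ ↦ (CharP.cast_eq_zero_iff k p _).1 (hwt v)

open scoped Classical in
/-- A contraction inverting the Cartan formula on the weight space of `w`, if `w` does not vanish
in `k`. -/
noncomputable def homotopyOn (w : Var s t → ℕ) : Omega k s t →ₗ[k] Omega k s t :=
  if h : ∃ v, (w v : k) ≠ 0 then (w h.choose : k)⁻¹ • contraction h.choose else 0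

/-- The homotopy contracting `Ω(V)` onto the image of `zeroWeightProj`. -/
noncomputable def homotopy : Omega k s t →ₗ[k] Omega k s t :=
  monConstr (RingHom.id k) fun m ↦ homotopyOn (wt m) (mon m)

theorem homotopy_apply {w : Var s t → ℕ} {z : Omega k s t} (hz : z ∈ weightSpace w) :
    homotopy z = homotopyOn w z := by
  refine eqOn_monSpan (fun m hm ↦ ?_) hz
  rw [homotopy, monConstr_mon, show wt m = w from hm]

namespace IsDeRham

variable {d : Omega k s t →ₗ[k] Omega k s t} (hd : IsDeRham k s t d)
include hd

theorem homotopy_formula (z : Omega k s t) :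
    d (homotopy z) + homotopy (d z) = z - zeroWeightProj z := by
  suffices h : d ∘ₗ homotopy + homotopy ∘ₗ d = LinearMap.id - zeroWeightProj from
    LinearMap.congr_fun h z
  refine semilinearMap_ext fun m ↦ ?_
  have hm := homotopy_apply (mon_mem_weightSpace (k := k) (m := m) rfl)
  have hdm := homotopy_apply (hd.map_mon_mem_weightSpace m)
  simp only [LinearMap.add_apply, LinearMap.comp_apply, LinearMap.sub_apply, LinearMap.id_apply,
    hm, hdm, zeroWeightProj, monConstr_mon, homotopyOn]
  by_cases h : ∃ v, (wt m v : k) ≠ 0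
  · rw [dif_pos h, if_neg (not_forall.2 h), sub_zero, LinearMap.smul_apply, LinearMap.smul_apply,
      map_smul, ← smul_add, hd.cartan_formula, inv_smul_smul₀ h.choose_spec]
  · rw [dif_neg h, if_pos (by simpa only [not_exists, not_not] using h)]
    simp

theorem map_zeroWeightProj (z : Omega k s t) : d (zeroWeightProj z) = 0 := by
  suffices h : d ∘ₗ zeroWeightProj = 0 from LinearMap.congr_fun h z
  refine semilinearMap_ext fun m ↦ ?_
  rw [LinearMap.comp_apply, zeroWeightProj, monConstr_mon, LinearMap.zero_apply]
  split_ifs with h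
  · exact hd.map_mon_eq_zero h
  · exact map_zero d

theorem zeroWeightProj_map (z : Omega k s t) : zeroWeightProj (d z) = 0 := by
  have hz : d (homotopy (d z)) = d z := by
    simpa [hd.2.2.2.2, hd.map_zeroWeightProj] using congrArg d (hd.homotopy_formula z)
  have h := hd.homotopy_formula (d z)
  rw [hd.2.2.2.2, map_zero, add_zero, hz] at h
  exact sub_eq_self.1 h.symm

theorem sub_zeroWeightProj_mem_range {u : Omega k s t} (hu : d u = 0) :
    u - zeroWeightProj u ∈ LinearMap.range d :=
  ⟨homotopy u, by rw [← hd.homotopy_formula u, hu, map_zero, add_zero]⟩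

end IsDeRham

/-! ### Cartier monomials -/

variable (p) in
/-- The effect of the Cartier map on monomials: `xⁿ ↦ xᵖⁿ`, `1 ⊗ x ↦ xᵖ⁻¹ ⊗ x` for even `x`,
and `γₙ(y) ↦ γₚₙ(y)`, `y ⊗ 1 ↦ y ⊗ γₚ₋₁(y)` for odd `y`. -/
def cartierMon (m : Mon s t) : Mon s t :=
  ofExp (fun v ↦ p * powExp m v + (extExp m v).toNat * (p - 1)) (extExp m)

variable (p) in
/-- The left inverse of `cartierMon p` that divides the unbounded exponents by `p`. -/
def cartierMonInv (m : Mon s t) : Mon s t :=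
  ofExp (fun v ↦ powExp m v / p) (extExp m)

@[simp] theorem powExp_cartierMon (m : Mon s t) (v : Var s t) :
    powExp (cartierMon p m) v = p * powExp m v + (extExp m v).toNat * (p - 1) := by
  rw [cartierMon, powExp_ofExp]

@[simp] theorem extExp_cartierMon (m : Mon s t) (v : Var s t) :
    extExp (cartierMon p m) v = extExp m v := by
  rw [cartierMon, extExp_ofExp]

theorem cartierMon_unitMon : cartierMon p (unitMon s t) = unitMon s t :=
  exp_ext (by simp) (by simp)

theorem cartierMon_varMon (v : Var s t) (n : ℕ) (b : Bool) :
    cartierMon p (varMon v n b) = varMon v (p * n + b.toNat * (p - 1)) b := by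
  refine exp_ext (fun w ↦ ?_) fun w ↦ ?_ <;> by_cases h : w = v <;> simp [h]

theorem cartierMon_merge {m₁ m₂ : Mon s t} (h : ∀ v, extExp m₁ v = true → extExp m₂ v = false) :
    cartierMon p (merge s t m₁ m₂) = merge s t (cartierMon p m₁) (cartierMon p m₂) := by
  refine exp_ext (fun v ↦ ?_) fun v ↦ by simp
  cases h₁ : extExp m₁ v
  · simp only [powExp_cartierMon, powExp_merge, extExp_merge, h₁, Bool.false_or, Bool.toNat_false]
    ring
  · simp only [powExp_cartierMon, powExp_merge, extExp_merge, h₁, h v h₁, Bool.true_or,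
      Bool.toNat_true, Bool.toNat_false]
    ring

section Prime

variable [hp : Fact p.Prime]

theorem wt_cartierMon (m : Mon s t) (v : Var s t) : wt (cartierMon p m) v = p * wt m v := by
  have := hp.out.pos
  rw [wt, wt, powExp_cartierMon, extExp_cartierMon, mul_add, add_assoc]
  congr 1
  cases extExp m v <;> simp only [Bool.toNat_true, Bool.toNat_false] <;> omega

theorem cartierMonInv_cartierMon (m : Mon s t) : cartierMonInv p (cartierMon p m) = m := by
  have := hp.out.pos
  refine exp_ext (fun v ↦ ?_) fun v ↦ by simp [cartierMonInv]
  rw [cartierMonInv, powExp_ofExp, powExp_cartierMon, Nat.mul_add_div this,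
    Nat.div_eq_of_lt, add_zero]
  cases extExp m v <;> simp [this]

theorem cartierMon_cartierMonInv {m : Mon s t} (hm : ∀ v, p ∣ wt m v) :
    cartierMon p (cartierMonInv p m) = m := by
  have := hp.out.pos
  refine exp_ext (fun v ↦ ?_) fun v ↦ by simp [cartierMonInv]
  rw [powExp_cartierMon, cartierMonInv, powExp_ofExp, extExp_ofExp]
  have hv := hm v
  rw [wt] at hv
  cases h : extExp m v <;> simp only [h, Bool.toNat_true, Bool.toNat_false, add_zero] at hv ⊢
  · rw [Nat.mul_div_cancel' hv, zero_mul, add_zero]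
  · have hdiv := Nat.mul_div_cancel' hv
    rw [Nat.succ_div_of_dvd hv, mul_add] at hdiv
    omega

theorem tdeg_cartierMon (m : Mon s t) : tdeg s t (cartierMon p m) = p * tdeg s t m := by
  simp only [tdeg_eq_sum_wt, wt_cartierMon, mul_sum]

variable [CharP k p]

variable (k) in
theorem cast_choose_cartierExp (a₁ a₂ : ℕ) {b₁ b₂ : Bool} (h : b₁ = true → b₂ = false) :
    ((p * a₁ + b₁.toNat * (p - 1) + (p * a₂ + b₂.toNat * (p - 1))).choose
      (p * a₁ + b₁.toNat * (p - 1)) : k) = (a₁ + a₂).choose a₁ := by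
  have := hp.out.pos
  have hlt : b₁.toNat * (p - 1) + b₂.toNat * (p - 1) < p := by
    cases b₁ <;> cases b₂ <;> simp_all
  rw [CharP.cast_eq_iff_mod_eq k p]
  refine (Choose.choose_modEq_choose_mod_mul_choose_div_nat).trans ?_
  rw [add_add_add_comm, ← mul_add, Nat.mul_add_mod, Nat.mul_add_mod, Nat.mul_add_div this,
    Nat.mul_add_div this, Nat.div_eq_of_lt hlt, Nat.div_eq_of_lt (le_self_add.trans_lt hlt),
    Nat.mod_eq_of_lt hlt, Nat.mod_eq_of_lt (le_self_add.trans_lt hlt)]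
  cases b₁ <;> simp_all [Nat.ModEq]

variable (k) in
theorem neg_one_pow_parA_cartierMon (m : Mon s t) :
    (-1 : k) ^ parA s t (cartierMon p m) = (-1) ^ parA s t m := by
  have hp1 : (-1 : k) ^ (p - 1) = 1 := by
    have h := neg_one_pow_char k p
    rwa [← Nat.sub_add_cancel hp.out.one_le, pow_succ, mul_neg_one, neg_inj] at h
  have hpar : parA s t (cartierMon p m) = p * parA s t m + (p - 1) * parS s t m := by
    simp only [parA, parS, cnt_eq_sum, mul_sum, ← sum_add_distrib]
    exact sum_congr rfl fun j _ ↦ by rw [mul_comm (p - 1)]; rfl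
  rw [hpar, pow_add, pow_mul, pow_mul, hp1, one_pow, mul_one, neg_one_pow_char]

theorem mulCoef_cartierMon (m₁ m₂ : Mon s t) :
    mulCoef k s t (cartierMon p m₁) (cartierMon p m₂) = mulCoef k s t m₁ m₂ ^ p := by
  by_cases h : ∀ v, extExp m₁ v = true → extExp m₂ v = false
  · rw [mulCoef_eq h, mulCoef_eq (by simpa using h), mul_pow, ← prod_pow]
    congr 1
    · simp only [pow_add, pow_mul, neg_one_pow_parA_cartierMon, mul_pow]
      simp only [← pow_mul, mul_comm _ p]
      simp only [pow_mul, neg_one_pow_char]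
      rfl
    · refine prod_congr rfl fun j _ ↦ ?_
      rw [← frobenius_def, map_natCast]
      exact cast_choose_cartierExp k _ _ (h (.inr j))
  · push Not at h
    obtain ⟨v, h₁, h₂⟩ := h
    rw [mulCoef_eq_zero (v := v) h₁ (by simpa using h₂),
      mulCoef_eq_zero (v := v) (by simpa using h₁) (by simpa using h₂), zero_pow hp.out.ne_zero]

end Prime

/-! ### Generators -/

section Generators

variable [hp : Fact p.Prime] [CharP k p]

theorem gamma_induction {P : Omega k s t → Prop} {j : Fin t}
    (zero : P (mon (varMon (.inr j) 0 false)))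
    (prime_pow : ∀ e, P (mon (varMon (.inr j) (p ^ e) false)))
    (smul : ∀ (c : k) z, P z → P (c • z)) (mul : ∀ z w, P z → P w → P (z * w)) (n : ℕ) :
    P (mon (varMon (.inr j) n false)) := by
  induction n using Nat.strong_induction_on with
  | _ n ih =>
    rcases n.eq_zero_or_pos with rfl | hn
    · exact zero
    by_cases hchoose : ∃ i ∈ Finset.Icc 1 (n - 1), (n.choose i : k) ≠ 0
    · obtain ⟨i, hi, hne⟩ := hchoose
      rw [Finset.mem_Icc] at hi
      have h := smul (n.choose i : k)⁻¹ _ (mul _ _ (ih i (by omega)) (ih (n - i) (by omega)))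
      rwa [mon_varMon_inr_mul, Nat.add_sub_cancel' (by omega), inv_smul_smul₀ hne] at h
    · push Not at hchoose
      have hpow := Choose.eq_pow_multiplicity_of_choose_modEq_zero_nat hn fun i hi ↦
        Nat.modEq_zero_iff_dvd.2 ((CharP.cast_eq_zero_iff k p _).1 (hchoose i hi))
      rw [hpow]
      exact prime_pow _

theorem generator_induction {P : Omega k s t → Prop} (one : P 1)
    (x : ∀ i, P (mon (XS s t i))) (xi : ∀ i, P (mon (XA s t i))) (y : ∀ j, P (mon (US s t j)))
    (gamma : ∀ j e, P (mon (GA s t j (p ^ e)))) (add : ∀ z w, P z → P w → P (z + w))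
    (smul : ∀ (c : k) z, P z → P (c • z)) (mul : ∀ z w, P z → P w → P (z * w))
    (z : Omega k s t) : P z := by
  simp only [XS_eq_varMon, XA_eq_varMon, US_eq_varMon, GA_eq_varMon] at x xi y gamma
  have hx_pow (i : Fin s) (n : ℕ) : P (mon (varMon (.inl i) n false)) := by
    induction n with
    | zero => rw [varMon_zero_false]; exact one
    | succ n ih => simpa [mon_varMon_inl_mul] using mul _ _ ih (x i)
  have hgamma (j : Fin t) (n : ℕ) : P (mon (varMon (.inr j) n false)) :=
    gamma_induction (varMon_zero_false (.inr j) ▸ one) (gamma j) smul mul n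
  have hvarMon (v : Var s t) (n : ℕ) (b : Bool) : P (mon (varMon v n b)) := by
    rcases v with i | j <;> cases b
    · exact hx_pow i n
    · simpa [mon_varMon_inl_mul] using mul _ _ (hx_pow i n) (xi i)
    · exact hgamma j n
    · simpa [mon_varMon_inr_mul] using mul _ _ (y j) (hgamma j n)
  have hmon (m : Mon s t) : P (mon m) := by
    induction m using mon_induction with
    | unit => exact one
    | varMon_merge v n b m hm ih =>
      rw [mon_merge_varMon hm]
      exact smul _ _ (mul _ _ (hvarMon v n b) ih)
  induction z using omega_induction with
  | zero => simpa using smul 0 1 one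
  | add z w hz hw => exact add z w hz hw
  | smul_mon c m => exact smul c _ (hmon m)

theorem IsTheta.eq {θ θ' : Omega k s t → Omega k s t} (hθ : IsTheta k s t p θ)
    (hθ' : IsTheta k s t p θ') : θ = θ' := by
  obtain ⟨add, smul, mul, one, x, xi, y, gamma⟩ := hθ
  obtain ⟨add', smul', mul', one', x', xi', y', gamma'⟩ := hθ'
  funext z
  refine generator_induction (p := p) (P := fun z ↦ θ z = θ' z) (one.trans one'.symm)
    (fun i ↦ (x i).trans (x' i).symm) (fun i ↦ (xi i).trans (xi' i).symm)
    (fun j ↦ (y j).trans (y' j).symm) (fun j e ↦ (gamma j e).trans (gamma' j e).symm)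
    (fun z w hz hw ↦ ?_) (fun c z hz ↦ ?_) (fun z w hz hw ↦ ?_) z
  · rw [add, add', hz, hw]
  · rw [smul, smul', hz]
  · rw [mul, mul', hz, hw]

end Generators

/-! ### The Cartier map -/

section Cartier

variable [hp : Fact p.Prime] [CharP k p]

variable (k p) in
/-- The Frobenius-semilinear map `θ`. -/
noncomputable def cartier : Omega k s t →ₛₗ[frobenius k p] Omega k s t :=
  monConstr (frobenius k p) fun m ↦ mon (cartierMon p m)

@[simp] theorem cartier_mon (m : Mon s t) : cartier k p (mon m) = mon (cartierMon p m) :=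
  monConstr_mon _ _ m

theorem cartier_mon_mul_mon (m₁ m₂ : Mon s t) : cartier k p (mon m₁ * mon m₂) =
    cartier k p (mon m₁) * cartier k p (mon m₂) := by
  rw [mon_mul_mon, map_smulₛₗ, cartier_mon, cartier_mon, cartier_mon, mon_mul_mon,
    mulCoef_cartierMon, frobenius_def]
  by_cases h : mulCoef k s t m₁ m₂ = 0
  · simp [h, hp.out.ne_zero]
  · rw [cartierMon_merge fun v h₁ ↦ ?_]
    by_contra h₂
    exact h (mulCoef_eq_zero h₁ (Bool.eq_true_of_not_eq_false h₂))

theorem cartier_mul (z w : Omega k s t) :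
    cartier k p (z * w) = cartier k p z * cartier k p w := by
  induction z using omega_induction with
  | zero => simp only [zero_mul, map_zero]
  | add z z' hz hz' => simp only [add_mul, map_add, hz, hz']
  | smul_mon c m =>
    induction w using omega_induction with
    | zero => simp only [mul_zero, map_zero]
    | add w w' hw hw' => simp only [mul_add, map_add, hw, hw']
    | smul_mon c' m' =>
      simp only [smul_mul_assoc, mul_smul_comm, map_smulₛₗ, cartier_mon_mul_mon]

theorem isTheta_cartier : IsTheta k s t p (cartier k p) := by
  refine ⟨map_add _, map_smulₛₗ _, cartier_mul, ?_, fun i ↦ ?_, fun i ↦ ?_, fun j ↦ ?_,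
    fun j e ↦ ?_⟩
  all_goals refine (cartier_mon _).trans (congrArg mon ?_)
  · exact cartierMon_unitMon
  · rw [XS_eq_varMon, cartierMon_varMon, varMon_inl]
    simp
  · rw [XA_eq_varMon, cartierMon_varMon, varMon_inl]
    simp
  · rw [US_eq_varMon, cartierMon_varMon, varMon_inr]
    simp
  · rw [GA_eq_varMon, GA_eq_varMon, cartierMon_varMon]
    simp [pow_succ']

theorem cartier_mem_omegaTot {n : ℕ} {z : Omega k s t} (hz : z ∈ OmegaTot k s t n) :
    cartier k p z ∈ OmegaTot k s t (p * n) := by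
  refine map_mem_of_mem_monSpan _ (fun m hm ↦ ?_) hz
  rw [cartier_mon]
  exact mon_mem_monSpan <| (tdeg_cartierMon m).trans <| congrArg (p * ·) hm

theorem zeroWeightProj_cartier (z : Omega k s t) :
    zeroWeightProj (cartier k p z) = cartier k p z := by
  induction z using omega_induction with
  | zero => simp only [map_zero]
  | add z w hz hw => simp only [map_add, hz, hw]
  | smul_mon c m => simp [map_smulₛₗ, zeroWeightProj, monConstr_mon, wt_cartierMon]

variable [PerfectRing k p]

open scoped Classical in
variable (k p) in
/-- The left inverse of the Cartier map that annihilates all monomials outside its image. -/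
noncomputable def cartierInv :
    Omega k s t →ₛₗ[((frobeniusEquiv k p).symm : k →+* k)] Omega k s t :=
  monConstr _ fun m ↦ if ∀ v, p ∣ wt m v then mon (cartierMonInv p m) else 0

theorem cartierInv_cartier (z : Omega k s t) : cartierInv k p (cartier k p z) = z := by
  induction z using omega_induction with
  | zero => simp only [map_zero]
  | add z w hz hw => simp only [map_add, hz, hw]
  | smul_mon c m =>
    simp [map_smulₛₗ, cartierInv, monConstr_mon, wt_cartierMon, cartierMonInv_cartierMon]

theorem cartier_cartierInv (z : Omega k s t) :
    cartier k p (cartierInv k p z) = zeroWeightProj z := by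
  induction z using omega_induction with
  | zero => simp only [map_zero]
  | add z w hz hw => simp only [map_add, hz, hw]
  | smul_mon c m =>
    simp only [map_smulₛₗ, zeroWeightProj, cartierInv, monConstr_mon,
      CharP.cast_eq_zero_iff k p]
    split_ifs with h
    · simp [cartierMon_cartierMonInv h]
    · simp

theorem cartierInv_mem_omegaTot {n : ℕ} {u : Omega k s t} (hu : u ∈ OmegaTot k s t (p * n)) :
    cartierInv k p u ∈ OmegaTot k s t n := by
  refine map_mem_of_mem_monSpan _ (fun m hm ↦ ?_) hu
  rw [cartierInv, monConstr_mon]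
  split_ifs with h
  · refine mon_mem_monSpan <| Nat.eq_of_mul_eq_mul_left hp.out.pos ?_
    rw [← tdeg_cartierMon, cartierMon_cartierMonInv h]
    exact hm
  · exact zero_mem _

end Cartier

/-! ### The Cartier isomorphism -/

namespace IsDeRham

variable {d : Omega k s t →ₗ[k] Omega k s t} (hd : IsDeRham k s t d)
include hd

theorem map_cartier [Fact p.Prime] [CharP k p] (z : Omega k s t) : d (cartier k p z) = 0 := by
  rw [← zeroWeightProj_cartier, hd.map_zeroWeightProj]

variable [Fact p.Prime] [CharP k p] [PerfectRing k p]

theorem eq_of_cartier_sub_mem_range {z w : Omega k s t}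
    (h : cartier k p z - cartier k p w ∈ LinearMap.range d) : z = w := by
  obtain ⟨y, hy⟩ := h
  have hzero : cartier k p z - cartier k p w = 0 := by
    rw [← zeroWeightProj_cartier z, ← zeroWeightProj_cartier w, ← map_sub, ← hy,
      hd.zeroWeightProj_map]
  rw [← cartierInv_cartier (p := p) z, sub_eq_zero.1 hzero, cartierInv_cartier]

theorem cartier_cartierInv_sub_mem_range {u : Omega k s t} (hu : d u = 0) :
    cartier k p (cartierInv k p u) - u ∈ LinearMap.range d := by
  rw [cartier_cartierInv, ← neg_sub]
  exact neg_mem (hd.sub_zeroWeightProj_mem_range hu)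

end IsDeRham

end Development

theorem statement8_general (k : Type) [Field k] (p : ℕ) [Fact p.Prime] [CharP k p]
    [PerfectRing k p] (s t : ℕ)
    (d : Omega k s t →ₗ[k] Omega k s t) (hd : IsDeRham k s t d) :
    (∃! θ : Omega k s t → Omega k s t, IsTheta k s t p θ) ∧
    (∀ θ : Omega k s t → Omega k s t, IsTheta k s t p θ →
      (∀ z, d (θ z) = 0) ∧
      (∀ n : ℕ, ∀ z ∈ OmegaTot k s t n, θ z ∈ OmegaTot k s t (p * n)) ∧
      (∀ z w : Omega k s t, θ z - θ w ∈ LinearMap.range d → z = w) ∧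
      (∀ u : Omega k s t, d u = 0 → ∃ z, θ z - u ∈ LinearMap.range d) ∧
      (∀ n : ℕ, ∀ u ∈ OmegaTot k s t (p * n), d u = 0 →
        ∃ z ∈ OmegaTot k s t n, θ z - u ∈ LinearMap.range d) ∧
      (∀ M : ℕ, ¬ p ∣ M → ∀ u ∈ OmegaTot k s t M, d u = 0 → u ∈ LinearMap.range d)) := by
  refine ⟨⟨cartier k p, isTheta_cartier, fun θ hθ ↦ hθ.eq isTheta_cartier⟩, fun θ hθ ↦ ?_⟩
  obtain rfl : θ = cartier k p := hθ.eq isTheta_cartier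
  exact ⟨hd.map_cartier, fun n z ↦ cartier_mem_omegaTot, fun z w ↦ hd.eq_of_cartier_sub_mem_range,
    fun u hu ↦ ⟨_, hd.cartier_cartierInv_sub_mem_range hu⟩,
    fun n u hun hu ↦ ⟨_, cartierInv_mem_omegaTot hun, hd.cartier_cartierInv_sub_mem_range hu⟩,
    fun M hM u huM hu ↦ by
      simpa [zeroWeightProj_eq_zero hM huM] using hd.sub_zeroWeightProj_mem_range hu⟩

/-- the super Cartier isomorphism, evaluated form. -/
theorem statement8 (k : Type) [Field k] (p : ℕ) [Fact p.Prime] [CharP k p] [ExpChar k p]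
    [PerfectRing k p] (hp2 : 2 < p) (s t : ℕ)
    (d : Omega k s t →ₗ[k] Omega k s t) (hd : IsDeRham k s t d) :
    -- there is a unique map `θ` with the prescribed properties
    (∃! θ : Omega k s t → Omega k s t, IsTheta k s t p θ) ∧
    -- moreover, any such `θ` takes values in `ker d`, multiplies total degrees by `p`,
    -- and induces a bijection `Ω(V) → H^•(Ω(V), d)` mapping `Ω_n(V)` bijectively onto
    -- `H^•(Ω_{pn}(V), d)`, while `H^•(Ω_M(V), d) = 0` when `p ∤ M`
    (∀ θ : Omega k s t → Omega k s t, IsTheta k s t p θ →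
      (∀ z, d (θ z) = 0) ∧
      (∀ n : ℕ, ∀ z ∈ OmegaTot k s t n, θ z ∈ OmegaTot k s t (p * n)) ∧
      (∀ z w : Omega k s t, θ z - θ w ∈ LinearMap.range d → z = w) ∧
      (∀ u : Omega k s t, d u = 0 → ∃ z, θ z - u ∈ LinearMap.range d) ∧
      (∀ n : ℕ, ∀ u ∈ OmegaTot k s t (p * n), d u = 0 →
        ∃ z ∈ OmegaTot k s t n, θ z - u ∈ LinearMap.range d) ∧
      (∀ M : ℕ, ¬ p ∣ M → ∀ u ∈ OmegaTot k s t M, d u = 0 → u ∈ LinearMap.range d)) :=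
  statement8_general k p s t d hd

end Stmt8
end

section
/- Let k be a perfect field of characteristic p > 2 and V = V₀ ⊕ V₁ a finite-dimensional superspace with fixed homogeneous bases {v₁,…,v_s} of V₀ and {y₁,…,y_t} of V₁, and let θ: Ω(V) → Ω(V) be the unique additive, Frobenius-semilinear, multiplicative map with θ(v_i⊗1) = v_i^p⊗1, θ(1⊗v_i) = v_i^{p−1}⊗v_i, θ(y_j⊗1) = y_j⊗γ_{p−1}(y_j), θ(1⊗γ_{p^e}(y_j)) = 1⊗γ_{p^{e+1}}(y_j). Define K_n^i(V) := ker(κ: Ω_n^i → Ω_n^{i−1}) and K_n(V) := ⊕_i K_n^i(V). Then for every n ≥ 0: the de Rham differential d restricts to a differential on K_{pn}(V); θ maps K_n(V) into ker(d) ∩ K_{pn}(V); the induced map K_n(V) → H^•(K_{pn}(V),d) is bijective; and the inclusion K_{pn}(V) ⊆ Ω_{pn}(V) induces an injection H^•(K_{pn}(V),d) → H^•(Ω_{pn}(V),d). -/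
open Finset

set_option synthInstance.maxHeartbeats 1000000
set_option maxHeartbeats 4000000

namespace Stmt9

variable (k : Type) [Field k] (s t : ℕ)

/-- index of a monomial `x^a · u^b ⊗ x^c · γ^e` of `Ω(V) = 𝐒(V) ⊗ 𝐀(V)`, for
`V = V₀ ⊕ V₁` with basis `x₁, …, x_s` of `V₀` and `y₁, …, y_t` of `V₁`: here `a` records the
exponents of the `xᵢ ⊗ 1` (in `S(V₀)`), `b` records which `yⱼ ⊗ 1` occur (in `Λ(V₁)`),
`c` records which `1 ⊗ xᵢ` occur (in `Λ(V₀)`) and `e` records the divided powers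
`1 ⊗ γ_{eⱼ}(yⱼ)` (in `Γ(V₁)`) -/
abbrev Mon : Type := (Fin s → ℕ) × (Fin t → Bool) × (Fin s → Bool) × (Fin t → ℕ)

/-- the superspace `Ω(V) = 𝐒(V) ⊗ 𝐀(V) = (S(V₀) ⊗ Λ(V₁)) ⊗ (Λ(V₀) ⊗ Γ(V₁))`, modelled on
its basis of monomials -/
def Omega : Type := Mon s t →₀ k

noncomputable instance : AddCommGroup (Omega k s t) :=
  inferInstanceAs (AddCommGroup (Mon s t →₀ k))

noncomputable instance : Module k (Omega k s t) :=
  inferInstanceAs (Module k (Mon s t →₀ k))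

/-- the number of `true` values of a Boolean vector -/
def cnt {u : ℕ} (b : Fin u → Bool) : ℕ := (univ.filter fun i => b i = true).card

/-- the cohomological degree of a monomial: the degree of its `𝐀(V)`-part -/
def cdeg (m : Mon s t) : ℕ := cnt m.2.2.1 + ∑ j, m.2.2.2 j

/-- the total degree of a monomial -/
def tdeg (m : Mon s t) : ℕ := ((∑ i, m.1 i) + cnt m.2.1) + cdeg s t m

/-- the parity (number of odd tensor factors) of the `𝐒(V)`-part of a monomial -/
def parS (m : Mon s t) : ℕ := cnt m.2.1

/-- the parity (number of odd tensor factors) of the `𝐀(V)`-part of a monomial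
(`1 ⊗ xᵢ` is even since `xᵢ ∈ V₀`, and `γ_{eⱼ}(yⱼ)` has parity `eⱼ`) -/
def parA (m : Mon s t) : ℕ := ∑ j, m.2.2.2 j

/-- the merge of two monomial indices -/
def merge (m₁ m₂ : Mon s t) : Mon s t :=
  (m₁.1 + m₂.1, fun j => m₁.2.1 j || m₂.2.1 j, fun i => m₁.2.2.1 i || m₂.2.2.1 i,
    m₁.2.2.2 + m₂.2.2.2)

/-- the number of `(i, i')` with `i` occurring in `b`, `i'` occurring in `b'` and `i' < i`:
the Koszul sign for merging two increasing exterior monomials is `(-1)` to this count -/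
def invCount {u : ℕ} (b b' : Fin u → Bool) : ℕ :=
  ((univ ×ˢ univ).filter fun q : Fin u × Fin u =>
    b q.1 = true ∧ b' q.2 = true ∧ q.2 < q.1).card

/-- the structure constant for the product of two monomials of `Ω(V)`: it vanishes if an odd
exterior generator is repeated, and otherwise consists of the Koszul sign
`(-1)^{|𝐀-part of m₁|·|𝐒-part of m₂|}` from the definition of the product of
`Ω(V) = 𝐒(V) ⊗ 𝐀(V)`, exterior reordering signs in `Λ(V₁)` and `Λ(V₀)`, the sign
`(-1)^{deg·deg}` for moving the `Γ(V₁)`-part of `m₁` past the `Λ(V₀)`-part of `m₂` in the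
degree-twisted product of `𝐀(V) = Λ(V₀) ⊗ᵍ Γ(V₁)`, and divided-power binomial
coefficients -/
def mulCoef (m₁ m₂ : Mon s t) : k :=
  if (∃ j, m₁.2.1 j = true ∧ m₂.2.1 j = true) ∨
      (∃ i, m₁.2.2.1 i = true ∧ m₂.2.2.1 i = true) then 0
  else
    (-1 : k) ^ (parA s t m₁ * parS s t m₂ + invCount m₁.2.1 m₂.2.1 +
        invCount m₁.2.2.1 m₂.2.2.1 + parA s t m₁ * cnt m₂.2.2.1) *
      ∏ j, ((m₁.2.2.2 j + m₂.2.2.2 j).choose (m₁.2.2.2 j) : k)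

/-- the multiplication of `Ω(V)` -/
noncomputable def mulOmega (x y : Omega k s t) : Omega k s t :=
  x.sum fun m₁ c₁ => y.sum fun m₂ c₂ =>
    Finsupp.single (merge s t m₁ m₂) (c₁ * c₂ * mulCoef k s t m₁ m₂)

noncomputable instance : Mul (Omega k s t) := ⟨mulOmega k s t⟩

/-- the unit monomial -/
def unitMon : Mon s t := (0, fun _ => false, fun _ => false, 0)

noncomputable instance : One (Omega k s t) := ⟨Finsupp.single (unitMon s t) 1⟩

/-- the bigraded piece `Ω_n^i(V) = 𝐒^{n-i}(V) ⊗ 𝐀^i(V)` (total degree `n`, cohomological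
degree `i`) -/
noncomputable def OmegaNI (n i : ℕ) : Submodule k (Omega k s t) :=
  Finsupp.supported k k {m | tdeg s t m = n ∧ cdeg s t m = i}

/-- the total-degree-`n` piece `Ω_n(V)` -/
noncomputable def OmegaTot (n : ℕ) : Submodule k (Omega k s t) :=
  Finsupp.supported k k {m | tdeg s t m = n}

/-- the cohomological-degree-`i` piece `Ω^i(V)` -/
noncomputable def OmegaCoh (i : ℕ) : Submodule k (Omega k s t) :=
  Finsupp.supported k k {m | cdeg s t m = i}

/-- the subspace `1 ⊗ 𝐀(V)` of `Ω(V)` -/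
noncomputable def Apart : Submodule k (Omega k s t) :=
  Finsupp.supported k k {m | m.1 = 0 ∧ m.2.1 = fun _ => false}

/-- the subspace `𝐒(V) ⊗ 1` of `Ω(V)` -/
noncomputable def Spart : Submodule k (Omega k s t) :=
  Finsupp.supported k k {m | m.2.2.1 = (fun _ => false) ∧ m.2.2.2 = 0}

/-- the monomial `xᵢ ⊗ 1` -/
def XS (i : Fin s) : Mon s t := (Pi.single i 1, fun _ => false, fun _ => false, 0)

/-- the monomial `yⱼ ⊗ 1` -/
def US (j : Fin t) : Mon s t := (0, fun j' => decide (j' = j), fun _ => false, 0)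

/-- the monomial `1 ⊗ xᵢ` -/
def XA (i : Fin s) : Mon s t := (0, fun _ => false, fun i' => decide (i' = i), 0)

/-- the monomial `1 ⊗ γ_e(yⱼ)` -/
def GA (j : Fin t) (e : ℕ) : Mon s t := (0, fun _ => false, fun _ => false, Pi.single j e)

/-- the element `v ⊗ 1` of `Ω(V)`, for `v ∈ V` with even coordinates `v0` and odd
coordinates `v1` -/
noncomputable def vS (v0 : Fin s → k) (v1 : Fin t → k) : Omega k s t :=
  (∑ i, Finsupp.single (XS s t i) (v0 i)) + ∑ j, Finsupp.single (US s t j) (v1 j)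

/-- the element `1 ⊗ v` of `Ω(V)` -/
noncomputable def vA (v0 : Fin s → k) (v1 : Fin t → k) : Omega k s t :=
  (∑ i, Finsupp.single (XA s t i) (v0 i)) + ∑ j, Finsupp.single (GA s t j 1) (v1 j)

/-- the element `1 ⊗ γ_N(y)` of `Ω(V)` for an arbitrary odd vector `y` with coordinates `w`:
`γ_N(∑ wⱼ yⱼ) = ∑_{e, ∑e = N} (∏ wⱼ^{eⱼ}) γ^e(y)` -/
noncomputable def gammaA (w : Fin t → k) (N : ℕ) : Omega k s t :=
  ∑ e ∈ Finset.Nat.antidiagonalTuple t N,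
    Finsupp.single ((0, fun _ => false, fun _ => false, e) : Mon s t) (∏ j, w j ^ e j)

/-- the de Rham differential `d` of `Ω(V)`: the unique `k`-linear map of cohomological
degree `+1` with `d(v ⊗ 1) = 1 ⊗ v`, `d(1 ⊗ a) = 0`, satisfying the Leibniz rule; it
preserves total degree and squares to zero -/
def IsDeRham (dd : Omega k s t →ₗ[k] Omega k s t) : Prop :=
  (∀ n i : ℕ, ∀ x ∈ OmegaNI k s t n i, dd x ∈ OmegaNI k s t n (i + 1)) ∧
  (∀ v0 v1, dd (vS k s t v0 v1) = vA k s t v0 v1) ∧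
  (∀ x ∈ Apart k s t, dd x = 0) ∧
  (∀ (i : ℕ) (z : Omega k s t), z ∈ OmegaCoh k s t i →
    ∀ w, dd (z * w) = dd z * w + ((-1 : k) ^ i) • (z * dd w)) ∧
  (∀ x, dd (dd x) = 0)

/-- the Koszul differential `κ` of `Ω(V)`: the unique `k`-linear map of cohomological
degree `-1` with `κ(s ⊗ 1) = 0`, `κ(1 ⊗ v) = v ⊗ 1` for `v ∈ V₀`,
`κ(1 ⊗ γ_N(y)) = (y ⊗ 1)·(1 ⊗ γ_{N-1}(y))` for `y ∈ V₁`, satisfying the Leibniz rule; it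
preserves total degree and squares to zero -/
def IsKoszul (κ : Omega k s t →ₗ[k] Omega k s t) : Prop :=
  (∀ n i : ℕ, ∀ x ∈ OmegaNI k s t n (i + 1), κ x ∈ OmegaNI k s t n i) ∧
  (∀ n : ℕ, ∀ x ∈ OmegaNI k s t n 0, κ x = 0) ∧
  (∀ x ∈ Spart k s t, κ x = 0) ∧
  (∀ v0 : Fin s → k, κ (vA k s t v0 0) = vS k s t v0 0) ∧
  (∀ (w : Fin t → k) (N : ℕ), 1 ≤ N →
    κ (gammaA k s t w N) = vS k s t 0 w * gammaA k s t w (N - 1)) ∧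
  (∀ (i : ℕ) (z : Omega k s t), z ∈ OmegaCoh k s t i →
    ∀ y, κ (z * y) = κ z * y + ((-1 : k) ^ i) • (z * κ y)) ∧
  (∀ x, κ (κ x) = 0)


variable (p : ℕ)

/-- the defining properties of the map `θ` of the super Cartier isomorphism -/
def IsTheta (θ : Omega k s t → Omega k s t) : Prop :=
  (∀ z w, θ (z + w) = θ z + θ w) ∧
  (∀ (c : k) (z : Omega k s t), θ (c • z) = (c ^ p) • θ z) ∧
  (∀ z w, θ (z * w) = θ z * θ w) ∧
  (θ 1 = 1) ∧
  (∀ i : Fin s, θ (Finsupp.single (XS s t i) 1) =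
    Finsupp.single ((Pi.single i p, fun _ => false, fun _ => false, 0) : Mon s t) 1) ∧
  (∀ i : Fin s, θ (Finsupp.single (XA s t i) 1) =
    Finsupp.single
      ((Pi.single i (p - 1), fun _ => false, fun i' => decide (i' = i), 0) : Mon s t) 1) ∧
  (∀ j : Fin t, θ (Finsupp.single (US s t j) 1) =
    Finsupp.single
      ((0, fun j' => decide (j' = j), fun _ => false, Pi.single j (p - 1)) : Mon s t) 1) ∧
  (∀ (j : Fin t) (e : ℕ), θ (Finsupp.single (GA s t j (p ^ e)) 1) =
    Finsupp.single (GA s t j (p ^ (e + 1))) 1)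

/-- the Koszul kernel subcomplex: `K_n(V) = ⊕ᵢ K_n^i(V)` where
`K_n^i(V) = ker(κ : Ω_n^i(V) → Ω_n^{i-1}(V))` -/
noncomputable def Ksub (κ : Omega k s t →ₗ[k] Omega k s t) (n : ℕ) :
    Submodule k (Omega k s t) :=
  ⨆ i : ℕ, (OmegaNI k s t n i ⊓ LinearMap.ker κ)

/-!
Both differentials are sums over the basis vectors `l` of `V` of parts `dₗ`, `κₗ` that only involve
the generators belonging to `l`, and `d κₗ + κₗ d` multiplies a monomial by the multiplicity `w l`
of `l` in it. Where some `w l` is not divisible by `p`, the operator `(w l)⁻¹ κₗ` is therefore a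
contracting homotopy for `d`. Hence `d h + h d = 1 - π`, where `π` projects onto the monomials all
of whose multiplicities are divisible by `p`; moreover `h κ = -κ h`, so that the homotopy restricts
to `ker κ`, and `π d = 0`. The map `θ` multiplies all multiplicities by `p`, commutes with `κ`, and
identifies `Ω(V)` Frobenius-semilinearly with the image of `π`. So the cohomology of `ker κ` is
`π (ker κ) = θ (ker κ)`. Finally `d κ + κ d` is multiplication by `pn = 0` on `Ω_{pn}(V)`, so that
`d` preserves `ker κ` there.
-/

section Coordinates

/-- The indices of the chosen homogeneous basis of `V = V₀ ⊕ V₁`. -/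
abbrev Var (s t : ℕ) : Type := Fin s ⊕ Fin t

/-- The label of a monomial, grouped by basis vector of `V`: every basis vector contributes one
polynomial-type generator (`xᵢ ⊗ 1` or the divided powers of `1 ⊗ yⱼ`), whose exponents form the
first component, and one exterior generator (`1 ⊗ xᵢ` or `yⱼ ⊗ 1`), whose occurrence is recorded by
the second component. -/
abbrev Label (s t : ℕ) : Type := (Var s t → ℕ) × (Var s t → Bool)

/-- The regrouping of the monomial index by basis vectors of `V`. -/
def labelEquiv (s t : ℕ) : Mon s t ≃ Label s t where
  toFun m := (Sum.elim m.1 m.2.2.2, Sum.elim m.2.2.1 m.2.1)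
  invFun a := (a.1 ∘ Sum.inl, a.2 ∘ Sum.inr, a.2 ∘ Sum.inl, a.1 ∘ Sum.inr)
  left_inv _ := rfl
  right_inv a := Prod.ext (Sum.elim_comp_inl_inr a.1) (Sum.elim_comp_inl_inr a.2)

variable {k s t}

lemma labelEquiv_apply (m : Mon s t) :
    labelEquiv s t m = (Sum.elim m.1 m.2.2.2, Sum.elim m.2.2.1 m.2.1) := rfl

lemma labelEquiv_symm_apply (a : Label s t) :
    (labelEquiv s t).symm a = (a.1 ∘ .inl, a.2 ∘ .inr, a.2 ∘ .inl, a.1 ∘ .inr) := rfl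

/-- The multidegree of a monomial with respect to the basis of `V`. -/
def weight (a : Label s t) (l : Var s t) : ℕ := a.1 l + (a.2 l).toNat

lemma cnt_eq_sum {u : ℕ} (b : Fin u → Bool) : cnt b = ∑ i, (b i).toNat := by
  rw [cnt, card_filter]
  exact sum_congr rfl fun i _ => by cases b i <;> rfl

lemma tdeg_eq_sum_weight (m : Mon s t) : tdeg s t m = ∑ l, weight (labelEquiv s t m) l := by
  simp only [tdeg, cdeg, cnt_eq_sum, weight, labelEquiv_apply, Fintype.sum_sum_type,
    Sum.elim_inl, Sum.elim_inr, sum_add_distrib]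
  ring

variable (k s t) in
/-- The monomial basis of `Ω(V)`. -/
noncomputable def mono : Module.Basis (Label s t) k (Omega k s t) :=
  Module.Basis.reindex (Module.Basis.ofRepr (LinearEquiv.refl k (Mon s t →₀ k))) (labelEquiv s t)

lemma mono_labelEquiv (m : Mon s t) :
    mono k s t (labelEquiv s t m) = (Finsupp.single m 1 : Mon s t →₀ k) := by
  simp only [mono, Module.Basis.reindex_apply, Equiv.symm_apply_apply]
  rfl

lemma mono_repr_labelEquiv (x : Omega k s t) (m : Mon s t) :
    (mono k s t).repr x (labelEquiv s t m) = (show Mon s t →₀ k from x) m := by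
  simp only [mono, Module.Basis.repr_reindex_apply, Equiv.symm_apply_apply]
  rfl

end Coordinates

section Operators

variable {s t : ℕ} {k}

/-- Position of an exterior generator in the linear order that fixes the signs: the `1 ⊗ xᵢ` come
first, and then the `yⱼ ⊗ 1` with decreasing `j`. -/
def rank : Var s t → ℕ := Sum.elim (fun i => i) (fun j => s + j.rev)

lemma rank_injective : Function.Injective (rank : Var s t → ℕ) := by
  rintro (i | j) (i' | j') h <;> simp only [rank, Sum.elim_inl, Sum.elim_inr] at h
  · exact congrArg Sum.inl (Fin.ext h)
  · omega
  · omega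
  · exact congrArg Sum.inr (Fin.rev_injective (Fin.ext (by omega)))

variable (k) in
/-- `(-1)` to the number of exterior generators from `S` that occur in `f`. -/
def signOn (S : Finset (Var s t)) (f : Var s t → Bool) : k :=
  ∏ l ∈ S, if f l then -1 else 1

lemma signOn_update_of_mem {S : Finset (Var s t)} {l : Var s t} (hl : l ∈ S)
    (f : Var s t → Bool) : signOn k S (Function.update f l (!f l)) = -signOn k S f := by
  rw [signOn, signOn, ← mul_prod_erase S _ hl, ← mul_prod_erase S _ hl, Function.update_self,
    prod_congr rfl fun l' hl' => by rw [Function.update_of_ne (ne_of_mem_erase hl')]]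
  cases f l <;> simp

lemma signOn_update_of_notMem {S : Finset (Var s t)} {l : Var s t} (hl : l ∉ S)
    (f : Var s t → Bool) (v : Bool) : signOn k S (Function.update f l v) = signOn k S f :=
  prod_congr rfl fun l' hl' => by rw [Function.update_of_ne (ne_of_mem_of_not_mem hl' hl)]

lemma signOn_mul_self (S : Finset (Var s t)) (f : Var s t → Bool) :
    signOn k S f * signOn k S f = 1 := by
  rw [signOn, ← prod_mul_distrib]
  exact prod_eq_one fun l _ => by cases f l <;> simp

variable (k) in
/-- The sign picked up by an exterior generator when it moves to its place in a monomial. -/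
def exteriorSign (f : Var s t → Bool) (l : Var s t) : k :=
  signOn k (univ.filter fun l' => rank l' < rank l) f

variable (k) in
/-- Removes (`v = true`) or inserts (`v = false`) the exterior generator `l`. -/
noncomputable def flipOp (l : Var s t) (v : Bool) : Module.End k (Omega k s t) :=
  (mono k s t).constr k fun a =>
    if a.2 l = v then exteriorSign k a.2 l • mono k s t (a.1, Function.update a.2 l (!v)) else 0

variable (k s t) in
/-- The sign automorphism, multiplying a monomial with `q` exterior generators by `(-1)^q`. -/
noncomputable def parityOp : Module.End k (Omega k s t) :=
  (mono k s t).constr k fun a => signOn k univ a.2 • mono k s t a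

/-- The operator that acts only on the exponent of the polynomial-type generator `l`, through
`r ↦ φ r • σ r`. -/
noncomputable def expOp (l : Var s t) (φ : ℕ → k) (σ : ℕ → ℕ) : Module.End k (Omega k s t) :=
  (mono k s t).constr k fun a => φ (a.1 l) • mono k s t (Function.update a.1 l (σ (a.1 l)), a.2)

lemma flipOp_mono (l : Var s t) (v : Bool) (r : Var s t → ℕ) (f : Var s t → Bool) :
    flipOp k l v (mono k s t (r, f)) =
      if f l = v then exteriorSign k f l • mono k s t (r, Function.update f l (!v)) else 0 :=
  Module.Basis.constr_basis ..

lemma parityOp_mono (r : Var s t → ℕ) (f : Var s t → Bool) :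
    parityOp k s t (mono k s t (r, f)) = signOn k univ f • mono k s t (r, f) :=
  Module.Basis.constr_basis ..

lemma expOp_mono (l : Var s t) (φ : ℕ → k) (σ : ℕ → ℕ) (r : Var s t → ℕ) (f : Var s t → Bool) :
    expOp l φ σ (mono k s t (r, f)) =
      φ (r l) • mono k s t (Function.update r l (σ (r l)), f) :=
  Module.Basis.constr_basis ..

lemma end_ext {A B : Module.End k (Omega k s t)}
    (h : ∀ r f, A (mono k s t (r, f)) = B (mono k s t (r, f))) : A = B :=
  (mono k s t).ext fun a => h a.1 a.2

lemma exteriorSign_update_self (f : Var s t → Bool) (l : Var s t) (v : Bool) :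
    exteriorSign k (Function.update f l v) l = exteriorSign k f l :=
  signOn_update_of_notMem (by simp) f v

lemma exteriorSign_mul_self (f : Var s t → Bool) (l : Var s t) :
    exteriorSign k f l * exteriorSign k f l = 1 := signOn_mul_self _ f

/-- Of two distinct generators exactly one precedes the other, so exactly one sign changes. -/
lemma exteriorSign_mul_update {l l' : Var s t} (h : l ≠ l') (f : Var s t → Bool) :
    exteriorSign k f l' * exteriorSign k (Function.update f l' (!f l')) l =
      -(exteriorSign k f l * exteriorSign k (Function.update f l (!f l)) l') := by
  unfold exteriorSign
  rcases (rank_injective.ne h).lt_or_gt with hlt | hlt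
  · rw [signOn_update_of_notMem (by simp [hlt.le]), signOn_update_of_mem (by simp [hlt])]
    ring
  · rw [signOn_update_of_mem (by simp [hlt]), signOn_update_of_notMem (by simp [hlt.le])]
    ring

lemma flipOp_mul_flipOp_of_ne {l l' : Var s t} (h : l ≠ l') (v v' : Bool) :
    flipOp k l v * flipOp k l' v' = -(flipOp k l' v' * flipOp k l v) := by
  refine end_ext fun r f => ?_
  simp only [Module.End.mul_apply, LinearMap.neg_apply, flipOp_mono]
  by_cases hv : f l = v <;> by_cases hv' : f l' = v' <;>
    simp only [hv, hv', if_true, if_false, map_smul, map_zero, flipOp_mono,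
      Function.update_of_ne h, Function.update_of_ne h.symm, smul_zero, neg_zero]
  subst hv hv'
  rw [smul_smul, smul_smul, exteriorSign_mul_update h, neg_smul, Function.update_comm h]

lemma flipOp_flipOp_not_mono (l : Var s t) (v : Bool) (r : Var s t → ℕ) (f : Var s t → Bool) :
    flipOp k l v (flipOp k l (!v) (mono k s t (r, f))) =
      if f l = !v then mono k s t (r, f) else 0 := by
  rw [flipOp_mono]
  split_ifs with h
  · rw [map_smul, flipOp_mono, if_pos (by simp), smul_smul, exteriorSign_update_self,
      exteriorSign_mul_self, one_smul, Function.update_idem, ← h, Function.update_eq_self]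
  · exact map_zero _

lemma flipOp_mul_self (l : Var s t) (v : Bool) : flipOp k l v * flipOp k l v = 0 := by
  refine end_ext fun r f => ?_
  rw [Module.End.mul_apply, flipOp_mono]
  split_ifs
  · rw [map_smul, flipOp_mono, if_neg (by simp), smul_zero, LinearMap.zero_apply]
  · exact map_zero _

lemma flipOp_mul_parityOp (l : Var s t) (v : Bool) :
    flipOp k l v * parityOp k s t = -(parityOp k s t * flipOp k l v) := by
  refine end_ext fun r f => ?_
  simp only [Module.End.mul_apply, LinearMap.neg_apply, flipOp_mono, parityOp_mono, map_smul]
  split_ifs with h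
  · rw [map_smul, parityOp_mono, ← h, signOn_update_of_mem (mem_univ l), neg_smul, smul_neg,
      neg_neg, smul_comm]
  · simp only [smul_zero, map_zero, neg_zero]

lemma expOp_commute_flipOp (l l' : Var s t) (v : Bool) (φ : ℕ → k) (σ : ℕ → ℕ) :
    Commute (expOp l φ σ) (flipOp k l' v) := by
  refine end_ext fun r f => ?_
  simp only [Module.End.mul_apply, flipOp_mono, expOp_mono, map_smul]
  split_ifs
  · rw [map_smul, expOp_mono, smul_comm]
  · rw [map_zero, smul_zero]

lemma expOp_commute_parityOp (l : Var s t) (φ : ℕ → k) (σ : ℕ → ℕ) :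
    Commute (expOp l φ σ) (parityOp k s t) := by
  refine end_ext fun r f => ?_
  simp only [Module.End.mul_apply, parityOp_mono, expOp_mono, map_smul]
  exact smul_comm ..

lemma expOp_commute_of_ne {l l' : Var s t} (h : l ≠ l') (φ ψ : ℕ → k) (σ τ : ℕ → ℕ) :
    Commute (expOp l φ σ) (expOp l' ψ τ) := by
  refine end_ext fun r f => ?_
  simp only [Module.End.mul_apply, expOp_mono, map_smul, Function.update_of_ne h,
    Function.update_of_ne h.symm]
  rw [smul_comm, Function.update_comm h]

lemma expOp_mul_expOp (l : Var s t) (φ ψ : ℕ → k) (σ τ : ℕ → ℕ) :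
    expOp l φ σ * expOp l ψ τ = expOp l (fun r => ψ r * φ (τ r)) (σ ∘ τ) := by
  refine end_ext fun r f => ?_
  simp only [Module.End.mul_apply, expOp_mono, map_smul, Function.update_self,
    Function.update_idem, smul_smul, Function.comp_apply]

end Operators

section Differentials

variable {s t : ℕ} {k}

/-- Multiplication by the `N`-th power of the polynomial-type generator `l`. -/
noncomputable def shift (l : Var s t) (N : ℕ) : Module.End k (Omega k s t) :=
  expOp l (fun _ => 1) (N + ·)

/-- Multiplication by the `N`-th divided power of the polynomial-type generator `l`. -/
noncomputable def dpow (l : Var s t) (N : ℕ) : Module.End k (Omega k s t) :=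
  expOp l (fun r => ((N + r).choose N : k)) (N + ·)

/-- The partial derivative `∂xʳ = r xʳ⁻¹`. -/
noncomputable def deriv (l : Var s t) : Module.End k (Omega k s t) :=
  expOp l (fun r => (r : k)) (· - 1)

/-- The derivative of divided powers, `γᵣ ↦ γᵣ₋₁`, with `γ₀ ↦ 0`. -/
noncomputable def dpowDeriv (l : Var s t) : Module.End k (Omega k s t) :=
  expOp l (fun r => if r = 0 then 0 else 1) (· - 1)

/-- The part of the de Rham differential that involves the generators of one basis vector. -/
noncomputable def deRhamPart : Var s t → Module.End k (Omega k s t)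
  | .inl i => flipOp k (.inl i) false * deriv (.inl i)
  | .inr j => flipOp k (.inr j) true * dpow (.inr j) 1

/-- The part of the Koszul differential that involves the generators of one basis vector. -/
noncomputable def koszulPart : Var s t → Module.End k (Omega k s t)
  | .inl i => flipOp k (.inl i) true * shift (.inl i) 1
  | .inr j => flipOp k (.inr j) false * dpowDeriv (.inr j)

variable (k s t) in
/-- The de Rham differential in monomial coordinates. -/
noncomputable def deRham : Module.End k (Omega k s t) := ∑ l, deRhamPart l

variable (k s t) in
/-- The Koszul differential in monomial coordinates. -/
noncomputable def koszul : Module.End k (Omega k s t) := ∑ l, koszulPart l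

/-- The operator that multiplies a monomial by a scalar depending on its multidegree. -/
noncomputable def weightScalar (φ : (Var s t → ℕ) → k) : Module.End k (Omega k s t) :=
  (mono k s t).constr k fun a => φ (weight a) • mono k s t a

lemma weightScalar_mono (φ : (Var s t → ℕ) → k) (a : Label s t) :
    weightScalar φ (mono k s t a) = φ (weight a) • mono k s t a :=
  Module.Basis.constr_basis ..

lemma weightScalar_one : weightScalar (fun _ : Var s t → ℕ => (1 : k)) = 1 :=
  (mono k s t).ext fun a => by rw [weightScalar_mono, one_smul, Module.End.one_apply]

lemma weightScalar_mul (φ ψ : (Var s t → ℕ) → k) :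
    weightScalar φ * weightScalar ψ = weightScalar fun w => φ w * ψ w := by
  refine (mono k s t).ext fun a => ?_
  simp only [Module.End.mul_apply, weightScalar_mono, map_smul, smul_smul, mul_comm]

lemma weightScalar_sum {ι : Type*} (S : Finset ι) (φ : ι → (Var s t → ℕ) → k) :
    ∑ l ∈ S, weightScalar (φ l) = weightScalar fun w => ∑ l ∈ S, φ l w := by
  refine (mono k s t).ext fun a => ?_
  simp only [LinearMap.sum_apply, weightScalar_mono, sum_smul]

lemma flipOp_mul_expOp_mul (l l' : Var s t) (v v' : Bool) (φ ψ : ℕ → k) (σ τ : ℕ → ℕ) :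
    flipOp k l v * expOp l φ σ * (flipOp k l' v' * expOp l' ψ τ) =
      flipOp k l v * flipOp k l' v' * (expOp l φ σ * expOp l' ψ τ) :=
  (expOp_commute_flipOp l l' v' φ σ).mul_mul_mul_comm _ _

lemma flipOp_mul_expOp_anticomm {l l' : Var s t} (h : l ≠ l') (v v' : Bool) (φ ψ : ℕ → k)
    (σ τ : ℕ → ℕ) :
    flipOp k l v * expOp l φ σ * (flipOp k l' v' * expOp l' ψ τ) =
      -(flipOp k l' v' * expOp l' ψ τ * (flipOp k l v * expOp l φ σ)) := by
  rw [flipOp_mul_expOp_mul, flipOp_mul_expOp_mul, flipOp_mul_flipOp_of_ne h,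
    (expOp_commute_of_ne h φ ψ σ τ).eq, neg_mul]

lemma flipOp_mul_expOp_mul_self (l : Var s t) (v : Bool) (φ : ℕ → k) (σ : ℕ → ℕ) :
    flipOp k l v * expOp l φ σ * (flipOp k l v * expOp l φ σ) = 0 := by
  rw [flipOp_mul_expOp_mul, flipOp_mul_self, zero_mul]

lemma deRhamPart_mul_koszulPart_of_ne {l l' : Var s t} (h : l' ≠ l) :
    deRhamPart (k := k) l' * koszulPart l + koszulPart l * deRhamPart l' = 0 := by
  rw [add_eq_zero_iff_eq_neg]
  cases l <;> cases l' <;> exact flipOp_mul_expOp_anticomm h ..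

lemma koszulPart_mul_koszulPart (l l' : Var s t) :
    koszulPart (k := k) l' * koszulPart l + koszulPart l * koszulPart l' = 0 := by
  rcases eq_or_ne l' l with rfl | h
  · cases l' <;> simp only [koszulPart, shift, dpowDeriv, flipOp_mul_expOp_mul_self, add_zero]
  · rw [add_eq_zero_iff_eq_neg]
    cases l <;> cases l' <;> exact flipOp_mul_expOp_anticomm h ..

lemma flipOp_mul_expOp_cartan (l : Var s t) (v : Bool) (φ ψ : ℕ → k) (σ τ : ℕ → ℕ)
    (r : Var s t → ℕ) (f : Var s t → Bool) :
    (flipOp k l v * expOp l φ σ * (flipOp k l (!v) * expOp l ψ τ) +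
        flipOp k l (!v) * expOp l ψ τ * (flipOp k l v * expOp l φ σ)) (mono k s t (r, f)) =
      if f l = v then (expOp l ψ τ * expOp l φ σ) (mono k s t (r, f))
      else (expOp l φ σ * expOp l ψ τ) (mono k s t (r, f)) := by
  have hflip (r : Var s t → ℕ) : flipOp k l (!v) (flipOp k l v (mono k s t (r, f))) =
      if f l = v then mono k s t (r, f) else 0 := by
    simpa only [Bool.not_not] using flipOp_flipOp_not_mono l (!v) r f
  rw [flipOp_mul_expOp_mul, flipOp_mul_expOp_mul]
  simp only [LinearMap.add_apply, expOp_mul_expOp, Module.End.mul_apply, expOp_mono, map_smul,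
    flipOp_flipOp_not_mono, hflip]
  by_cases h : f l = v
  · rw [if_neg (by simp [h]), if_pos h, if_pos h, smul_zero, zero_add]
  · rw [if_pos (Bool.eq_not_of_ne h), if_neg h, if_neg h, smul_zero, add_zero]

lemma deRhamPart_mul_koszulPart_self (l : Var s t) :
    deRhamPart l * koszulPart l + koszulPart l * deRhamPart l =
      weightScalar fun w => (w l : k) := by
  refine end_ext fun r f => ?_
  rw [weightScalar_mono]
  rcases l with i | j
  · refine (flipOp_mul_expOp_cartan _ false ..).trans ?_
    rw [expOp_mul_expOp, expOp_mul_expOp, expOp_mono, expOp_mono]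
    cases hf : f (.inl i)
    · rcases eq_or_ne (r (.inl i)) 0 with hr | hr
      · simp [weight, hf, hr]
      · simp [weight, hf, Nat.add_sub_of_le (Nat.one_le_iff_ne_zero.2 hr)]
    · simp [weight, hf, add_comm]
  · refine (flipOp_mul_expOp_cartan _ true ..).trans ?_
    rw [expOp_mul_expOp, expOp_mul_expOp, expOp_mono, expOp_mono]
    cases hf : f (.inr j)
    · rcases eq_or_ne (r (.inr j)) 0 with hr | hr
      · simp [weight, hf, hr]
      · simp [weight, hf, hr, Nat.add_sub_of_le (Nat.one_le_iff_ne_zero.2 hr)]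
    · simp [weight, hf, add_comm]

lemma deRham_mul_koszulPart (l : Var s t) :
    deRham k s t * koszulPart l + koszulPart l * deRham k s t =
      weightScalar fun w => (w l : k) := by
  rw [deRham, sum_mul, mul_sum, ← sum_add_distrib, sum_eq_single l
    (fun l' _ h => deRhamPart_mul_koszulPart_of_ne h) (fun h => absurd (mem_univ l) h),
    deRhamPart_mul_koszulPart_self]

lemma deRham_mul_koszul :
    deRham k s t * koszul k s t + koszul k s t * deRham k s t =
      weightScalar fun w => ∑ l, (w l : k) := by
  rw [koszul, sum_mul, mul_sum, ← sum_add_distrib, ← weightScalar_sum]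
  exact sum_congr rfl fun l _ => deRham_mul_koszulPart l

lemma koszul_mul_koszulPart (l : Var s t) :
    koszul k s t * koszulPart l = -(koszulPart l * koszul k s t) := by
  rw [← add_eq_zero_iff_eq_neg, koszul, sum_mul, mul_sum, ← sum_add_distrib]
  exact sum_eq_zero fun l' _ => koszulPart_mul_koszulPart l l'

lemma weight_update (r : Var s t → ℕ) (f : Var s t → Bool) (l : Var s t) {r' : ℕ} {v : Bool}
    (h : r' + v.toNat = r l + (f l).toNat) :
    weight (Function.update r l r', Function.update f l v) = weight (r, f) := by
  funext l'
  rcases eq_or_ne l' l with rfl | h'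
  · simpa only [weight, Function.update_self] using h
  · simp only [weight, Function.update_of_ne h']

lemma weightScalar_commute_flipOp_mul_expOp (χ : (Var s t → ℕ) → k) (l : Var s t) (v : Bool)
    {φ : ℕ → k} {σ : ℕ → ℕ} (h : ∀ r, φ r ≠ 0 → σ r + (!v).toNat = r + v.toNat) :
    Commute (weightScalar χ) (flipOp k l v * expOp l φ σ) := by
  refine end_ext fun r f => ?_
  simp only [Module.End.mul_apply, weightScalar_mono, expOp_mono, map_smul, flipOp_mono]
  split_ifs with hv
  · by_cases hφ : φ (r l) = 0
    · simp only [hφ, zero_smul, smul_zero]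
    · rw [map_smul, weightScalar_mono, weight_update r f l (hv ▸ h _ hφ), smul_comm (χ _),
        smul_comm (χ _)]
  · simp only [map_zero, smul_zero]

lemma weightScalar_commute_deRhamPart (χ : (Var s t → ℕ) → k) (l : Var s t) :
    Commute (weightScalar χ) (deRhamPart l) := by
  rcases l with i | j
  · refine weightScalar_commute_flipOp_mul_expOp χ _ false fun r hr => ?_
    have : r ≠ 0 := by rintro rfl; exact hr Nat.cast_zero
    simp only [Bool.not_false, Bool.toNat_true, Bool.toNat_false]
    omega
  · exact weightScalar_commute_flipOp_mul_expOp χ _ true fun r _ => add_comm 1 r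

lemma weightScalar_commute_koszulPart (χ : (Var s t → ℕ) → k) (l : Var s t) :
    Commute (weightScalar χ) (koszulPart l) := by
  rcases l with i | j
  · exact weightScalar_commute_flipOp_mul_expOp χ _ true fun r _ => add_comm 1 r
  · refine weightScalar_commute_flipOp_mul_expOp χ _ false fun r hr => ?_
    have : r ≠ 0 := by rintro rfl; exact hr (if_pos rfl)
    simp only [Bool.not_false, Bool.toNat_true, Bool.toNat_false]
    omega

lemma weightScalar_commute_deRham (χ : (Var s t → ℕ) → k) :
    Commute (weightScalar χ) (deRham k s t) :=
  Commute.sum_right _ _ _ fun l _ => weightScalar_commute_deRhamPart χ l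

lemma deRhamPart_mono_eq_zero (l : Var s t) {a : Label s t} (h : (weight a l : k) = 0) :
    deRhamPart l (mono k s t a) = 0 := by
  obtain ⟨r, f⟩ := a
  rcases l with i | j
  · rw [deRhamPart, deriv, Module.End.mul_apply, expOp_mono, map_smul, flipOp_mono]
    split_ifs with hf
    · rw [show (r (.inl i) : k) = 0 by simpa [weight, hf] using h, zero_smul]
    · exact smul_zero _
  · rw [deRhamPart, dpow, Module.End.mul_apply, expOp_mono, map_smul, flipOp_mono]
    split_ifs with hf
    · rw [Nat.choose_one_right, add_comm,
        show ((r (.inr j) + 1 : ℕ) : k) = 0 by simpa [weight, hf] using h, zero_smul]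
    · exact smul_zero _

end Differentials

section Homotopy

variable {s t : ℕ} {k}

variable (k s t) in
/-- The projection of `Ω(V)` onto the multidegrees divisible by `p`. -/
noncomputable def divProj (p : ℕ) : Module.End k (Omega k s t) :=
  weightScalar fun w => if ∀ l, p ∣ w l then 1 else 0

lemma deRham_mul_divProj {p : ℕ} [CharP k p] : deRham k s t * divProj k s t p = 0 := by
  refine (mono k s t).ext fun a => ?_
  rw [Module.End.mul_apply, divProj, weightScalar_mono, map_smul, deRham, LinearMap.sum_apply,
    LinearMap.zero_apply]
  split_ifs with h
  · rw [one_smul, sum_eq_zero fun l _ =>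
      deRhamPart_mono_eq_zero l ((CharP.cast_eq_zero_iff k p _).2 (h l))]
  · exact zero_smul ..

lemma divProj_mul_deRham {p : ℕ} [CharP k p] : divProj k s t p * deRham k s t = 0 :=
  (weightScalar_commute_deRham _).eq.trans deRham_mul_divProj

lemma weightScalar_commute_koszul (χ : (Var s t → ℕ) → k) :
    Commute (weightScalar χ) (koszul k s t) :=
  Commute.sum_right _ _ _ fun l _ => weightScalar_commute_koszulPart χ l

lemma exists_sum_mul_eq_one_sub (p : ℕ) [CharP k p] (w : Var s t → ℕ) :
    ∃ c : Var s t → k, ∑ l, c l * w l = 1 - if ∀ l, p ∣ w l then 1 else 0 := by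
  by_cases h : ∀ l, p ∣ w l
  · exact ⟨0, by simp [h]⟩
  · obtain ⟨l, hl⟩ := not_forall.1 h
    refine ⟨Pi.single l (w l : k)⁻¹, ?_⟩
    rw [Fintype.sum_eq_single l fun l' hl' => by simp [hl'], Pi.single_eq_same,
      inv_mul_cancel₀ ((CharP.cast_eq_zero_iff k p _).not.2 hl), if_neg h, sub_zero]

/-- In a multidegree with an entry `w l` that is invertible in `k`, the operator
`(w l)⁻¹ • koszulPart l` contracts the de Rham complex by the Cartan formula. -/
theorem exists_deRham_homotopy (p : ℕ) [CharP k p] :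
    ∃ h : Module.End k (Omega k s t),
      deRham k s t * h + h * deRham k s t = 1 - divProj k s t p ∧
      koszul k s t * h = -(h * koszul k s t) ∧
      ∀ χ, Commute (weightScalar χ) h := by
  choose c hc using exists_sum_mul_eq_one_sub (k := k) (s := s) (t := t) p
  refine ⟨∑ l, weightScalar (fun w => c w l) * koszulPart l, ?_, ?_, fun χ => ?_⟩
  · have hl (l : Var s t) : deRham k s t * (weightScalar (fun w => c w l) * koszulPart l) +
        weightScalar (fun w => c w l) * koszulPart l * deRham k s t =
          weightScalar fun w => c w l * w l := by
      rw [← mul_assoc, ← (weightScalar_commute_deRham _).eq, mul_assoc, mul_assoc, ← mul_add,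
        deRham_mul_koszulPart, weightScalar_mul]
    rw [mul_sum, sum_mul, ← sum_add_distrib, sum_congr rfl fun l _ => hl l, weightScalar_sum,
      eq_sub_iff_add_eq, ← weightScalar_one]
    refine (mono k s t).ext fun a => ?_
    simp only [divProj, LinearMap.add_apply, weightScalar_mono, ← add_smul, hc, sub_add_cancel]
  · rw [mul_sum, sum_mul, ← sum_neg_distrib]
    refine sum_congr rfl fun l _ => ?_
    rw [← mul_assoc, ← (weightScalar_commute_koszul _).eq, mul_assoc, koszul_mul_koszulPart,
      mul_neg, mul_assoc]
  · refine Commute.sum_right _ _ _ fun l _ =>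
      Commute.mul_right ?_ (weightScalar_commute_koszulPart χ l)
    rw [commute_iff_eq, weightScalar_mul, weightScalar_mul]
    simp only [mul_comm]

lemma mono_repr_weightScalar (φ : (Var s t → ℕ) → k) (x : Omega k s t) (a : Label s t) :
    (mono k s t).repr (weightScalar φ x) a = φ (weight a) * (mono k s t).repr x a := by
  suffices h : (mono k s t).coord a ∘ₗ weightScalar φ = φ (weight a) • (mono k s t).coord a from
    LinearMap.congr_fun h x
  refine (mono k s t).ext fun b => ?_
  rw [LinearMap.comp_apply, weightScalar_mono, map_smul, LinearMap.smul_apply,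
    Module.Basis.coord_apply, Module.Basis.repr_self_apply]
  split_ifs with h
  · rw [h]
  · simp only [smul_zero]

lemma mem_OmegaTot_iff_repr {n : ℕ} {x : Omega k s t} :
    x ∈ OmegaTot k s t n ↔ ∀ a, (mono k s t).repr x a ≠ 0 → ∑ l, weight a l = n := by
  refine (Finsupp.mem_supported' k x).trans ?_
  rw [(labelEquiv s t).symm.forall_congr_left]
  refine forall_congr' fun m => ?_
  rw [Equiv.symm_symm, mono_repr_labelEquiv, ← tdeg_eq_sum_weight]
  exact not_imp_comm

lemma mem_OmegaTot_iff_weightScalar {n : ℕ} {x : Omega k s t} :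
    x ∈ OmegaTot k s t n ↔ weightScalar (fun w => if ∑ l, w l = n then 1 else 0) x = x := by
  rw [mem_OmegaTot_iff_repr, Module.Basis.ext_elem_iff (mono k s t)]
  refine forall_congr' fun a => ?_
  rw [mono_repr_weightScalar]
  split_ifs with h
  · simp only [h, implies_true, one_mul]
  · simp only [h, imp_false, not_not, zero_mul, eq_comm]

lemma mem_OmegaTot_of_commute {A : Module.End k (Omega k s t)}
    (hA : ∀ χ, Commute (weightScalar χ) A) {n : ℕ} {x : Omega k s t}
    (hx : x ∈ OmegaTot k s t n) : A x ∈ OmegaTot k s t n := by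
  rw [mem_OmegaTot_iff_weightScalar] at hx ⊢
  rw [← Module.End.mul_apply, (hA _).eq, Module.End.mul_apply, hx]

lemma deRham_koszul_add_koszul_deRham {n : ℕ} {x : Omega k s t} (hx : x ∈ OmegaTot k s t n) :
    deRham k s t (koszul k s t x) + koszul k s t (deRham k s t x) = (n : k) • x := by
  refine (LinearMap.congr_fun deRham_mul_koszul x).trans ?_
  refine (mono k s t).ext_elem fun a => ?_
  rw [mono_repr_weightScalar, map_smul, Finsupp.smul_apply, smul_eq_mul]
  by_cases h : (mono k s t).repr x a = 0
  · rw [h, mul_zero, mul_zero]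
  · rw [← Nat.cast_sum, mem_OmegaTot_iff_repr.1 hx a h]

end Homotopy

section Products

variable {s t : ℕ} {k}

lemma mono_mul_eq {r₀ : Var s t → ℕ} {f₀ : Var s t → Bool} {A : Module.End k (Omega k s t)}
    (hA : ∀ r f, A (mono k s t (r, f)) =
      mulCoef k s t ((labelEquiv s t).symm (r₀, f₀)) ((labelEquiv s t).symm (r, f)) •
        mono k s t (r₀ + r, fun l => f₀ l || f l)) (x : Omega k s t) :
    mono k s t (r₀, f₀) * x = A x := by
  let m₀ := (labelEquiv s t).symm (r₀, f₀)
  let v (m : Mon s t) : Omega k s t := Finsupp.single (merge s t m₀ m) (mulCoef k s t m₀ m)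
  have hmul : mono k s t (r₀, f₀) * x = Finsupp.linearCombination k v x := by
    rw [← (labelEquiv s t).apply_symm_apply (r₀, f₀), mono_labelEquiv]
    refine Eq.trans (show _ = mulOmega k s t _ _ from rfl) ?_
    unfold mulOmega
    rw [Finsupp.sum_single_index]
    · simp only [one_mul]
      exact Finsupp.sum_congr fun m _ => (Finsupp.smul_single' ..).symm
    · simp only [zero_mul, Finsupp.single_zero]
      exact sum_const_zero
  have hv (r : Var s t → ℕ) (f : Var s t → Bool) : A (mono k s t (r, f)) =
      v ((labelEquiv s t).symm (r, f)) := by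
    have hmerge : labelEquiv s t (merge s t m₀ ((labelEquiv s t).symm (r, f))) =
        (r₀ + r, fun l => f₀ l || f l) := by
      refine Prod.ext ?_ ?_ <;> funext l <;> cases l <;> rfl
    rw [hA, ← hmerge, mono_labelEquiv]
    exact (Finsupp.smul_single' ..).trans (congrArg _ (mul_one _))
  have hAv : A = Finsupp.linearCombination k v := end_ext fun r f => by
    rw [hv, ← (labelEquiv s t).apply_symm_apply (r, f), mono_labelEquiv, Equiv.symm_apply_apply]
    exact ((Finsupp.linearCombination_single ..).trans (one_smul ..)).symm
  exact hmul.trans (LinearMap.congr_fun hAv x).symm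

lemma neg_one_pow_cnt {u : ℕ} (b : Fin u → Bool) :
    (-1 : k) ^ cnt b = ∏ i, if b i then -1 else 1 := by
  rw [cnt, ← prod_const, prod_filter]

lemma invCount_false {u : ℕ} (b : Fin u → Bool) : invCount (fun _ => false) b = 0 := by
  simp [invCount]

lemma neg_one_pow_invCount_decide {u : ℕ} (j : Fin u) (b : Fin u → Bool) :
    (-1 : k) ^ invCount (fun j' => decide (j' = j)) b =
      ∏ j' with j' < j, if b j' then -1 else 1 := by
  have hfilter : ((univ ×ˢ univ).filter fun q : Fin u × Fin u =>
      decide (q.1 = j) = true ∧ b q.2 = true ∧ q.2 < q.1) =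
        {j} ×ˢ ((univ.filter (· < j)).filter fun j' => b j' = true) := by
    ext q
    simp only [mem_filter, mem_product, mem_univ, true_and, mem_singleton, decide_eq_true_eq]
    constructor
    · rintro ⟨rfl, hb, hlt⟩
      exact ⟨rfl, hlt, hb⟩
    · rintro ⟨rfl, hlt, hb⟩
      exact ⟨rfl, hb, hlt⟩
  rw [invCount, hfilter, card_product, card_singleton, one_mul, ← prod_const, prod_filter]

lemma exteriorSign_inl (f : Var s t → Bool) (i : Fin s) :
    exteriorSign k f (.inl i) = ∏ i' with i' < i, if f (.inl i') then -1 else 1 := by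
  have hlt (j : Fin t) : ¬ (s + (j.rev : ℕ) < i) := by omega
  rw [exteriorSign, signOn, prod_filter, prod_filter, Fintype.prod_sum_type]
  simp only [rank, Sum.elim_inl, Sum.elim_inr, hlt, if_false, prod_const_one, mul_one]
  rfl

lemma signOn_univ_mul_exteriorSign_inr {f : Var s t → Bool} {j : Fin t} (hf : f (.inr j) = false) :
    signOn k univ f * exteriorSign k f (.inr j) =
      ∏ j' with j' < j, if f (.inr j') then -1 else 1 := by
  rw [signOn, ← prod_filter_mul_prod_filter_not univ fun l' => rank l' < rank (.inr j : Var s t),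
    mul_right_comm, exteriorSign]
  refine (congrArg (· * _) (signOn_mul_self _ f)).trans ?_
  rw [one_mul, prod_filter, prod_filter, Fintype.prod_sum_type]
  have hlt (i : Fin s) : (i : ℕ) < s + (j.rev : ℕ) := by omega
  simp only [rank, Sum.elim_inl, Sum.elim_inr, hlt, not_true_eq_false, if_false, prod_const_one,
    one_mul]
  refine prod_congr rfl fun j' _ => ?_
  rcases eq_or_ne j' j with rfl | h
  · simp only [hf, Bool.false_eq_true, if_false, ite_self]
  · exact if_congr (by simp [Fin.rev]; omega) rfl rfl

lemma mulCoef_eq (r₀ r : Var s t → ℕ) (f₀ f : Var s t → Bool) :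
    mulCoef k s t ((labelEquiv s t).symm (r₀, f₀)) ((labelEquiv s t).symm (r, f)) =
      if ∃ l, f₀ l = true ∧ f l = true then 0
      else signOn k univ f ^ (∑ j, r₀ (.inr j)) *
        ((-1) ^ invCount (f₀ ∘ .inr) (f ∘ .inr) * (-1) ^ invCount (f₀ ∘ .inl) (f ∘ .inl)) *
          ∏ j, ((r₀ (.inr j) + r (.inr j)).choose (r₀ (.inr j)) : k) := by
  have hsign : signOn k univ f = (-1) ^ (cnt (f ∘ .inr) + cnt (f ∘ .inl)) := by
    rw [signOn, Fintype.prod_sum_type, pow_add, neg_one_pow_cnt, neg_one_pow_cnt, mul_comm]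
    rfl
  rw [mulCoef, hsign, ← pow_mul, ← pow_add, ← pow_add]
  refine if_congr ?_ rfl (congrArg (· * _) (congrArg _ ?_))
  · rw [Sum.exists, or_comm]
    rfl
  · simp only [labelEquiv_symm_apply, parA, parS, Function.comp_apply]
    ring

lemma single_add_eq_update (l : Var s t) (N : ℕ) (r : Var s t → ℕ) :
    Pi.single l N + r = Function.update r l (N + r l) := by
  funext l'
  rcases eq_or_ne l' l with rfl | h
  · simp
  · simp [h]

lemma decide_or_eq_update (l : Var s t) (f : Var s t → Bool) :
    (fun l' => decide (l' = l) || f l') = Function.update f l true := by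
  funext l'
  rcases eq_or_ne l' l with rfl | h
  · simp
  · simp [h]

lemma prod_choose_single_inr (j : Fin t) (N : ℕ) (r : Var s t → ℕ) :
    ∏ j', (((Pi.single (.inr j) N : Var s t → ℕ) (.inr j') + r (.inr j')).choose
      ((Pi.single (.inr j) N : Var s t → ℕ) (.inr j')) : k) = ((N + r (.inr j)).choose N : k) := by
  rw [Fintype.prod_eq_single j fun j' h => ?_, Pi.single_eq_same]
  rw [Pi.single_eq_of_ne (by simpa using h), Nat.choose_zero_right, Nat.cast_one]

lemma sum_single_inr (j : Fin t) (N : ℕ) :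
    ∑ j', (Pi.single (.inr j) N : Var s t → ℕ) (.inr j') = N := by
  rw [Fintype.sum_eq_single j fun j' h => Pi.single_eq_of_ne (by simpa using h) _,
    Pi.single_eq_same]

lemma parityOp_pow_mono (N : ℕ) (r : Var s t → ℕ) (f : Var s t → Bool) :
    (parityOp k s t ^ N) (mono k s t (r, f)) = signOn k univ f ^ N • mono k s t (r, f) := by
  induction N with
  | zero => rw [pow_zero, pow_zero, one_smul, Module.End.one_apply]
  | succ N ih =>
    rw [pow_succ, Module.End.mul_apply, parityOp_mono, map_smul, ih, smul_smul, pow_succ']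

variable (k) in
/-- The monomial `xᵢᴺ ⊗ 1` for `l = .inl i`, and `1 ⊗ γ_N(yⱼ)` for `l = .inr j`. -/
noncomputable def polyGen (l : Var s t) (N : ℕ) : Omega k s t :=
  mono k s t (Pi.single l N, fun _ => false)

variable (k) in
/-- The monomial `xᵢᴺ ⊗ xᵢ` for `l = .inl i`, and `yⱼ ⊗ γ_N(yⱼ)` for `l = .inr j`. -/
noncomputable def extGen (l : Var s t) (N : ℕ) : Omega k s t :=
  mono k s t (Pi.single l N, fun l' => decide (l' = l))

/-- Left multiplication by `xᵢᴺ ⊗ 1`. -/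
noncomputable def mulX (i : Fin s) (N : ℕ) : Module.End k (Omega k s t) := shift (.inl i) N

/-- Left multiplication by `xᵢᴺ ⊗ xᵢ`. -/
noncomputable def mulDX (i : Fin s) (N : ℕ) : Module.End k (Omega k s t) :=
  flipOp k (.inl i) false * shift (.inl i) N

/-- Left multiplication by `yⱼ ⊗ γ_N(yⱼ)`. -/
noncomputable def mulY (j : Fin t) (N : ℕ) : Module.End k (Omega k s t) :=
  flipOp k (.inr j) false * parityOp k s t ^ (N + 1) * dpow (.inr j) N

/-- Left multiplication by `1 ⊗ γ_N(yⱼ)`. -/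
noncomputable def mulGamma (j : Fin t) (N : ℕ) : Module.End k (Omega k s t) :=
  parityOp k s t ^ N * dpow (.inr j) N

lemma polyGen_inl_mul (i : Fin s) (N : ℕ) (x : Omega k s t) :
    polyGen k (.inl i) N * x = mulX i N x := by
  refine mono_mul_eq (fun r f => ?_) x
  rw [mulCoef_eq, mulX, shift, expOp_mono, single_add_eq_update, one_smul]
  simp [Function.comp_def, invCount_false]

lemma extGen_inl_mul (i : Fin s) (N : ℕ) (x : Omega k s t) :
    extGen k (.inl i) N * x = mulDX i N x := by
  refine mono_mul_eq (fun r f => ?_) x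
  rw [mulCoef_eq, mulDX, shift, Module.End.mul_apply, expOp_mono, one_smul, flipOp_mono,
    single_add_eq_update, decide_or_eq_update, exteriorSign_inl]
  cases hf : f (.inl i)
  · simp [Function.comp_def, invCount_false, neg_one_pow_invCount_decide, hf]
  · simp [hf]

lemma polyGen_inr_mul (j : Fin t) (N : ℕ) (x : Omega k s t) :
    polyGen k (.inr j) N * x = mulGamma j N x := by
  refine mono_mul_eq (fun r f => ?_) x
  rw [mulCoef_eq, mulGamma, dpow, Module.End.mul_apply, expOp_mono, map_smul, parityOp_pow_mono,
    single_add_eq_update, prod_choose_single_inr, sum_single_inr]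
  simp [Function.comp_def, invCount_false, smul_smul, mul_comm]

lemma extGen_inr_mul (j : Fin t) (N : ℕ) (x : Omega k s t) :
    extGen k (.inr j) N * x = mulY j N x := by
  refine mono_mul_eq (fun r f => ?_) x
  rw [mulCoef_eq, mulY, dpow, Module.End.mul_apply, Module.End.mul_apply, expOp_mono, map_smul,
    parityOp_pow_mono, map_smul, map_smul, flipOp_mono, single_add_eq_update, decide_or_eq_update,
    prod_choose_single_inr, sum_single_inr]
  cases hf : f (.inr j)
  · have hsign := signOn_univ_mul_exteriorSign_inr (k := k) hf
    simp only [↓reduceIte, Bool.not_false, smul_smul, decide_eq_true_eq, exists_eq_left, hf,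
      Bool.false_eq_true, Function.comp_def, Sum.inr.injEq, neg_one_pow_invCount_decide, ← hsign,
      reduceCtorEq, decide_false, invCount_false, pow_zero, mul_one]
    congr 1
    ring
  · simp [hf]

end Products

section Leibniz

variable {s t : ℕ} {k}

lemma flipOp_mul_flipOp_not (l : Var s t) (v : Bool) :
    flipOp k l v * flipOp k l (!v) = 1 - flipOp k l (!v) * flipOp k l v := by
  rw [eq_sub_iff_add_eq]
  refine end_ext fun r f => ?_
  have h := flipOp_flipOp_not_mono (k := k) l (!v) r f
  rw [Bool.not_not] at h
  rw [LinearMap.add_apply, Module.End.mul_apply, Module.End.mul_apply, flipOp_flipOp_not_mono, h,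
    Module.End.one_apply]
  by_cases hv : f l = v
  · rw [if_neg (by simp [hv]), if_pos hv, zero_add]
  · rw [if_pos (Bool.eq_not_of_ne hv), if_neg hv, add_zero]

lemma flipOp_mul_parityOp_pow (l : Var s t) (v : Bool) (N : ℕ) :
    flipOp k l v * parityOp k s t ^ N = (-1 : k) ^ N • (parityOp k s t ^ N * flipOp k l v) := by
  induction N with
  | zero => simp only [pow_zero, mul_one, one_mul, one_smul]
  | succ N ih =>
    rw [pow_succ, ← mul_assoc, ih, smul_mul_assoc, mul_assoc, flipOp_mul_parityOp, mul_neg,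
      pow_succ (-1 : k), mul_smul, neg_smul, one_smul, mul_assoc]

lemma shift_zero (l : Var s t) : shift l 0 = (1 : Module.End k (Omega k s t)) :=
  end_ext fun r f => by
    rw [shift, expOp_mono, one_smul, zero_add, Function.update_eq_self, Module.End.one_apply]

lemma dpow_zero (l : Var s t) : dpow l 0 = (1 : Module.End k (Omega k s t)) :=
  end_ext fun r f => by
    rw [dpow, expOp_mono, Nat.choose_zero_right, Nat.cast_one, one_smul, zero_add,
      Function.update_eq_self, Module.End.one_apply]

lemma deriv_mul_shift (l : Var s t) :
    deriv l * shift l 1 = (1 : Module.End k (Omega k s t)) + shift l 1 * deriv l := by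
  refine end_ext fun r f => ?_
  rw [deriv, shift, LinearMap.add_apply, expOp_mul_expOp, expOp_mul_expOp, expOp_mono, expOp_mono,
    Module.End.one_apply]
  simp only [Function.comp_apply, Nat.add_sub_cancel_left, Function.update_eq_self, mul_one,
    one_mul, Nat.cast_add, Nat.cast_one, add_smul, one_smul]
  rcases Nat.eq_zero_or_pos (r l) with h | h
  · simp only [h, Nat.cast_zero, zero_smul]
  · rw [Nat.add_sub_of_le h, Function.update_eq_self]

lemma dpowDeriv_mul_dpow (l : Var s t) (N : ℕ) :
    dpowDeriv l * dpow l (N + 1) =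
      (dpow l N + dpow l (N + 1) * dpowDeriv l : Module.End k (Omega k s t)) := by
  refine end_ext fun r f => ?_
  rw [dpowDeriv, dpow, dpow, LinearMap.add_apply, expOp_mul_expOp, expOp_mul_expOp, expOp_mono,
    expOp_mono, expOp_mono]
  obtain h | ⟨q, h⟩ : r l = 0 ∨ ∃ q, r l = q + 1 := by cases r l <;> simp
  · simp [h]
  · simp only [h, Function.comp_apply, Nat.add_sub_cancel, ← add_assoc, Nat.succ_ne_zero, if_false,
      mul_one, one_mul, add_right_comm N 1 q, ← add_smul]
    congr 1
    rw [Nat.choose_succ_succ', Nat.cast_add]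

lemma dpow_commute_dpow (l : Var s t) (M N : ℕ) :
    Commute (dpow l M : Module.End k (Omega k s t)) (dpow l N) := by
  refine end_ext fun r f => ?_
  rw [dpow, dpow, expOp_mul_expOp, expOp_mul_expOp, expOp_mono, expOp_mono]
  simp only [Function.comp_apply, add_left_comm M N (r l)]
  congr 1
  have h₁ := Nat.choose_mul (n := M + (N + r l)) (Nat.le_add_right M N)
  have h₂ := Nat.choose_mul (n := M + (N + r l)) (Nat.le_add_left N M)
  rw [Nat.add_sub_cancel_left, Nat.add_sub_cancel_left] at h₁
  rw [Nat.add_sub_cancel, ← Nat.choose_symm_add, h₁,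
    show M + (N + r l) - N = M + r l by omega] at h₂
  rw [add_left_comm N M (r l), mul_comm, mul_comm (((M + r l).choose M : ℕ) : k)]
  exact_mod_cast congrArg (Nat.cast : ℕ → k) h₂

lemma exists_deRhamPart_eq (l : Var s t) :
    ∃ v φ σ, deRhamPart l = flipOp k l v * expOp l φ σ := by
  cases l <;> exact ⟨_, _, _, rfl⟩

lemma exists_koszulPart_eq (l : Var s t) :
    ∃ v φ σ, koszulPart l = flipOp k l v * expOp l φ σ := by
  cases l <;> exact ⟨_, _, _, rfl⟩

lemma flipOp_mul_expOp_mul_parityOp_pow {l l' : Var s t} {φ ψ : ℕ → k} {σ τ : ℕ → ℕ}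
    (h : Commute (expOp l φ σ) (expOp l' ψ τ)) (v : Bool) (N : ℕ) :
    flipOp k l v * expOp l φ σ * (parityOp k s t ^ N * expOp l' ψ τ) =
      (-1 : k) ^ N • (parityOp k s t ^ N * expOp l' ψ τ * (flipOp k l v * expOp l φ σ)) := by
  rw [((expOp_commute_parityOp l φ σ).pow_right N).mul_mul_mul_comm, flipOp_mul_parityOp_pow,
    (expOp_commute_flipOp l' l v ψ τ).mul_mul_mul_comm, smul_mul_assoc, h.eq]

lemma expOp_commute_flipOp_mul_parityOp (l l' : Var s t) (v : Bool) (φ : ℕ → k) (σ : ℕ → ℕ) :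
    Commute (expOp l φ σ) (flipOp k l' v * parityOp k s t) :=
  (expOp_commute_flipOp l l' v φ σ).mul_right (expOp_commute_parityOp l φ σ)

lemma flipOp_mul_expOp_mul_flipOp {l l' : Var s t} (h : l ≠ l') (v v' : Bool)
    (φ : ℕ → k) (σ : ℕ → ℕ) :
    flipOp k l v * expOp l φ σ * flipOp k l' v' =
      -(flipOp k l' v' * (flipOp k l v * expOp l φ σ)) := by
  rw [mul_assoc, (expOp_commute_flipOp l l' v' φ σ).eq, ← mul_assoc, flipOp_mul_flipOp_of_ne h,
    neg_mul, mul_assoc]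

lemma flipOp_mul_expOp_mul_flipOp_mul_parityOp {l l' : Var s t} (h : l ≠ l') (v v' : Bool)
    (φ : ℕ → k) (σ : ℕ → ℕ) :
    flipOp k l v * expOp l φ σ * (flipOp k l' v' * parityOp k s t) =
      flipOp k l' v' * parityOp k s t * (flipOp k l v * expOp l φ σ) := by
  rw [← mul_assoc, flipOp_mul_expOp_mul_flipOp h, neg_mul, mul_assoc, mul_assoc (flipOp k l v),
    (expOp_commute_parityOp l φ σ).eq, ← mul_assoc (flipOp k l v), flipOp_mul_parityOp, neg_mul,
    mul_neg, neg_neg, mul_assoc, mul_assoc]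

lemma sum_mul_eq_add_mul {D : Var s t → Module.End k (Omega k s t)}
    {M M' B : Module.End k (Omega k s t)} (l₀ : Var s t)
    (h : ∀ l ≠ l₀, D l * M = M' * D l) (h₀ : D l₀ * M = B + M' * D l₀) :
    (∑ l, D l) * M = B + M' * ∑ l, D l := by
  rw [sum_mul, mul_sum, ← add_sum_erase _ _ (mem_univ l₀),
    ← add_sum_erase univ (fun l => M' * D l) (mem_univ l₀), h₀, add_assoc,
    sum_congr rfl fun l hl => h l (ne_of_mem_erase hl)]

lemma mulY_zero (j : Fin t) :
    mulY j 0 = flipOp k (.inr j : Var s t) false * parityOp k s t := by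
  rw [mulY, dpow_zero, mul_one, zero_add, pow_one]

lemma mulDX_zero (i : Fin s) : mulDX i 0 = flipOp k (.inl i : Var s t) false := by
  rw [mulDX, shift_zero, mul_one]

lemma deRham_mul_mulX (i : Fin s) :
    deRham k s t * mulX i 1 = mulDX i 0 + mulX i 1 * deRham k s t := by
  rw [mulX, mulDX_zero]
  refine sum_mul_eq_add_mul (.inl i) (fun l hl => ?_) ?_
  · obtain ⟨v, φ, σ, h⟩ := exists_deRhamPart_eq (k := k) l
    rw [h, shift]
    exact ((expOp_commute_flipOp ..).symm.mul_left (expOp_commute_of_ne hl ..)).eq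
  · rw [deRhamPart, mul_assoc, deriv_mul_shift, mul_add, mul_one, ← mul_assoc, ← mul_assoc, shift,
      (expOp_commute_flipOp _ _ _ _ _).eq]

lemma deRham_mul_mulGamma (j : Fin t) (N : ℕ) :
    deRham k s t * mulGamma j N = (-1 : k) ^ N • mulGamma j N * deRham k s t := by
  rw [deRham, sum_mul, mul_sum]
  refine sum_congr rfl fun l _ => ?_
  rw [smul_mul_assoc]
  rcases eq_or_ne l (.inr j) with rfl | hl
  · exact flipOp_mul_expOp_mul_parityOp_pow (dpow_commute_dpow _ 1 N) true N
  · obtain ⟨v, φ, σ, h⟩ := exists_deRhamPart_eq (k := k) l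
    rw [h, mulGamma, dpow, flipOp_mul_expOp_mul_parityOp_pow (expOp_commute_of_ne hl ..)]

lemma deRham_mul_mulDX (i : Fin s) :
    deRham k s t * mulDX i 0 = -mulDX i 0 * deRham k s t := by
  rw [deRham, mulDX_zero, sum_mul, mul_sum]
  refine sum_congr rfl fun l _ => ?_
  rw [neg_mul]
  rcases eq_or_ne l (.inl i) with rfl | hl
  · rw [deRhamPart, deriv, mul_assoc, (expOp_commute_flipOp _ _ _ _ _).eq, ← mul_assoc,
      flipOp_mul_self, zero_mul, neg_zero]
  · obtain ⟨v, φ, σ, h⟩ := exists_deRhamPart_eq (k := k) l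
    rw [h, flipOp_mul_expOp_mul_flipOp hl]

lemma deRham_mul_mulY (j : Fin t) :
    deRham k s t * mulY j 0 = mulGamma j 1 + mulY j 0 * deRham k s t := by
  rw [mulY_zero, mulGamma, pow_one]
  refine sum_mul_eq_add_mul (.inr j) (fun l hl => ?_) ?_
  · obtain ⟨v, φ, σ, h⟩ := exists_deRhamPart_eq (k := k) l
    rw [h, flipOp_mul_expOp_mul_flipOp_mul_parityOp hl]
  · have hflip := flipOp_mul_flipOp_not (k := k) (.inr j : Var s t) true
    rw [Bool.not_true] at hflip
    rw [deRhamPart, dpow, mul_assoc,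
      (expOp_commute_flipOp_mul_parityOp _ (.inr j) false _ _).eq, ← mul_assoc, ← mul_assoc, hflip,
      sub_mul, sub_mul, one_mul, sub_eq_add_neg, mul_assoc (flipOp k (.inr j) false),
      flipOp_mul_parityOp, mul_neg, neg_mul, neg_neg, ← mul_assoc, mul_assoc]

lemma koszul_commute_mulX (i : Fin s) : Commute (koszul k s t) (mulX i 1) := by
  rw [mulX, shift]
  refine Commute.sum_left _ _ _ fun l _ => ?_
  rcases eq_or_ne l (.inl i) with rfl | hl
  · rw [koszulPart, shift]
    exact (expOp_commute_flipOp ..).symm.mul_left (.refl _)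
  · obtain ⟨v, φ, σ, h⟩ := exists_koszulPart_eq (k := k) l
    rw [h]
    exact (expOp_commute_flipOp ..).symm.mul_left (expOp_commute_of_ne hl ..)

lemma koszul_commute_mulY (j : Fin t) : Commute (koszul k s t) (mulY j 0) := by
  rw [mulY_zero]
  refine Commute.sum_left _ _ _ fun l _ => ?_
  rcases eq_or_ne l (.inr j) with rfl | hl
  · rw [commute_iff_eq, koszulPart, dpowDeriv, mul_assoc,
      (expOp_commute_flipOp_mul_parityOp _ (.inr j) false _ _).eq, ← mul_assoc, ← mul_assoc,
      flipOp_mul_self, zero_mul, zero_mul, flipOp_mul_parityOp, neg_mul, mul_assoc,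
      ← mul_assoc (flipOp k _ _), flipOp_mul_self, zero_mul, mul_zero, neg_zero]
  · obtain ⟨v, φ, σ, h⟩ := exists_koszulPart_eq (k := k) l
    rw [commute_iff_eq, h, flipOp_mul_expOp_mul_flipOp_mul_parityOp hl]

lemma koszul_mul_mulDX (i : Fin s) :
    koszul k s t * mulDX i 0 = mulX i 1 + -mulDX i 0 * koszul k s t := by
  rw [mulDX_zero, mulX]
  refine sum_mul_eq_add_mul (.inl i) (fun l hl => ?_) ?_
  · obtain ⟨v, φ, σ, h⟩ := exists_koszulPart_eq (k := k) l
    rw [h, flipOp_mul_expOp_mul_flipOp hl, neg_mul]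
  · have hflip := flipOp_mul_flipOp_not (k := k) (.inl i : Var s t) true
    rw [Bool.not_true] at hflip
    rw [koszulPart, shift, mul_assoc, (expOp_commute_flipOp _ _ _ _ _).eq, ← mul_assoc, hflip,
      sub_mul, one_mul, sub_eq_add_neg, mul_assoc, neg_mul]

lemma koszul_mul_mulGamma (j : Fin t) (N : ℕ) :
    koszul k s t * mulGamma j (N + 1) =
      mulY j N + (-1 : k) ^ (N + 1) • mulGamma j (N + 1) * koszul k s t := by
  refine sum_mul_eq_add_mul (.inr j) (fun l hl => ?_) ?_
  · obtain ⟨v, φ, σ, h⟩ := exists_koszulPart_eq (k := k) l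
    rw [h, mulGamma, dpow, flipOp_mul_expOp_mul_parityOp_pow (expOp_commute_of_ne hl ..),
      smul_mul_assoc]
  · rw [koszulPart, mulGamma, mulY, dpowDeriv,
      ((expOp_commute_parityOp _ _ _).pow_right _).mul_mul_mul_comm, ← dpowDeriv,
      dpowDeriv_mul_dpow, mul_add]
    congr 1
    rw [flipOp_mul_parityOp_pow, smul_mul_assoc, smul_mul_assoc, dpow,
      (expOp_commute_flipOp _ (.inr j) false _ _).mul_mul_mul_comm]

end Leibniz

section Generators

variable {s t : ℕ} {k}

lemma one_eq_mono : (1 : Omega k s t) = mono k s t (0, fun _ => false) := by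
  have h : labelEquiv s t (unitMon s t) = (0, fun _ => false) := by
    refine Prod.ext ?_ ?_ <;> funext l <;> cases l <;> rfl
  rw [← h, mono_labelEquiv]
  rfl

lemma sum_weight_update_lt {r : Var s t → ℕ} {f : Var s t → Bool} {l : Var s t} {r' : ℕ} {v : Bool}
    (h : r' + v.toNat < r l + (f l).toNat) :
    ∑ l', weight (Function.update r l r', Function.update f l v) l' < ∑ l', weight (r, f) l' := by
  refine sum_lt_sum (fun l' _ => ?_) ⟨l, mem_univ l, ?_⟩
  · rcases eq_or_ne l' l with rfl | h'
    · simpa only [weight, Function.update_self] using h.le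
    · simp only [weight, Function.update_of_ne h', le_refl]
  · simpa only [weight, Function.update_self] using h

lemma sum_weight_update_exponent_lt {r : Var s t → ℕ} {l : Var s t} {r' : ℕ} (h : r' < r l)
    (f : Var s t → Bool) :
    ∑ l', weight (Function.update r l r', f) l' < ∑ l', weight (r, f) l' := by
  have hlt := sum_weight_update_lt (f := f) (v := f l) (add_lt_add_left h _)
  rwa [Function.update_eq_self] at hlt

lemma sum_weight_update_flag_lt {f : Var s t → Bool} {l : Var s t} (h : f l = true)
    (r : Var s t → ℕ) :
    ∑ l', weight (r, Function.update f l false) l' < ∑ l', weight (r, f) l' := by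
  have hlt := sum_weight_update_lt (r := r) (r' := r l) (f := f) (l := l) (v := false)
    (by simp [h])
  rwa [Function.update_eq_self] at hlt

lemma mulX_mono_update {r : Var s t → ℕ} {i : Fin s} (h : r (.inl i) ≠ 0) (f : Var s t → Bool) :
    mulX i 1 (mono k s t (Function.update r (.inl i) (r (.inl i) - 1), f)) = mono k s t (r, f) := by
  rw [mulX, shift, expOp_mono, one_smul, Function.update_self, Function.update_idem,
    Nat.add_sub_of_le (Nat.one_le_iff_ne_zero.2 h), Function.update_eq_self]

lemma mulGamma_mono_update (j : Fin t) (r : Var s t → ℕ) (f : Var s t → Bool) :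
    mulGamma j (r (.inr j)) (mono k s t (Function.update r (.inr j) 0, f)) =
      signOn k univ f ^ r (.inr j) • mono k s t (r, f) := by
  rw [mulGamma, dpow, Module.End.mul_apply, expOp_mono, Function.update_self, add_zero,
    Nat.choose_self, Nat.cast_one, one_smul, Function.update_idem, Function.update_eq_self,
    parityOp_pow_mono]

lemma flipOp_mono_update {f : Var s t → Bool} {l : Var s t} (h : f l = true) (r : Var s t → ℕ) :
    flipOp k l false (mono k s t (r, Function.update f l false)) =
      exteriorSign k f l • mono k s t (r, f) := by
  rw [flipOp_mono, if_pos (Function.update_self ..), exteriorSign_update_self, Bool.not_false,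
    Function.update_idem, ← h, Function.update_eq_self]

theorem Omega_induction {P : Omega k s t → Prop} (one : P 1)
    (add : ∀ x y, P x → P y → P (x + y)) (smul : ∀ (c : k) x, P x → P (c • x))
    (mulX : ∀ i x, P x → P (mulX i 1 x)) (mulDX : ∀ i x, P x → P (mulDX i 0 x))
    (mulY : ∀ j x, P x → P (mulY j 0 x)) (mulGamma : ∀ j N x, P x → P (mulGamma j N x))
    (x : Omega k s t) : P x := by
  have of_smul {c : k} {x : Omega k s t} (hc : c * c = 1) (h : P (c • x)) : P x := by
    simpa only [smul_smul, hc, one_smul] using smul c _ h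
  have mono_mem (a : Label s t) : P (mono k s t a) := by
    induction hn : ∑ l, weight a l using Nat.strong_induction_on generalizing a with | _ n ih
    obtain ⟨r, f⟩ := a
    subst hn
    by_cases hf : ∃ l, f l = true
    · obtain ⟨i | j, hl⟩ := hf
      · refine of_smul (exteriorSign_mul_self f (.inl i)) ?_
        rw [← flipOp_mono_update hl, ← mulDX_zero]
        exact mulDX i _ (ih _ (sum_weight_update_flag_lt hl r) _ rfl)
      · refine of_smul (exteriorSign_mul_self f (.inr j)) (of_smul (signOn_mul_self univ
          (Function.update f (.inr j) false)) ?_)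
        rw [← flipOp_mono_update hl, ← map_smul, ← parityOp_mono, ← Module.End.mul_apply,
          ← mulY_zero]
        exact mulY j _ (ih _ (sum_weight_update_flag_lt hl r) _ rfl)
    by_cases hr : ∃ l, r l ≠ 0
    · obtain ⟨i | j, hl⟩ := hr
      · rw [← mulX_mono_update hl]
        exact mulX i _ (ih _ (sum_weight_update_exponent_lt (Nat.sub_one_lt hl) f) _ rfl)
      · refine of_smul (c := signOn k univ f ^ r (.inr j)) ?_ ?_
        · rw [← mul_pow, signOn_mul_self, one_pow]
        · rw [← mulGamma_mono_update]
          exact mulGamma j _ _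
            (ih _ (sum_weight_update_exponent_lt (Nat.pos_of_ne_zero hl) f) _ rfl)
    · push Not at hf hr
      convert one
      rw [one_eq_mono]
      exact congrArg _ (Prod.ext (funext hr) (funext fun l => by simpa using hf l))
  refine Submodule.span_induction (p := fun x _ => P x) ?_ ?_ (fun x y _ _ => add x y)
    (fun c x _ => smul c x) ((mono k s t).mem_span x)
  · rintro _ ⟨a, rfl⟩
    exact mono_mem a
  · simpa only [zero_smul] using smul 0 _ one

lemma polyGen_inl (i : Fin s) (N : ℕ) : polyGen k (.inl i) N =
    (Finsupp.single ((Pi.single i N, fun _ => false, fun _ => false, 0) : Mon s t) 1 :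
      Mon s t →₀ k) := by
  rw [← mono_labelEquiv, polyGen, labelEquiv_apply]
  exact congrArg _ (Prod.ext (Sum.elim_single_zero ..).symm (by funext l; cases l <;> rfl))

lemma polyGen_inr (j : Fin t) (N : ℕ) :
    polyGen k (.inr j) N = (Finsupp.single (GA s t j N) 1 : Mon s t →₀ k) := by
  rw [← mono_labelEquiv, polyGen, labelEquiv_apply]
  exact congrArg _ (Prod.ext (Sum.elim_zero_single ..).symm (by funext l; cases l <;> rfl))

lemma extGen_inl (i : Fin s) (N : ℕ) : extGen k (.inl i) N =
    (Finsupp.single ((Pi.single i N, fun _ => false, fun i' => decide (i' = i), 0) : Mon s t) 1 :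
      Mon s t →₀ k) := by
  rw [← mono_labelEquiv, extGen, labelEquiv_apply]
  exact congrArg _ (Prod.ext (Sum.elim_single_zero ..).symm (by funext l; cases l <;> simp))

lemma extGen_inr (j : Fin t) (N : ℕ) : extGen k (.inr j) N =
    (Finsupp.single ((0, fun j' => decide (j' = j), fun _ => false, Pi.single j N) : Mon s t) 1 :
      Mon s t →₀ k) := by
  rw [← mono_labelEquiv, extGen, labelEquiv_apply]
  exact congrArg _ (Prod.ext (Sum.elim_zero_single ..).symm (by funext l; cases l <;> simp))

lemma XS_single (i : Fin s) :
    (Finsupp.single (XS s t i) 1 : Mon s t →₀ k) = polyGen k (.inl i) 1 :=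
  (polyGen_inl i 1).symm

lemma XA_single (i : Fin s) :
    (Finsupp.single (XA s t i) 1 : Mon s t →₀ k) = extGen k (.inl i) 0 := by
  rw [extGen_inl, Pi.single_zero]
  rfl

lemma US_single (j : Fin t) :
    (Finsupp.single (US s t j) 1 : Mon s t →₀ k) = extGen k (.inr j) 0 := by
  rw [extGen_inr, Pi.single_zero]
  rfl

lemma sum_single_pi_single {u : ℕ} (g : Fin u → Mon s t) (i : Fin u) :
    ∑ i', (Finsupp.single (g i') ((Pi.single i 1 : Fin u → k) i') : Mon s t →₀ k) =
      Finsupp.single (g i) 1 := by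
  rw [Fintype.sum_eq_single i fun i' h => by rw [Pi.single_eq_of_ne h, Finsupp.single_zero],
    Pi.single_eq_same]

lemma sum_single_zero {u : ℕ} (g : Fin u → Mon s t) :
    ∑ i', (Finsupp.single (g i') ((0 : Fin u → k) i') : Mon s t →₀ k) = 0 :=
  sum_eq_zero fun _ _ => Finsupp.single_zero _

lemma vS_single_zero (i : Fin s) : vS k s t (Pi.single i 1) 0 = polyGen k (.inl i) 1 := by
  refine Eq.trans (congrArg₂ (· + ·) (sum_single_pi_single _ i) (sum_single_zero _)) ?_
  exact (add_zero _).trans (XS_single i)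

lemma vA_single_zero (i : Fin s) : vA k s t (Pi.single i 1) 0 = extGen k (.inl i) 0 := by
  refine Eq.trans (congrArg₂ (· + ·) (sum_single_pi_single _ i) (sum_single_zero _)) ?_
  exact (add_zero _).trans (XA_single i)

lemma vS_zero_single (j : Fin t) : vS k s t 0 (Pi.single j 1) = extGen k (.inr j) 0 := by
  refine Eq.trans (congrArg₂ (· + ·) (sum_single_zero _) (sum_single_pi_single _ j)) ?_
  exact (zero_add _).trans (US_single j)

lemma vA_zero_single (j : Fin t) : vA k s t 0 (Pi.single j 1) = polyGen k (.inr j) 1 := by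
  refine Eq.trans (congrArg₂ (· + ·) (sum_single_zero _) (sum_single_pi_single _ j)) ?_
  exact (zero_add _).trans (polyGen_inr j 1).symm

lemma gammaA_single (j : Fin t) (N : ℕ) :
    gammaA k s t (Pi.single j 1) N = polyGen k (.inr j) N := by
  rw [gammaA, polyGen_inr]
  refine (sum_eq_single (Pi.single j N) (fun e he hne => ?_) fun h => ?_).trans ?_
  · obtain ⟨j', hj', he'⟩ : ∃ j' ≠ j, e j' ≠ 0 := by
      by_contra! h
      refine hne (funext fun j' => ?_)
      rcases eq_or_ne j' j with rfl | hj'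
      · rw [Pi.single_eq_same, ← Nat.mem_antidiagonalTuple.1 he,
          Fintype.sum_eq_single j' fun j'' hj'' => h j'' hj'']
      · rw [h j' hj', Pi.single_eq_of_ne hj']
    rw [prod_eq_zero (mem_univ j') (by rw [Pi.single_eq_of_ne hj', zero_pow he'])]
    exact Finsupp.single_zero _
  · exact absurd (Finset.Nat.mem_antidiagonalTuple.2 (by simp)) h
  · rw [prod_eq_one fun j' _ => ?_]
    · rfl
    · rcases eq_or_ne j' j with rfl | hj'
      · rw [Pi.single_eq_same, one_pow]
      · rw [Pi.single_eq_of_ne (M := fun _ => ℕ) hj', pow_zero]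

end Generators

section Uniqueness

variable {s t : ℕ} {k}

lemma single_mem_OmegaCoh {m : Mon s t} {i : ℕ} (h : cdeg s t m = i) :
    (Finsupp.single m 1 : Mon s t →₀ k) ∈ OmegaCoh k s t i :=
  Finsupp.single_mem_supported k 1 h

lemma polyGen_inl_mem_OmegaCoh (i : Fin s) (N : ℕ) :
    polyGen k (.inl i) N ∈ OmegaCoh k s t 0 := by
  rw [polyGen_inl]
  exact single_mem_OmegaCoh (by simp [cdeg, cnt])

lemma extGen_inr_mem_OmegaCoh (j : Fin t) : extGen k (.inr j) 0 ∈ OmegaCoh k s t 0 := by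
  rw [← US_single]
  exact single_mem_OmegaCoh (by simp [cdeg, cnt, US])

lemma extGen_inl_mem_OmegaCoh (i : Fin s) : extGen k (.inl i) 0 ∈ OmegaCoh k s t 1 := by
  rw [← XA_single]
  exact single_mem_OmegaCoh (by simp [cdeg, cnt, XA, filter_eq'])

lemma polyGen_inr_mem_OmegaCoh (j : Fin t) (N : ℕ) :
    polyGen k (.inr j) N ∈ OmegaCoh k s t N := by
  rw [polyGen_inr]
  exact single_mem_OmegaCoh (by simp [cdeg, cnt, GA])

lemma extGen_inl_mem_Apart (i : Fin s) : extGen k (.inl i) 0 ∈ Apart k s t := by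
  rw [← XA_single]
  exact Finsupp.single_mem_supported k 1 ⟨rfl, rfl⟩

lemma polyGen_inr_mem_Apart (j : Fin t) (N : ℕ) : polyGen k (.inr j) N ∈ Apart k s t := by
  rw [polyGen_inr]
  exact Finsupp.single_mem_supported k 1 ⟨rfl, rfl⟩

lemma polyGen_inl_mem_Spart (i : Fin s) (N : ℕ) : polyGen k (.inl i) N ∈ Spart k s t := by
  rw [polyGen_inl]
  exact Finsupp.single_mem_supported k 1 ⟨rfl, rfl⟩

lemma extGen_inr_mem_Spart (j : Fin t) : extGen k (.inr j) 0 ∈ Spart k s t := by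
  rw [← US_single]
  exact Finsupp.single_mem_supported k 1 ⟨rfl, rfl⟩

lemma one_mem_Apart : (1 : Omega k s t) ∈ Apart k s t :=
  Finsupp.single_mem_supported k 1 ⟨rfl, rfl⟩

lemma one_mem_Spart : (1 : Omega k s t) ∈ Spart k s t :=
  Finsupp.single_mem_supported k 1 ⟨rfl, rfl⟩

lemma deRham_one : deRham k s t 1 = 0 := by
  rw [one_eq_mono, deRham, LinearMap.sum_apply]
  exact sum_eq_zero fun l _ => deRhamPart_mono_eq_zero l (by simp [weight])

lemma koszul_one : koszul k s t 1 = 0 := by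
  rw [one_eq_mono, koszul, LinearMap.sum_apply]
  refine sum_eq_zero fun l _ => ?_
  rcases l with i | j
  · rw [koszulPart, shift, Module.End.mul_apply, expOp_mono, map_smul, flipOp_mono,
      if_neg (by simp), smul_zero]
  · rw [koszulPart, dpowDeriv, Module.End.mul_apply, expOp_mono, if_pos (Pi.zero_apply _),
      zero_smul, map_zero]

lemma Omega_zero_mul (x : Omega k s t) : 0 * x = 0 :=
  Eq.trans (show _ = mulOmega k s t _ _ from rfl) Finsupp.sum_zero_index

theorem IsDeRham.eq_deRham {d : Omega k s t →ₗ[k] Omega k s t} (hd : IsDeRham k s t d) :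
    d = deRham k s t := by
  obtain ⟨-, hvS, hA, hleib, -⟩ := hd
  refine LinearMap.ext fun x => ?_
  induction x using Omega_induction with
  | one => rw [hA 1 one_mem_Apart, deRham_one]
  | add x y hx hy => rw [map_add, map_add, hx, hy]
  | smul c x hx => rw [map_smul, map_smul, hx]
  | mulX i x hx =>
    rw [← polyGen_inl_mul, hleib 0 _ (polyGen_inl_mem_OmegaCoh i 1), hx, ← vS_single_zero, hvS,
      vA_single_zero, vS_single_zero, extGen_inl_mul, polyGen_inl_mul, polyGen_inl_mul, pow_zero,
      one_smul]
    exact (LinearMap.congr_fun (deRham_mul_mulX i) x).symm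
  | mulDX i x hx =>
    rw [← extGen_inl_mul, hleib 1 _ (extGen_inl_mem_OmegaCoh i), hx, hA _ (extGen_inl_mem_Apart i),
      Omega_zero_mul, zero_add, extGen_inl_mul, extGen_inl_mul, pow_one, neg_one_smul]
    exact (LinearMap.congr_fun (deRham_mul_mulDX i) x).symm
  | mulY j x hx =>
    rw [← extGen_inr_mul, hleib 0 _ (extGen_inr_mem_OmegaCoh j), hx, ← vS_zero_single, hvS,
      vA_zero_single, vS_zero_single, polyGen_inr_mul, extGen_inr_mul, extGen_inr_mul, pow_zero,
      one_smul]
    exact (LinearMap.congr_fun (deRham_mul_mulY j) x).symm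
  | mulGamma j N x hx =>
    rw [← polyGen_inr_mul, hleib N _ (polyGen_inr_mem_OmegaCoh j N), hx,
      hA _ (polyGen_inr_mem_Apart j N), Omega_zero_mul, zero_add, polyGen_inr_mul, polyGen_inr_mul]
    exact (LinearMap.congr_fun (deRham_mul_mulGamma j N) x).symm

lemma extGen_mul_polyGen (j : Fin t) (N : ℕ) :
    extGen k (.inr j) 0 * polyGen k (.inr j) N = extGen k (.inr j : Var s t) N := by
  have hsign (S : Finset (Var s t)) : signOn k S (fun _ => false) = 1 := by simp [signOn]
  rw [extGen_inr_mul, mulY_zero, polyGen, extGen, Module.End.mul_apply, parityOp_mono, map_smul,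
    flipOp_mono, if_pos rfl, exteriorSign, hsign, hsign, one_smul, one_smul, Bool.not_false,
    ← decide_or_eq_update]
  simp only [Bool.or_false]

theorem IsKoszul.eq_koszul {κ : Omega k s t →ₗ[k] Omega k s t} (hκ : IsKoszul k s t κ) :
    κ = koszul k s t := by
  obtain ⟨-, -, hS, hvA, hgamma, hleib, -⟩ := hκ
  refine LinearMap.ext fun x => ?_
  induction x using Omega_induction with
  | one => rw [hS 1 one_mem_Spart, koszul_one]
  | add x y hx hy => rw [map_add, map_add, hx, hy]
  | smul c x hx => rw [map_smul, map_smul, hx]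
  | mulX i x hx =>
    rw [← polyGen_inl_mul, hleib 0 _ (polyGen_inl_mem_OmegaCoh i 1), hx,
      hS _ (polyGen_inl_mem_Spart i 1), Omega_zero_mul, zero_add, polyGen_inl_mul, polyGen_inl_mul,
      pow_zero, one_smul]
    exact (LinearMap.congr_fun (koszul_commute_mulX i).eq x).symm
  | mulDX i x hx =>
    rw [← extGen_inl_mul, hleib 1 _ (extGen_inl_mem_OmegaCoh i), hx, ← vA_single_zero, hvA,
      vS_single_zero, vA_single_zero, polyGen_inl_mul, extGen_inl_mul, extGen_inl_mul, pow_one,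
      neg_one_smul]
    exact (LinearMap.congr_fun (koszul_mul_mulDX i) x).symm
  | mulY j x hx =>
    rw [← extGen_inr_mul, hleib 0 _ (extGen_inr_mem_OmegaCoh j), hx,
      hS _ (extGen_inr_mem_Spart j), Omega_zero_mul, zero_add, extGen_inr_mul, extGen_inr_mul,
      pow_zero, one_smul]
    exact (LinearMap.congr_fun (koszul_commute_mulY j).eq x).symm
  | mulGamma j N x hx =>
    rcases N with _ | N
    · rwa [mulGamma, pow_zero, one_mul, dpow_zero, Module.End.one_apply]
    · rw [← polyGen_inr_mul, hleib (N + 1) _ (polyGen_inr_mem_OmegaCoh j _), hx, ← gammaA_single,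
        hgamma _ _ N.succ_pos, Nat.succ_sub_one, gammaA_single, gammaA_single, vS_zero_single,
        extGen_mul_polyGen, extGen_inr_mul, polyGen_inr_mul, polyGen_inr_mul]
      exact (LinearMap.congr_fun (koszul_mul_mulGamma j N) x).symm

end Uniqueness

section Cartier

variable {s t : ℕ} {k} {p : ℕ}

/-- The effect of `θ` on labels of monomials: multiplication of the multidegree by `p`, with the
exterior generators left in place. -/
def frobLabel (p : ℕ) (a : Label s t) : Label s t :=
  (fun l => p * a.1 l + (p - 1) * (a.2 l).toNat, a.2)

lemma weight_frobLabel (hp : 0 < p) (a : Label s t) (l : Var s t) :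
    weight (frobLabel p a) l = p * weight a l := by
  rw [weight, weight, frobLabel, mul_add, add_assoc, ← Nat.succ_mul, Nat.succ_eq_add_one,
    Nat.sub_add_cancel hp]

lemma frobLabel_injective (hp : 0 < p) : Function.Injective (frobLabel p : Label s t → _) := by
  intro a b h
  have hf : a.2 = b.2 := (Prod.ext_iff.1 h).2
  refine Prod.ext (funext fun l => ?_) hf
  have hl := congrFun (Prod.ext_iff.1 h).1 l
  simp only [frobLabel, hf, Nat.add_right_cancel_iff] at hl
  exact Nat.eq_of_mul_eq_mul_left hp hl

lemma exists_frobLabel_eq (hp : 0 < p) {a : Label s t} (h : ∀ l, p ∣ weight a l) :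
    ∃ b, frobLabel p b = a := by
  refine ⟨(fun l => a.1 l / p, a.2), Prod.ext (funext fun l => ?_) rfl⟩
  obtain ⟨c, hc⟩ := h l
  rw [weight] at hc
  change p * (a.1 l / p) + (p - 1) * (a.2 l).toNat = a.1 l
  cases hf : a.2 l
  · rw [hf, Bool.toNat_false, add_zero] at hc
    rw [Bool.toNat_false, mul_zero, add_zero, hc, Nat.mul_div_cancel_left c hp]
  · rw [hf, Bool.toNat_true] at hc
    have hmod := Nat.mod_add_div (a.1 l) p
    have hlt := Nat.mod_lt (a.1 l) hp
    have hdvd : p ∣ a.1 l % p + 1 := (Nat.dvd_add_left (Dvd.intro (a.1 l / p) rfl)).1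
      ⟨c, by rw [← hc, add_right_comm, hmod]⟩
    have := Nat.le_of_dvd (Nat.succ_pos _) hdvd
    rw [Bool.toNat_true, mul_one]
    omega

lemma frobLabel_update (r : Var s t → ℕ) (f : Var s t → Bool) (l : Var s t) (r' : ℕ) (v : Bool) :
    frobLabel p (Function.update r l r', Function.update f l v) =
      (Function.update (frobLabel p (r, f)).1 l (p * r' + (p - 1) * v.toNat),
        Function.update f l v) := by
  refine Prod.ext (funext fun l' => ?_) rfl
  rcases eq_or_ne l' l with rfl | h
  · simp only [frobLabel, Function.update_self]
  · simp only [frobLabel, Function.update_of_ne h]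

variable [Fact p.Prime] [CharP k p]

lemma natCast_pow_char (n : ℕ) : (n : k) ^ p = n := map_natCast (frobenius k p) n

lemma signOn_pow_char (S : Finset (Var s t)) (f : Var s t → Bool) :
    signOn k S f ^ p = signOn k S f := by
  refine (map_prod (frobenius k p) _ S).trans (prod_congr rfl fun l _ => ?_)
  split_ifs
  · rw [map_neg, map_one]
  · exact map_one _

lemma natCast_choose_mul_add {c : ℕ} (hc : c < p) (n m : ℕ) :
    ((p * n + c).choose (p * m) : k) = n.choose m := by
  have h := Choose.choose_modEq_choose_mod_mul_choose_div_nat (p := p) (n := p * n + c)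
    (k := p * m)
  rw [Nat.mul_mod_right, Nat.mul_div_cancel_left m (Nat.zero_lt_of_lt hc), Nat.choose_zero_right,
    one_mul, Nat.mul_add_div (Nat.zero_lt_of_lt hc), Nat.div_eq_of_lt hc, add_zero] at h
  exact (CharP.natCast_eq_natCast k p).2 h

lemma natCast_choose_add_mul {c : ℕ} (hc : c < p) (n : ℕ) : ((c + p * n).choose c : k) = 1 := by
  have h := Choose.choose_modEq_choose_mod_mul_choose_div_nat (p := p) (n := c + p * n) (k := c)
  rw [Nat.add_mul_mod_self_left, Nat.mod_eq_of_lt hc, Nat.div_eq_of_lt hc, Nat.choose_self,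
    Nat.choose_zero_right, mul_one] at h
  exact ((CharP.natCast_eq_natCast k p).2 h).trans Nat.cast_one

lemma natCast_choose_pow_ne_zero (e : ℕ) {r : ℕ} (hr : ¬ p ∣ r) :
    ((p ^ e * r).choose (p ^ e) : k) ≠ 0 := by
  induction e with
  | zero => rwa [pow_zero, one_mul, Nat.choose_one_right, Ne, CharP.cast_eq_zero_iff k p]
  | succ e ih =>
    have h := natCast_choose_mul_add (k := k) (Fact.out : p.Prime).pos (p ^ e * r) (p ^ e)
    rwa [pow_succ', mul_assoc, ← add_zero (p * _), h]

variable (k s t p) in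
/-- The map `θ` in monomial coordinates. -/
noncomputable def theta : Omega k s t →ₛₗ[frobenius k p] Omega k s t :=
  (mono k s t).repr.symm.toLinearMap ∘ₛₗ Finsupp.lmapDomain k k (frobLabel p) ∘ₛₗ
    Finsupp.mapRange.linearMap (frobenius k p).toSemilinearMap ∘ₛₗ (mono k s t).repr.toLinearMap

lemma repr_theta (x : Omega k s t) (a : Label s t) :
    (mono k s t).repr (theta k s t p x) (frobLabel p a) = (mono k s t).repr x a ^ p := by
  simp only [theta, LinearMap.comp_apply, LinearEquiv.coe_coe, LinearEquiv.apply_symm_apply,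
    Finsupp.lmapDomain_apply, Finsupp.mapDomain_apply (frobLabel_injective
    (Fact.out : p.Prime).pos), Finsupp.mapRange.linearMap_apply, Finsupp.mapRange_apply,
    RingHom.coe_toSemilinearMap, frobenius_def]

lemma theta_mono (a : Label s t) :
    theta k s t p (mono k s t a) = mono k s t (frobLabel p a) := by
  simp only [theta, LinearMap.comp_apply, LinearEquiv.coe_coe, Module.Basis.repr_self,
    Finsupp.mapRange.linearMap_apply, Finsupp.mapRange_single, RingHom.coe_toSemilinearMap,
    map_one, Finsupp.lmapDomain_apply, Finsupp.mapDomain_single, Module.Basis.repr_symm_single_one]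

lemma theta_injective : Function.Injective (theta k s t p) := fun x y h =>
  (mono k s t).ext_elem fun a => frobenius_inj k p <| by
    rw [frobenius_def, frobenius_def, ← repr_theta, ← repr_theta, h]

lemma theta_apply_eq {A B : Module.End k (Omega k s t)}
    (h : ∀ r f, theta k s t p (A (mono k s t (r, f))) = B (theta k s t p (mono k s t (r, f))))
    (x : Omega k s t) : theta k s t p (A x) = B (theta k s t p x) :=
  LinearMap.congr_fun ((mono k s t).ext fun a => h a.1 a.2 :
    theta k s t p ∘ₛₗ A = B ∘ₛₗ theta k s t p) x

lemma theta_weightScalar {χ ψ : (Var s t → ℕ) → k} (h : ∀ w, ψ w ^ p = χ fun l => p * w l)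
    (x : Omega k s t) : theta k s t p (weightScalar ψ x) = weightScalar χ (theta k s t p x) := by
  refine theta_apply_eq (fun r f => ?_) x
  rw [weightScalar_mono, map_smulₛₗ, theta_mono, weightScalar_mono, frobenius_def, h]
  exact congrArg (χ · • _) (funext fun l => (weight_frobLabel (Fact.out : p.Prime).pos _ l).symm)

lemma theta_mem_OmegaTot_iff {n : ℕ} {x : Omega k s t} :
    theta k s t p x ∈ OmegaTot k s t (p * n) ↔ x ∈ OmegaTot k s t n := by
  have hp : p ≠ 0 := (Fact.out : p.Prime).ne_zero
  have h (w : Var s t → ℕ) : (if ∑ l, w l = n then 1 else 0 : k) ^ p =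
      if ∑ l, p * w l = p * n then 1 else 0 := by
    simp only [← mul_sum, Nat.mul_right_inj hp, ite_pow, one_pow, zero_pow hp]
  rw [mem_OmegaTot_iff_weightScalar, mem_OmegaTot_iff_weightScalar,
    ← theta_weightScalar (χ := fun w => if ∑ l, w l = p * n then 1 else 0) h,
    theta_injective.eq_iff]

lemma divProj_theta (x : Omega k s t) :
    divProj k s t p (theta k s t p x) = theta k s t p x := by
  rw [divProj, ← theta_weightScalar (ψ := fun _ => 1) fun w => ?_, weightScalar_one,
    Module.End.one_apply]
  rw [one_pow, if_pos fun l => dvd_mul_right p (w l)]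

lemma deRham_theta (x : Omega k s t) : deRham k s t (theta k s t p x) = 0 := by
  rw [← divProj_theta, ← Module.End.mul_apply, deRham_mul_divProj, LinearMap.zero_apply]

lemma exists_theta_eq_divProj [PerfectRing k p] (u : Omega k s t) :
    ∃ z, theta k s t p z = divProj k s t p u := by
  have hp : 0 < p := (Fact.out : p.Prime).pos
  have : RingHomSurjective (frobenius k p) := ⟨(PerfectRing.bijective_frobenius (R := k)).2⟩
  suffices h : ⊤ ≤ (LinearMap.range (theta k s t p)).comap (divProj k s t p) from h trivial
  rw [← (mono k s t).span_eq, Submodule.span_le]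
  rintro _ ⟨a, rfl⟩
  rw [SetLike.mem_coe, Submodule.mem_comap, divProj, weightScalar_mono]
  split_ifs with ha
  · obtain ⟨b, rfl⟩ := exists_frobLabel_eq hp ha
    exact ⟨mono k s t b, by rw [theta_mono, one_smul]⟩
  · rw [zero_smul]
    exact zero_mem _

lemma theta_expOp {l : Var s t} {φ ψ : ℕ → k} {σ τ : ℕ → ℕ}
    (h : ∀ r c, c < p → ψ (p * r + c) = φ r ^ p ∧ τ (p * r + c) = p * σ r + c)
    (x : Omega k s t) : theta k s t p (expOp l φ σ x) = expOp l ψ τ (theta k s t p x) := by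
  refine theta_apply_eq (fun r f => ?_) x
  have hlt : (p - 1) * (f l).toNat < p := by
    have := (Fact.out : p.Prime).pos
    cases f l <;> simp [this]
  have hupd := frobLabel_update (p := p) r f l (σ (r l)) (f l)
  rw [Function.update_eq_self] at hupd
  rw [expOp_mono, map_smulₛₗ, theta_mono, theta_mono, hupd, frobLabel, expOp_mono, (h _ _ hlt).1,
    (h _ _ hlt).2, frobenius_def]

lemma theta_flipOp_mul_expOp {l : Var s t} {v : Bool} {φ ψ : ℕ → k} {σ τ : ℕ → ℕ}
    (hψ : ∀ r, ψ (p * r + (p - 1) * v.toNat) = φ r ^ p)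
    (hτ : ∀ r, φ r ≠ 0 → τ (p * r + (p - 1) * v.toNat) = p * σ r + (p - 1) * (!v).toNat)
    (x : Omega k s t) : theta k s t p ((flipOp k l v * expOp l φ σ) x) =
      (flipOp k l v * expOp l ψ τ) (theta k s t p x) := by
  refine theta_apply_eq (fun r f => ?_) x
  rw [Module.End.mul_apply, Module.End.mul_apply, expOp_mono, map_smul, map_smulₛₗ, theta_mono,
    frobLabel, expOp_mono, map_smul, flipOp_mono, flipOp_mono, frobenius_def]
  by_cases hf : f l = v
  · subst hf
    rw [if_pos rfl, if_pos rfl, map_smulₛₗ, frobenius_def, exteriorSign, signOn_pow_char,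
      theta_mono, frobLabel_update, hψ]
    by_cases hφ : φ (r l) = 0
    · rw [hφ, zero_pow (Fact.out : p.Prime).ne_zero, zero_smul, zero_smul]
    · rw [hτ _ hφ]
      rfl
  · rw [if_neg hf, if_neg hf, map_zero, smul_zero, smul_zero]

lemma theta_koszul (x : Omega k s t) :
    theta k s t p (koszul k s t x) = koszul k s t (theta k s t p x) := by
  have hp : 0 < p := (Fact.out : p.Prime).pos
  rw [koszul, LinearMap.sum_apply, LinearMap.sum_apply, map_sum]
  refine sum_congr rfl fun l _ => ?_
  rcases l with i | j
  · refine theta_flipOp_mul_expOp (fun _ => (one_pow p).symm) (fun r _ => ?_) x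
    rw [Bool.toNat_true, Bool.not_true, Bool.toNat_false, mul_one, mul_zero, mul_add]
    omega
  · refine theta_flipOp_mul_expOp (fun r => ?_) (fun r hr => ?_) x
    · simp [hp.ne', ite_pow]
    · obtain ⟨q, rfl⟩ := Nat.exists_eq_succ_of_ne_zero (n := r) fun h => hr (if_pos h)
      simp only [Bool.toNat_false, Bool.not_false, Bool.toNat_true, mul_zero, mul_one, mul_add,
        Nat.succ_eq_add_one, Nat.add_sub_cancel]
      omega

lemma theta_parityOp (x : Omega k s t) :
    theta k s t p (parityOp k s t x) = parityOp k s t (theta k s t p x) := by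
  refine theta_apply_eq (fun r f => ?_) x
  rw [parityOp_mono, map_smulₛₗ, theta_mono, frobLabel, parityOp_mono, frobenius_def,
    signOn_pow_char]

lemma parityOp_pow_char : parityOp k s t ^ p = parityOp k s t :=
  end_ext fun r f => by rw [parityOp_pow_mono, parityOp_mono, signOn_pow_char]

lemma theta_parityOp_pow (N : ℕ) (x : Omega k s t) :
    theta k s t p ((parityOp k s t ^ N) x) = (parityOp k s t ^ (p * N)) (theta k s t p x) := by
  rw [pow_mul, parityOp_pow_char (p := p)]
  induction N with
  | zero => rfl
  | succ N ih => rw [pow_succ', Module.End.mul_apply, theta_parityOp, ih]; rfl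

lemma theta_mulX (i : Fin s) (x : Omega k s t) :
    theta k s t p (mulX i 1 x) = mulX i p (theta k s t p x) := by
  rw [mulX, mulX, shift, shift]
  exact theta_expOp (fun r c _ => ⟨(one_pow p).symm, by ring⟩) x

lemma theta_mulDX (i : Fin s) (x : Omega k s t) :
    theta k s t p (mulDX i 0 x) = mulDX i (p - 1) (theta k s t p x) := by
  rw [mulDX, mulDX, shift, shift]
  refine theta_flipOp_mul_expOp (fun _ => (one_pow p).symm) (fun r _ => ?_) x
  simp only [Bool.toNat_false, Bool.not_false, Bool.toNat_true]
  ring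

lemma theta_mulGamma (j : Fin t) (N : ℕ) (x : Omega k s t) :
    theta k s t p (mulGamma j N x) = mulGamma j (p * N) (theta k s t p x) := by
  rw [mulGamma, mulGamma, Module.End.mul_apply, Module.End.mul_apply, theta_parityOp_pow, dpow,
    dpow]
  refine congrArg _ (theta_expOp (fun r c hc => ⟨?_, by ring⟩) x)
  rw [← add_assoc, ← mul_add, natCast_choose_mul_add hc, natCast_pow_char]

lemma theta_mulY (j : Fin t) (x : Omega k s t) :
    theta k s t p (mulY j 0 x) = mulY j (p - 1) (theta k s t p x) := by
  have hp : 0 < p := (Fact.out : p.Prime).pos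
  have h (x : Omega k s t) :
      theta k s t p ((flipOp k (.inr j) false * dpow (.inr j) 0 : Module.End k _) x) =
        (flipOp k (.inr j) false * dpow (.inr j) (p - 1) : Module.End k _) (theta k s t p x) := by
    rw [dpow, dpow]
    refine theta_flipOp_mul_expOp (fun r => ?_) (fun r _ => ?_) x
    · rw [Bool.toNat_false, mul_zero, add_zero, natCast_choose_add_mul (Nat.sub_one_lt hp.ne'),
        Nat.choose_zero_right, Nat.cast_one, one_pow]
    · simp only [Bool.toNat_false, Bool.not_false, Bool.toNat_true]
      ring
  have hcomm (N : ℕ) : Commute (dpow (.inr j) N) (parityOp k s t) := by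
    rw [dpow]
    exact expOp_commute_parityOp ..
  rw [mulY, mulY, zero_add, pow_one, Nat.sub_add_cancel hp, parityOp_pow_char (p := p), mul_assoc,
    mul_assoc, ← (hcomm _).eq, ← (hcomm _).eq, ← mul_assoc, ← mul_assoc, Module.End.mul_apply, h,
    theta_parityOp]
  rfl

lemma polyGen_inr_mul_polyGen (j : Fin t) (M N : ℕ) :
    polyGen k (.inr j) M * polyGen k (.inr j) N =
      ((M + N).choose M : k) • polyGen k (.inr j : Var s t) (M + N) := by
  have hsign : signOn k univ (fun _ : Var s t => false) = 1 := by simp [signOn]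
  rw [polyGen_inr_mul, mulGamma, dpow, polyGen, polyGen, Module.End.mul_apply, expOp_mono, map_smul,
    parityOp_pow_mono, hsign, one_pow, one_smul, ← single_add_eq_update, ← Pi.single_add,
    Pi.single_eq_same]

theorem IsTheta.map_polyGen_inr {θ : Omega k s t → Omega k s t} (hθ : IsTheta k s t p θ)
    (j : Fin t) (N : ℕ) : θ (polyGen k (.inr j) N) = polyGen k (.inr j) (p * N) := by
  obtain ⟨-, hsmul, hmul, hone, -, -, -, hpow⟩ := hθ
  have hp : p.Prime := Fact.out
  induction N using Nat.strong_induction_on with | _ N ih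
  rcases Nat.eq_zero_or_pos N with rfl | hN
  · rw [mul_zero, polyGen, Pi.single_zero]
    rwa [one_eq_mono] at hone
  obtain ⟨e, r, hr, rfl⟩ := Nat.exists_eq_pow_mul_and_not_dvd hN.ne' p hp.ne_one
  obtain ⟨q, rfl⟩ := Nat.exists_eq_succ_of_ne_zero (n := r) fun h => hr (h ▸ dvd_zero p)
  have hN' : p ^ e * (q + 1) = p ^ e + p ^ e * q := by ring
  have hchoose := natCast_choose_pow_ne_zero (k := k) e hr
  have hpe : θ (polyGen k (.inr j) (p ^ e)) = polyGen k (.inr j) (p * p ^ e) := by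
    rw [polyGen_inr, polyGen_inr, ← pow_succ']
    exact hpow j e
  have h := congrArg θ (polyGen_inr_mul_polyGen (k := k) (s := s) j (p ^ e) (p ^ e * q))
  rw [hmul, hsmul, hpe, ih _ (by have := pow_pos hp.pos e; lia), polyGen_inr_mul_polyGen, ← mul_add,
    ← hN', natCast_pow_char, ← add_zero (p * (p ^ e * _)), natCast_choose_mul_add hp.pos] at h
  exact (smul_right_injective _ hchoose h).symm

theorem IsTheta.eq_theta {θ : Omega k s t → Omega k s t} (hθ : IsTheta k s t p θ) :
    θ = theta k s t p := by
  have hgamma := hθ.map_polyGen_inr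
  obtain ⟨hadd, hsmul, hmul, hone, hXS, hXA, hUS, -⟩ := hθ
  refine funext fun x => ?_
  induction x using Omega_induction with
  | one =>
    rw [hone, one_eq_mono, theta_mono]
    simp only [frobLabel, Pi.zero_apply, Bool.toNat_false, mul_zero, add_zero]
    rfl
  | add x y hx hy => rw [hadd, map_add, hx, hy]
  | smul c x hx => rw [hsmul, map_smulₛₗ, hx, frobenius_def]
  | mulX i x hx =>
    have h : θ (polyGen k (.inl i) 1) = polyGen k (.inl i) p := by
      rw [← XS_single, polyGen_inl]
      exact hXS i
    rw [theta_mulX, ← polyGen_inl_mul, hmul, h, hx, polyGen_inl_mul]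
  | mulDX i x hx =>
    have h : θ (extGen k (.inl i) 0) = extGen k (.inl i) (p - 1) := by
      rw [← XA_single, extGen_inl]
      exact hXA i
    rw [theta_mulDX, ← extGen_inl_mul, hmul, h, hx, extGen_inl_mul]
  | mulY j x hx =>
    have h : θ (extGen k (.inr j) 0) = extGen k (.inr j) (p - 1) := by
      rw [← US_single, extGen_inr]
      exact hUS j
    rw [theta_mulY, ← extGen_inr_mul, hmul, h, hx, extGen_inr_mul]
  | mulGamma j N x hx =>
    rw [theta_mulGamma, ← polyGen_inr_mul, hmul, hgamma, hx, polyGen_inr_mul]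

end Cartier

section KoszulKernel

variable {k s t}

variable (k s t) in
/-- The projection of `Ω(V)` onto `Ωⁱ(V)` along the other cohomological degrees. -/
noncomputable def cohProj (i : ℕ) : Omega k s t →ₗ[k] Omega k s t :=
  (OmegaCoh k s t i).subtype ∘ₗ Finsupp.restrictDom k k {m | cdeg s t m = i}

lemma cohProj_of_mem_OmegaNI {n j : ℕ} (i : ℕ) {x : Omega k s t} (hx : x ∈ OmegaNI k s t n j) :
    cohProj k s t i x = if j = i then x else 0 := by
  split_ifs with h
  · subst h
    exact (Finsupp.filter_eq_self_iff _ _).2 fun m hm => (hx (Finsupp.mem_support_iff.2 hm)).2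
  · refine (Finsupp.filter_eq_zero_iff _ _).2 fun m (hi : cdeg s t m = i) => ?_
    exact (Finsupp.mem_supported' k x).1 hx m fun hm => h (hm.2.symm.trans hi)

lemma OmegaTot_eq_iSup (n : ℕ) : OmegaTot k s t n = ⨆ i, OmegaNI k s t n i := by
  refine Eq.trans ?_ (Finsupp.supported_iUnion fun i => {m | tdeg s t m = n ∧ cdeg s t m = i})
  exact congrArg (Finsupp.supported k k) (by ext; simp)

lemma IsKoszul.cohProj_map {κ : Omega k s t →ₗ[k] Omega k s t} (hκ : IsKoszul k s t κ)
    {n j : ℕ} (i : ℕ) {x : Omega k s t} (hx : x ∈ OmegaNI k s t n j) :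
    cohProj k s t i (κ x) = if j = i + 1 then κ x else 0 := by
  rcases j with _ | j
  · rw [hκ.2.1 n x hx, map_zero, ite_self]
  · simp only [cohProj_of_mem_OmegaNI i (hκ.1 n j x hx), Nat.add_right_cancel_iff]

theorem IsKoszul.mem_Ksub_iff {κ : Omega k s t →ₗ[k] Omega k s t} (hκ : IsKoszul k s t κ)
    {n : ℕ} {x : Omega k s t} : x ∈ Ksub k s t κ n ↔ x ∈ OmegaTot k s t n ∧ κ x = 0 := by
  rw [OmegaTot_eq_iSup]
  constructor
  · have hle : Ksub k s t κ n ≤ (⨆ i, OmegaNI k s t n i) ⊓ LinearMap.ker κ :=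
      iSup_le fun i => inf_le_inf_right _ (le_iSup _ i)
    exact fun hx => hle hx
  · rintro ⟨hx, hκx⟩
    obtain ⟨f, hf, rfl⟩ := (Submodule.mem_iSup_iff_exists_finsupp _ _).1 hx
    have hker (i : ℕ) : κ (f i) = 0 := by
      rcases i with _ | i
      · exact hκ.2.1 n _ (hf 0)
      · rw [← map_zero (cohProj k s t i), ← hκx, Finsupp.sum, map_sum, map_sum,
          sum_congr rfl fun j _ => hκ.cohProj_map i (hf j), sum_ite_eq']
        split_ifs with hi
        · rfl
        · rw [Finsupp.notMem_support_iff.1 hi, map_zero]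
    exact Submodule.sum_mem _ fun i _ => Submodule.mem_iSup_of_mem i ⟨hf i, hker i⟩

end KoszulKernel

section CartierIsomorphism

variable {k s t} {n : ℕ}

lemma exists_deRham_eq_sub_divProj (p : ℕ) [CharP k p] {u : Omega k s t}
    (hu : u ∈ OmegaTot k s t n) (hκu : koszul k s t u = 0) (hdu : deRham k s t u = 0) :
    ∃ y ∈ OmegaTot k s t n, koszul k s t y = 0 ∧ deRham k s t y = u - divProj k s t p u := by
  obtain ⟨h, hhom, hanti, hcomm⟩ := exists_deRham_homotopy (k := k) (s := s) (t := t) p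
  refine ⟨h u, mem_OmegaTot_of_commute hcomm hu, ?_, ?_⟩
  · have := LinearMap.congr_fun hanti u
    rwa [LinearMap.neg_apply, Module.End.mul_apply, Module.End.mul_apply, hκu, map_zero,
      neg_zero] at this
  · have := LinearMap.congr_fun hhom u
    rwa [LinearMap.add_apply, Module.End.mul_apply, Module.End.mul_apply, hdu, map_zero,
      add_zero] at this

lemma divProj_deRham (p : ℕ) [CharP k p] (x : Omega k s t) :
    divProj k s t p (deRham k s t x) = 0 := by
  rw [← Module.End.mul_apply, divProj_mul_deRham, LinearMap.zero_apply]

lemma exists_eq_deRham_of_mem_range (p : ℕ) [CharP k p] {u : Omega k s t}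
    (hu : u ∈ OmegaTot k s t n) (hκu : koszul k s t u = 0) (hdu : deRham k s t u = 0)
    (hrange : u ∈ LinearMap.range (deRham k s t)) :
    ∃ y ∈ OmegaTot k s t n, koszul k s t y = 0 ∧ u = deRham k s t y := by
  obtain ⟨y, hy, hκy, hdy⟩ := exists_deRham_eq_sub_divProj p hu hκu hdu
  obtain ⟨w, rfl⟩ := hrange
  exact ⟨y, hy, hκy, by rw [hdy, divProj_deRham, sub_zero]⟩

variable {p : ℕ} [CharP k p]

lemma koszul_deRham_eq_zero {x : Omega k s t} (hx : x ∈ OmegaTot k s t (p * n))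
    (hκx : koszul k s t x = 0) : koszul k s t (deRham k s t x) = 0 := by
  have h := deRham_koszul_add_koszul_deRham hx
  rwa [hκx, map_zero, zero_add, Nat.cast_mul, CharP.cast_eq_zero, zero_mul, zero_smul] at h

variable [Fact p.Prime]

lemma eq_of_theta_sub_theta_eq_deRham {z w y : Omega k s t}
    (h : theta k s t p z - theta k s t p w = deRham k s t y) : z = w := by
  have hproj : divProj k s t p (theta k s t p z - theta k s t p w) =
      theta k s t p z - theta k s t p w := by rw [map_sub, divProj_theta, divProj_theta]
  rw [h, divProj_deRham] at hproj
  exact theta_injective (sub_eq_zero.1 (h.trans hproj.symm))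

theorem exists_theta_sub_eq_deRham [PerfectRing k p] {u : Omega k s t}
    (hu : u ∈ OmegaTot k s t (p * n)) (hκu : koszul k s t u = 0) (hdu : deRham k s t u = 0) :
    ∃ z ∈ OmegaTot k s t n, koszul k s t z = 0 ∧ ∃ y ∈ OmegaTot k s t (p * n),
      koszul k s t y = 0 ∧ theta k s t p z - u = deRham k s t y := by
  obtain ⟨y, hy, hκy, hdy⟩ := exists_deRham_eq_sub_divProj p hu hκu hdu
  obtain ⟨z, hz⟩ := exists_theta_eq_divProj (p := p) u
  replace hz : theta k s t p z = u - deRham k s t y := by rw [hz, hdy, sub_sub_cancel]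
  have hz_mem : theta k s t p z ∈ OmegaTot k s t (p * n) :=
    hz ▸ sub_mem hu (mem_OmegaTot_of_commute weightScalar_commute_deRham hy)
  have hκz : theta k s t p (koszul k s t z) = theta k s t p 0 := by
    rw [theta_koszul, hz, map_sub, hκu, koszul_deRham_eq_zero hy hκy, sub_zero, map_zero]
  refine ⟨z, theta_mem_OmegaTot_iff.1 hz_mem, theta_injective hκz, -y, neg_mem hy, ?_, ?_⟩
  · rw [map_neg, hκy, neg_zero]
  · rw [map_neg, hz, sub_sub_cancel_left]

end CartierIsomorphism

theorem statement9_general (k : Type) [Field k] (p : ℕ) [Fact p.Prime] [CharP k p]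
    [PerfectRing k p] (s t : ℕ) (d κ : Omega k s t →ₗ[k] Omega k s t)
    (hd : IsDeRham k s t d) (hκ : IsKoszul k s t κ)
    (θ : Omega k s t → Omega k s t) (hθ : IsTheta k s t p θ) (n : ℕ) :
    (∀ x ∈ Ksub k s t κ (p * n), d x ∈ Ksub k s t κ (p * n)) ∧
      (∀ z ∈ Ksub k s t κ n, θ z ∈ Ksub k s t κ (p * n) ∧ d (θ z) = 0) ∧
      (∀ z ∈ Ksub k s t κ n, ∀ w ∈ Ksub k s t κ n,
        (∃ y ∈ Ksub k s t κ (p * n), θ z - θ w = d y) → z = w) ∧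
      (∀ u ∈ Ksub k s t κ (p * n), d u = 0 →
        ∃ z ∈ Ksub k s t κ n, ∃ y ∈ Ksub k s t κ (p * n), θ z - u = d y) ∧
      (∀ u ∈ Ksub k s t κ (p * n), d u = 0 → u ∈ LinearMap.range d →
        ∃ y ∈ Ksub k s t κ (p * n), u = d y) := by
  simp only [hκ.mem_Ksub_iff, and_assoc]
  obtain rfl := hd.eq_deRham
  obtain rfl := hκ.eq_koszul
  obtain rfl := hθ.eq_theta
  refine ⟨?_, ?_, ?_, ?_, ?_⟩
  · rintro x ⟨hx, hκx⟩
    exact ⟨mem_OmegaTot_of_commute weightScalar_commute_deRham hx, koszul_deRham_eq_zero hx hκx⟩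
  · rintro z ⟨hz, hκz⟩
    exact ⟨theta_mem_OmegaTot_iff.2 hz, by rw [← theta_koszul, hκz, map_zero], deRham_theta z⟩
  · rintro z - w - ⟨y, -, -, h⟩
    exact eq_of_theta_sub_theta_eq_deRham h
  · rintro u ⟨hu, hκu⟩ hdu
    exact exists_theta_sub_eq_deRham hu hκu hdu
  · rintro u ⟨hu, hκu⟩ hdu hrange
    exact exists_eq_deRham_of_mem_range p hu hκu hdu hrange

/-- the super Cartier isomorphism for the Koszul kernel subcomplex. -/
theorem statement9 (k : Type) [Field k] (p : ℕ) [Fact p.Prime] [CharP k p] [ExpChar k p]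
    [PerfectRing k p] (hp2 : 2 < p) (s t : ℕ)
    (d κ : Omega k s t →ₗ[k] Omega k s t)
    (hd : IsDeRham k s t d) (hκ : IsKoszul k s t κ)
    (θ : Omega k s t → Omega k s t) (hθ : IsTheta k s t p θ) :
    ∀ n : ℕ,
      -- the de Rham differential restricts to a differential on `K_{pn}(V)`
      (∀ x ∈ Ksub k s t κ (p * n), d x ∈ Ksub k s t κ (p * n)) ∧
      -- `θ` maps `K_n(V)` into `ker d ∩ K_{pn}(V)`
      (∀ z ∈ Ksub k s t κ n, θ z ∈ Ksub k s t κ (p * n) ∧ d (θ z) = 0) ∧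
      -- the induced map `K_n(V) → H^•(K_{pn}(V), d)` is injective …
      (∀ z ∈ Ksub k s t κ n, ∀ w ∈ Ksub k s t κ n,
        (∃ y ∈ Ksub k s t κ (p * n), θ z - θ w = d y) → z = w) ∧
      -- … and surjective
      (∀ u ∈ Ksub k s t κ (p * n), d u = 0 →
        ∃ z ∈ Ksub k s t κ n, ∃ y ∈ Ksub k s t κ (p * n), θ z - u = d y) ∧
      -- the inclusion `K_{pn}(V) ⊆ Ω_{pn}(V)` induces an injection
      -- `H^•(K_{pn}(V), d) → H^•(Ω_{pn}(V), d)`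
      (∀ u ∈ Ksub k s t κ (p * n), d u = 0 → u ∈ LinearMap.range d →
        ∃ y ∈ Ksub k s t κ (p * n), u = d y) :=
  statement9_general k p s t d κ hd hκ θ hθ

end Stmt9
end
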